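/- arXiv:2102.05158 — 5 statements merged into one kernel-verified Lean document; each statement's English description precedes it below -/
import Mathlib

section
/- Let m, u be rational numbers, set n = m(m²+1)(2u−m(u²−1)), and let x, y be rational numbers with y² = x(x−n)(x−n(u²+1)) and d := y + (m+u)(1−mu)(x−n) ≠ 0. Define t = −m(2u−m(u²−1))(x−(m+u)²(m²+1))/d and w = 2m(2u−m(u²−1))·d⁻²·( x³ − 3(m²+1)(m+u)²x² + m(m²+1)²(2u−m(u²−1))(m²u⁴+2u⁴+2mu³+2m²u²+4u²+6mu+3m²)x − m²(m²+1)³(m+u)²(u²+1)(2u−m(u²−1))² + 2(m²+1)²u²(m+u)(mu−1)y ). Then w² = 4m(mu²−m−2u)(mt²−2t−m)·((mu²−m−2u)t² + (2−4mu−2u²)t − mu² + m + 2u), i.e. (t,w) satisfies the Heron condition. -/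
/-!
Write `k = 2u − m(u² − 1)`, `s = 2 − 4mu − 2u²`, `S = x − (m+u)²(m²+1)`, so that `t = −mkS/d`.
After multiplication by `d²`, the two quadratics in `t` on the right-hand side become
`m·A` and `k·B`, where `A = m²k²S² + 2kSd − d²` and `B = d² − smSd − m²k²S²`, while
`w = 2mkN/d²` with `N` linear in `y`. The claim is therefore `N² = −A·B` on the curve.
As `d` is monic and linear in `y`, `N² + A·B` is a quartic in `y` over `ℚ[m, u, x]`, and it is
divisible by `y² − x(x − n)(x − n(u² + 1))`; the quotient is read off by long division in `y`.
-/

/-- The equation `N² = −A·B` on the curve, with denominators cleared. The numerator `N` is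
`N₀ + N₁ y`. -/
lemma heron_numerator_sq (m u x y n k s S q d N₀ N₁ : ℚ)
    (hk : k = 2 * u - m * (u ^ 2 - 1))
    (hn : n = m * (m ^ 2 + 1) * k)
    (hE : y ^ 2 = x * (x - n) * (x - n * (u ^ 2 + 1)))
    (hs : s = 2 - 4 * m * u - 2 * u ^ 2)
    (hS : S = x - (m + u) ^ 2 * (m ^ 2 + 1))
    (hq : q = (m + u) * (1 - m * u))
    (hd : d = y + q * (x - n))
    (hN₀ : N₀ = x ^ 3 - 3 * (m ^ 2 + 1) * (m + u) ^ 2 * x ^ 2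
        + m * (m ^ 2 + 1) ^ 2 * k *
          (m ^ 2 * u ^ 4 + 2 * u ^ 4 + 2 * m * u ^ 3 + 2 * m ^ 2 * u ^ 2
            + 4 * u ^ 2 + 6 * m * u + 3 * m ^ 2) * x
        - m ^ 2 * (m ^ 2 + 1) ^ 3 * (m + u) ^ 2 * (u ^ 2 + 1) * k ^ 2)
    (hN₁ : N₁ = 2 * (m ^ 2 + 1) ^ 2 * u ^ 2 * (m + u) * (m * u - 1)) :
    (N₀ + N₁ * y) ^ 2 = -((m ^ 2 * k ^ 2 * S ^ 2 + 2 * k * S * d - d ^ 2) *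
      (d ^ 2 - s * m * S * d - m ^ 2 * k ^ 2 * S ^ 2)) := by
  subst hd hN₀ hN₁ hS hq hs hn hk
  -- The multiplier is the quotient of `N² + A·B` by `y² − x(x − n)(x − n(u² + 1))` in `y`;
  -- it uses `2k + sm = 4(m + u)(1 − mu)`.
  linear_combination
    (-y ^ 2
      + 4 * ((m + u) * (1 - m * u)) * ((x - (m + u) ^ 2 * (m ^ 2 + 1))
          - (x - m * (m ^ 2 + 1) * (2 * u - m * (u ^ 2 - 1)))) * y
      + (2 * (m ^ 2 + 1) ^ 2 * u ^ 2 * (m + u) * (m * u - 1)) ^ 2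
      - 6 * ((m + u) * (1 - m * u)) ^ 2 *
          (x - m * (m ^ 2 + 1) * (2 * u - m * (u ^ 2 - 1))) ^ 2
      + 12 * ((m + u) * (1 - m * u)) ^ 2 * (x - (m + u) ^ 2 * (m ^ 2 + 1)) *
          (x - m * (m ^ 2 + 1) * (2 * u - m * (u ^ 2 - 1)))
      + (2 * m ^ 2 * (2 * u - m * (u ^ 2 - 1)) ^ 2
          - 2 * (2 * u - m * (u ^ 2 - 1)) * (2 - 4 * m * u - 2 * u ^ 2) * m) *
          (x - (m + u) ^ 2 * (m ^ 2 + 1)) ^ 2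
      - x * (x - m * (m ^ 2 + 1) * (2 * u - m * (u ^ 2 - 1))) *
          (x - m * (m ^ 2 + 1) * (2 * u - m * (u ^ 2 - 1)) * (u ^ 2 + 1))) * hE


/-- a rational point `(x, y)` on the angle-parametrized Heron curve
`E_{m,u} : y² = x(x−n)(x−n(u²+1))`, with `n = m(m²+1)(2u−m(u²−1))`, away from the
line `y + (m+u)(1−mu)(x−n) = 0`, yields via the inverse change of variables a
rational solution `(t, w)` of the Heron condition. -/
theorem curve_to_heron_angle (m u x y : ℚ)
    (n : ℚ) (hn : n = m * (m ^ 2 + 1) * (2 * u - m * (u ^ 2 - 1)))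
    (hE : y ^ 2 = x * (x - n) * (x - n * (u ^ 2 + 1)))
    (d : ℚ) (hd : d = y + (m + u) * (1 - m * u) * (x - n)) (hd0 : d ≠ 0)
    (t w : ℚ)
    (htdef : t = -(m * (2 * u - m * (u ^ 2 - 1)) *
      (x - (m + u) ^ 2 * (m ^ 2 + 1))) / d)
    (hwdef : w = 2 * m * (2 * u - m * (u ^ 2 - 1)) * d⁻¹ ^ 2 *
      (x ^ 3 - 3 * (m ^ 2 + 1) * (m + u) ^ 2 * x ^ 2
        + m * (m ^ 2 + 1) ^ 2 * (2 * u - m * (u ^ 2 - 1)) *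
          (m ^ 2 * u ^ 4 + 2 * u ^ 4 + 2 * m * u ^ 3 + 2 * m ^ 2 * u ^ 2
            + 4 * u ^ 2 + 6 * m * u + 3 * m ^ 2) * x
        - m ^ 2 * (m ^ 2 + 1) ^ 3 * (m + u) ^ 2 * (u ^ 2 + 1) *
          (2 * u - m * (u ^ 2 - 1)) ^ 2
        + 2 * (m ^ 2 + 1) ^ 2 * u ^ 2 * (m + u) * (m * u - 1) * y)) :
    w ^ 2 = 4 * m * (m * u ^ 2 - m - 2 * u) * (m * t ^ 2 - 2 * t - m) *
      ((m * u ^ 2 - m - 2 * u) * t ^ 2 + (2 - 4 * m * u - 2 * u ^ 2) * t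
        - m * u ^ 2 + m + 2 * u) := by
  have key := heron_numerator_sq m u x y n _ _ _ _ d _ _ rfl hn hE rfl rfl rfl hd rfl rfl
  clear hd hE hn
  generalize hk : 2 * u - m * (u ^ 2 - 1) = k at *
  generalize hS : x - (m + u) ^ 2 * (m ^ 2 + 1) = S at *
  generalize hs : 2 - 4 * m * u - 2 * u ^ 2 = s at *
  have hk₁ : m * u ^ 2 - m - 2 * u = -k := by rw [← hk]; ring
  have hk₂ : ∀ z : ℚ, z - m * u ^ 2 + m + 2 * u = z + k := fun z => by rw [← hk]; ring
  have hA : m * t ^ 2 - 2 * t - m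
      = m * (m ^ 2 * k ^ 2 * S ^ 2 + 2 * k * S * d - d ^ 2) / d ^ 2 := by
    rw [htdef]; field_simp; ring
  have hB : -k * t ^ 2 + s * t + k
      = k * (d ^ 2 - s * m * S * d - m ^ 2 * k ^ 2 * S ^ 2) / d ^ 2 := by
    rw [htdef]; field_simp; ring
  rw [hk₂, hk₁, hA, hB, hwdef]
  linear_combination (4 * m ^ 2 * k ^ 2 * d⁻¹ ^ 4) * key
end

section
/- There exists a finite set S of nonzero polynomials in two variables m, u with rational coefficients, each of degree at least 8, such that: for all rational numbers m, u with m > 0, u > 0 and mu < 1 satisfying f(m,u) ≠ 0 for every f ∈ S, the set of rational numbers t with 0 < t < (1−mu)/(m+u) for which there exists a nonzero rational w with w² = 4m(mu²−m−2u)(mt²−2t−m)((mu²−m−2u)t² + (2−4mu−2u²)t − mu² + m + 2u) is infinite. (Equivalently, for almost all admissible m, u there are infinitely many hyperbolic Heron triangles with rational area parameter m and one rational angle parameter u.) -/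
/-!
With `p = m (1 - u²) + 2 u`, `n = 1 - u² - 2 m u`, `l = 2 (p + m n) / (m p)` and
`γ = (4 n - 2 m p) / (m p)`, the right-hand side of the Heron condition is
`(2 m p)² (t⁴ - l t³ + γ t² + l t + 1)`. The quartic is dominated by its Jacobian, the elliptic curve
`E : Y² = X (X + e) (X - e u²)` with `e = 4 (1 + m²) / (m p)`, in such a way that points of `E` with
`X → ∞` map to points with `t → 0⁺` (`quartic_of_point`, `exists_small_t`). A set of positive
rationals with elements arbitrarily close to `0` is infinite, so it suffices to find rational points
on `E` with `X` unbounded. Compactness of the real locus gives these as soon as `E(ℚ)` is infinite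
(`exists_large`).

`E` carries the rational point `S` with `X(S) = (2 u (1 + m²) / (m p))²`. That `E(ℚ)` is infinite
follows without Mazur's theorem (`infinite_point`). After rescaling, `E` is
`y² = x (x + D b²) (x - D a²)` with `D` squarefree and `a`, `b` coprime integers. If its group of
rational points were finite, all affine points would be integral, by the Nagell-Lutz argument
(`val_y_nonneg`, which uses the additivity of the formal group law modulo `π²`, `Level.add`).
For a doubled point the numbers `x`, `x + D b²` and `x - D a²` are then squares `G²`, `H²`, `F²`, and
integrality of the translates by two-torsion bounds their valuations so tightly that `G H F` is
`±` a square and the parity of the valuation of `G` is constant along the sequence `4S, 8S`. The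
identity `(x(8S) - x(4S)) (x(6S) - x(2S))² = -4 y(6S) y(2S)` now becomes `X⁴ = Y⁴ + Z²`, so that
Fermat's theorem gives `x(8S) = x(4S)` (`DoublePoint.no_chain`). The single polynomial `bad` in the
exceptional set is chosen to exclude this coincidence and the degenerate case `32 S = O`.
-/

/-! ### The Diophantine equation `x⁴ = y⁴ + z²` -/

lemma int_sq_of_coprime_mul {a b c : ℤ} (ha : 0 < a) (hco : Int.gcd a b = 1)
    (h : a * b = c ^ 2) : ∃ d, a = d ^ 2 := by
  obtain ⟨d, hd | hd⟩ := Int.sq_of_gcd_eq_one hco h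
  · exact ⟨d, hd⟩
  · nlinarith [sq_nonneg d]

/-- The auxiliary equation of the descent: parametrizing the Pythagorean triple `(r², 2s², x)`
yields a solution of `c⁴ = d⁴ + r²` with `|c| < x`. -/
lemma quartic_descent_even {x r s : ℤ} (hx : 0 < x) (hs : s ≠ 0) (hr : r % 2 = 1)
    (hco : IsCoprime r s) (h : x ^ 2 = r ^ 4 + 4 * s ^ 4) :
    ∃ c d : ℤ, d ≠ 0 ∧ |c| < x ∧ c ^ 4 = d ^ 4 + r ^ 2 := by
  have ht : PythagoreanTriple (r ^ 2) (2 * s ^ 2) x := by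
    delta PythagoreanTriple
    linear_combination -h
  have h2 : IsCoprime r 2 := by
    exact ⟨1, -(r / 2), by omega⟩
  have hco' : Int.gcd (r ^ 2) (2 * s ^ 2) = 1 :=
    Int.isCoprime_iff_gcd_eq_one.mp ((h2.pow_left).mul_right hco.pow)
  have hr2 : r ^ 2 % 2 = 1 := by rw [sq, Int.mul_emod, hr]; decide
  obtain ⟨M, N, h1, h2, h3, h4, -, h6⟩ := ht.coprime_classification' hco' hr2 hx
  have hMN : M * N = s ^ 2 := by linarith
  have hs2 : 0 < s ^ 2 := by positivity
  have hM : 0 < M := by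
    rcases h6.lt_or_eq with h | h
    · exact h
    · subst h; simp at hMN; omega
  have hN : 0 < N := by
    by_contra hh
    nlinarith
  obtain ⟨c, rfl⟩ := int_sq_of_coprime_mul hM h4 hMN
  obtain ⟨d, rfl⟩ := int_sq_of_coprime_mul hN (by rw [Int.gcd_comm]; exact h4)
    (by rw [mul_comm]; exact hMN)
  refine ⟨c, d, by rintro rfl; simp at hN, ?_, by linarith⟩
  have hc : 1 ≤ |c| := Int.one_le_abs (by rintro rfl; simp at hM)
  have : |c| ^ 2 = c ^ 2 := sq_abs c
  nlinarith

/-- Infinite descent on `|x|`. -/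
lemma quartic_descent (n : ℕ) : ∀ x y z : ℤ, x.natAbs = n → y ≠ 0 → z ≠ 0 →
    x ^ 4 = y ^ 4 + z ^ 2 → False := by
  induction n using Nat.strong_induction_on with
  | _ n ih =>
  intro x y z hn hy hz h
  wlog hx : 0 ≤ x generalizing x
  · exact this (-x) (by simpa using hn) (by linear_combination h) (by linarith)
  have hx0 : 0 < x := by
    rcases hx.lt_or_eq with h0 | h0
    · exact h0
    · subst h0
      have : 0 < z ^ 2 := by positivity
      have : 0 < y ^ 4 := by positivity
      linarith
  have key : ∀ x' y' z' : ℤ, |x'| < x → y' ≠ 0 → z' ≠ 0 → x' ^ 4 = y' ^ 4 + z' ^ 2 → False :=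
    fun x' y' z' h1 h2 h3 h4 ↦ ih x'.natAbs (by rw [Int.abs_eq_natAbs] at h1; omega) x' y' z' rfl h2 h3 h4
  have hxy : IsCoprime y x := by
    apply Int.isCoprime_iff_gcd_eq_one.mpr
    by_contra hab
    obtain ⟨p, hp, hpa, hpb⟩ := Nat.Prime.not_coprime_iff_dvd.mp hab
    obtain ⟨y1, rfl⟩ := Int.natCast_dvd.mpr hpa
    obtain ⟨x1, rfl⟩ := Int.natCast_dvd.mpr hpb
    have hpc : (p : ℤ) ^ 2 ∣ z := by
      rw [← Int.pow_dvd_pow_iff two_ne_zero]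
      exact ⟨x1 ^ 4 - y1 ^ 4, by linear_combination -h⟩
    obtain ⟨z1, rfl⟩ := hpc
    have hp0 : (0 : ℤ) < p := by exact_mod_cast hp.pos
    have hp2 : (2 : ℤ) ≤ p := by exact_mod_cast hp.two_le
    have hx1 : 0 < x1 := pos_of_mul_pos_right hx0 hp0.le
    refine key x1 y1 z1 (by rw [abs_of_pos hx1]; nlinarith) (by rintro rfl; simp at hy)
      (by rintro rfl; simp at hz) ?_
    have : (p : ℤ) ^ 4 ≠ 0 := by positivity
    apply mul_left_cancel₀ this
    linear_combination h
  have hyz : IsCoprime (y ^ 2) z := by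
    have h1 : IsCoprime (y ^ 2) (z ^ 2) := by
      have : z ^ 2 = x ^ 4 + y ^ 2 * (-y ^ 2) := by linear_combination -h
      rw [this]
      exact (hxy.pow).add_mul_left_right _
    exact h1.of_isCoprime_of_dvd_right (dvd_pow_self z two_ne_zero)
  have hx2 : 0 < x ^ 2 := by positivity
  rcases Int.emod_two_eq_zero_or_one y with hpy | hpy
  · -- `y` even, `z` odd: descend through `r⁴ + 4 s⁴ = x²`
    have ht : PythagoreanTriple z (y ^ 2) (x ^ 2) := by
      delta PythagoreanTriple
      linear_combination -h
    have hz1 : z % 2 = 1 := by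
      by_contra hh
      have h3 : IsCoprime (2 : ℤ) 2 := (hyz.of_isCoprime_of_dvd_left
        ((Int.dvd_of_emod_eq_zero hpy).trans (dvd_pow_self y two_ne_zero))).of_isCoprime_of_dvd_right
        (by omega)
      rw [Int.isCoprime_iff_gcd_eq_one] at h3
      revert h3; decide
    obtain ⟨m, n, h1, h2, h3, h4, h5, h6⟩ :=
      ht.coprime_classification' (Int.isCoprime_iff_gcd_eq_one.mp hyz.symm) hz1 hx2
    have hy2 : 0 < y ^ 2 := by positivity
    have hm : 0 < m := by
      rcases h6.lt_or_eq with h | h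
      · exact h
      · subst h; simp at h2; omega
    have hn : 0 < n := by
      by_contra hh
      nlinarith
    have h4' := Int.isCoprime_iff_gcd_eq_one.mpr h4
    obtain ⟨y', rfl⟩ := Int.dvd_of_emod_eq_zero hpy
    have fin : ∀ r s : ℤ, 0 < r ^ 2 → 0 < 2 * s ^ 2 → r ^ 2 % 2 = 1 →
        IsCoprime (r ^ 2) (2 * s ^ 2) → x ^ 2 = (r ^ 2) ^ 2 + (2 * s ^ 2) ^ 2 → False := by
      intro r s hr hs hr1 hco he
      have hr0 : r ≠ 0 := by rintro rfl; simp at hr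
      have hs0 : s ≠ 0 := by rintro rfl; simp at hs
      have hr' : r % 2 = 1 := by
        rcases Int.emod_two_eq_zero_or_one r with h | h
        · rw [sq, Int.mul_emod, h] at hr1; simp at hr1
        · exact h
      have hco' : IsCoprime r s := (hco.of_isCoprime_of_dvd_left
        (dvd_pow_self r two_ne_zero)).of_isCoprime_of_dvd_right
        (Dvd.dvd.mul_left (dvd_pow_self s two_ne_zero) 2)
      obtain ⟨c, d, hd, hc, hh⟩ := quartic_descent_even hx0 hs0 hr' hco' (by linarith)
      exact key c d r hc hd hr0 hh
    rcases h5 with ⟨hm2, hn2⟩ | ⟨hm2, hn2⟩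
    · obtain ⟨m', rfl⟩ := Int.dvd_of_emod_eq_zero hm2
      have hmn : m' * n = y' ^ 2 := by linarith
      have hco : IsCoprime m' n := h4'.of_isCoprime_of_dvd_left (dvd_mul_left _ _)
      obtain ⟨s, rfl⟩ := int_sq_of_coprime_mul (by omega) (Int.isCoprime_iff_gcd_eq_one.mp hco) hmn
      obtain ⟨r, rfl⟩ := int_sq_of_coprime_mul hn (Int.isCoprime_iff_gcd_eq_one.mp hco.symm)
        (by rw [mul_comm]; exact hmn)
      exact fin r s hn hm hn2 h4'.symm (by linarith)
    · obtain ⟨n', rfl⟩ := Int.dvd_of_emod_eq_zero hn2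
      have hmn : m * n' = y' ^ 2 := by linarith
      have hco : IsCoprime m n' := h4'.of_isCoprime_of_dvd_right (dvd_mul_left _ _)
      obtain ⟨r, rfl⟩ := int_sq_of_coprime_mul hm (Int.isCoprime_iff_gcd_eq_one.mp hco) hmn
      obtain ⟨s, rfl⟩ := int_sq_of_coprime_mul (by omega)
        (Int.isCoprime_iff_gcd_eq_one.mp hco.symm) (by rw [mul_comm]; exact hmn)
      exact fin r s hm hn hm2 h4' (by linarith)
  · -- `y` odd: the parametrization gives `(x y)² = m⁴ - n⁴` directly
    have ht : PythagoreanTriple (y ^ 2) z (x ^ 2) := by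
      delta PythagoreanTriple
      linear_combination -h
    have hy1 : y ^ 2 % 2 = 1 := by rw [sq, Int.mul_emod, hpy]; decide
    obtain ⟨m, n, h1, h2, h3, h4, h5, h6⟩ :=
      ht.coprime_classification' (Int.isCoprime_iff_gcd_eq_one.mp hyz) hy1 hx2
    have hn : n ≠ 0 := by rintro rfl; simp at h2; exact hz h2
    refine key m n (x * y) ?_ hn (mul_ne_zero hx0.ne' hy) (by
      rw [mul_pow, h1, h3]; ring)
    apply abs_lt_of_sq_lt_sq _ hx0.le
    have : 0 < n ^ 2 := by positivity
    linarith

/-- Fermat: a difference of two nonzero fourth powers is never a nonzero square. -/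
lemma quartic_diff_sq {x y z : ℤ} (hy : y ≠ 0) (h : x ^ 4 = y ^ 4 + z ^ 2) : z = 0 := by
  by_contra hz
  exact quartic_descent _ x y z rfl hy hz h

/-! ### Valuations at integral doubled points -/

/-- The ultrametric trichotomy for `x + y = z`: the two smallest of the three valuations agree. -/
lemma padicValInt_add_cases (p : ℕ) [Fact p.Prime] {x y z : ℤ} (hx : x ≠ 0) (hy : y ≠ 0)
    (hz : z ≠ 0) (h : x + y = z) :
    (padicValInt p x = padicValInt p y ∧ padicValInt p x ≤ padicValInt p z) ∨
    (padicValInt p x < padicValInt p y ∧ padicValInt p z = padicValInt p x) ∨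
    (padicValInt p y < padicValInt p x ∧ padicValInt p z = padicValInt p y) := by
  have hx' : (x : ℚ) ≠ 0 := by exact_mod_cast hx
  have hy' : (y : ℚ) ≠ 0 := by exact_mod_cast hy
  have hz' : (x : ℚ) + y ≠ 0 := by rw [← Int.cast_add, h]; exact_mod_cast hz
  have e1 := padicValRat.of_int (p := p) (z := x)
  have e2 := padicValRat.of_int (p := p) (z := y)
  have e3 := padicValRat.of_int (p := p) (z := z)
  have e4 : padicValRat p ((x : ℚ) + y) = padicValRat p z := by rw [← Int.cast_add, h]
  rcases lt_trichotomy (padicValRat p (x : ℚ)) (padicValRat p (y : ℚ)) with hl | hl | hl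
  · have := padicValRat.add_eq_of_lt hz' hx' hy' hl
    omega
  · have := padicValRat.le_padicValRat_add_of_le hz' hl.le
    omega
  · have := padicValRat.add_eq_of_lt (p := p) (by rwa [add_comm]) hy' hx' hl
    rw [add_comm] at this
    omega

lemma padicValInt_mono (p : ℕ) [Fact p.Prime] {x y : ℤ} (hy : y ≠ 0) (h : x ∣ y) :
    padicValInt p x ≤ padicValInt p y := by
  obtain ⟨k, rfl⟩ := h
  have : x ≠ 0 := left_ne_zero_of_mul hy
  have : k ≠ 0 := right_ne_zero_of_mul hy
  rw [padicValInt.mul ‹_› ‹_›]; omega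

lemma padicValInt_sq (p : ℕ) [Fact p.Prime] {x : ℤ} (hx : x ≠ 0) :
    padicValInt p (x ^ 2) = 2 * padicValInt p x := by
  rw [sq, padicValInt.mul hx hx]; omega

lemma padicValInt_squarefree (p : ℕ) [hp : Fact p.Prime] {D : ℤ} (h : Squarefree D) : padicValInt p D ≤ 1 := by
  by_contra hh
  have h2 : ((p : ℤ) ^ 2) ∣ D := by
    rw [padicValInt_dvd_iff]; right; omega
  have := h p (by rwa [sq] at h2)
  exact hp.out.one_lt.ne' (by simpa [Int.isUnit_iff] using this)

lemma padicValInt_coprime (p : ℕ) [hp : Fact p.Prime] {a b : ℤ}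
    (h : IsCoprime a b) : padicValInt p a = 0 ∨ padicValInt p b = 0 := by
  by_contra! hh
  have ha : (p : ℤ) ∣ a := by
    by_contra hc; exact hh.1 (padicValInt.eq_zero_of_not_dvd hc)
  have hb : (p : ℤ) ∣ b := by
    by_contra hc; exact hh.2 (padicValInt.eq_zero_of_not_dvd hc)
  have := h.isUnit_of_dvd' ha hb
  exact hp.out.one_lt.ne' (by simpa [Int.isUnit_iff] using this)

/-- The integers attached to a doubled point `R = 2Q` with `2R ≠ O` on
`y² = x (x + D b²) (x - D a²)` when all rational points are integral. Then `x(R) = G²`,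
`x(R) + D b² = H²` and `x(R) - D a² = F²`, so `y(R) = ± G H F`; the divisibilities say that the
translates of `R` by the three points of order two have integral `x`-coordinates. -/
structure DoublePoint (D a b G H F : ℤ) : Prop where
  G0 : G ≠ 0
  H0 : H ≠ 0
  F0 : F ≠ 0
  eH : G ^ 2 + D * b ^ 2 = H ^ 2
  eF : F ^ 2 + D * a ^ 2 = G ^ 2
  dG : G ∣ D * a * b
  dH : H ^ 2 ∣ D ^ 2 * b ^ 2 * (a ^ 2 + b ^ 2)
  dF : F ^ 2 ∣ D ^ 2 * a ^ 2 * (a ^ 2 + b ^ 2)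

/-- The constraints which `DoublePoint` imposes on the valuations `δ, α, β, κ, g, h, f` of
`D, a, b, a² + b², G, H, F` at one prime. Fields `h1`-`h4` are the ultrametric trichotomies for
`G² + D b² = H²`, `F² + D a² = G²`, `F² + D (a² + b²) = H²` and the sum `a² + b²`; the others come
from coprimality of `a` and `b`, squarefreeness of `D`, and the divisibilities. -/
structure LV (δ α β κ g h f : ℕ) : Prop where
  h1 : (2 * g = δ + 2 * β ∧ 2 * g ≤ 2 * h) ∨ (2 * g < δ + 2 * β ∧ 2 * h = 2 * g) ∨
    (δ + 2 * β < 2 * g ∧ 2 * h = δ + 2 * β)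
  h2 : (2 * f = δ + 2 * α ∧ 2 * f ≤ 2 * g) ∨ (2 * f < δ + 2 * α ∧ 2 * g = 2 * f) ∨
    (δ + 2 * α < 2 * f ∧ 2 * g = δ + 2 * α)
  h3 : (2 * f = δ + κ ∧ 2 * f ≤ 2 * h) ∨ (2 * f < δ + κ ∧ 2 * h = 2 * f) ∨
    (δ + κ < 2 * f ∧ 2 * h = δ + κ)
  h4 : (2 * α = 2 * β ∧ 2 * α ≤ κ) ∨ (2 * α < 2 * β ∧ κ = 2 * α) ∨ (2 * β < 2 * α ∧ κ = 2 * β)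
  h5 : α = 0 ∨ β = 0
  h6 : δ ≤ 1
  h7 : g ≤ δ + α + β
  h8 : 2 * h ≤ 2 * δ + 2 * β + κ
  h9 : 2 * f ≤ 2 * δ + 2 * α + κ

lemma DoublePoint.lv {D a b G H F : ℤ} (hD : D ≠ 0) (ha : a ≠ 0) (hb : b ≠ 0)
    (hsq : Squarefree D) (hab : IsCoprime a b) (h : DoublePoint D a b G H F)
    (p : ℕ) [Fact p.Prime] :
    LV (padicValInt p D) (padicValInt p a) (padicValInt p b) (padicValInt p (a ^ 2 + b ^ 2))
      (padicValInt p G) (padicValInt p H) (padicValInt p F) := by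
  obtain ⟨G0, H0, F0, eH, eF, dG, dH, dF⟩ := h
  have hC : a ^ 2 + b ^ 2 ≠ 0 := by positivity
  have e : ∀ x, x ≠ 0 → padicValInt p (D * x ^ 2) = padicValInt p D + 2 * padicValInt p x := by
    intro x hx
    rw [padicValInt.mul hD (by positivity), padicValInt_sq p hx]
  constructor
  · have := padicValInt_add_cases p (by positivity) (by positivity) (by positivity) eH
    rwa [e b hb, padicValInt_sq p G0, padicValInt_sq p H0] at this
  · have := padicValInt_add_cases p (by positivity) (by positivity) (by positivity) eF
    rwa [e a ha, padicValInt_sq p G0, padicValInt_sq p F0] at this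
  · have e3 : F ^ 2 + D * (a ^ 2 + b ^ 2) = H ^ 2 := by linear_combination eF + eH
    have := padicValInt_add_cases p (by positivity) (by positivity) (by positivity) e3
    rwa [padicValInt.mul hD hC, padicValInt_sq p F0, padicValInt_sq p H0] at this
  · have := padicValInt_add_cases p (x := a ^ 2) (y := b ^ 2) (by positivity) (by positivity)
      hC rfl
    rwa [padicValInt_sq p ha, padicValInt_sq p hb] at this
  · exact padicValInt_coprime p hab
  · exact padicValInt_squarefree p hsq
  · have := padicValInt_mono p (by positivity) dG
    rwa [padicValInt.mul (by positivity) hb, padicValInt.mul hD ha] at this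
  · have := padicValInt_mono p (by positivity) dH
    rwa [padicValInt.mul (by positivity) hC, padicValInt.mul (by positivity) (by positivity),
      padicValInt_sq p H0, padicValInt_sq p hD, padicValInt_sq p hb] at this
  · have := padicValInt_mono p (by positivity) dF
    rwa [padicValInt.mul (by positivity) hC, padicValInt.mul (by positivity) (by positivity),
      padicValInt_sq p F0, padicValInt_sq p hD, padicValInt_sq p ha] at this

/-- The complete list of possible valuation patterns; in each of them `g + h + f` is even. -/
lemma LV.cases {δ α β κ g h f : ℕ} (H : LV δ α β κ g h f) :
    (δ = 1 ∧ g = 0 ∧ h = 0 ∧ f = 0) ∨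
    (δ = 0 ∧ α = 0 ∧ β = 0 ∧ g = 0 ∧ f = h) ∨
    (δ = 0 ∧ 0 < α ∧ β = 0 ∧ h = 0 ∧ f = g ∧ g ≤ α) ∨
    (δ = 0 ∧ α = 0 ∧ 0 < β ∧ f = 0 ∧ h = g ∧ g ≤ β) := by
  obtain ⟨h1, h2, h3, h4, h5, h6, h7, h8, h9⟩ := H
  have hδ : δ = 0 ∨ δ = 1 := by clear h1 h2 h3 h4; omega
  rcases hδ with rfl | rfl
  · right
    rcases Nat.eq_zero_or_pos α with rfl | hα
    · rcases Nat.eq_zero_or_pos β with rfl | hβ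
      · left
        clear h1 h2
        omega
      · right; right
        have : κ = 0 := by clear h1 h2 h3; omega
        subst this
        have : f = 0 := by clear h1 h2 h3; omega
        subst this
        clear h2 h3 h4
        omega
    · right; left
      have : β = 0 := by clear h1 h2 h3 h4; omega
      subst this
      have : κ = 0 := by clear h1 h2 h3; omega
      subst this
      have : h = 0 := by clear h1 h2 h3; omega
      subst this
      clear h1 h3 h4
      omega
  · left
    have e1 : h = g ∧ g ≤ β := by clear h2 h3 h4; omega
    have e2 : f = g ∧ g ≤ α := by clear h1 h3 h4; omega
    clear h1 h2 h3 h4; omega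

lemma LV.even_ghf {δ α β κ g h f : ℕ} (H : LV δ α β κ g h f) : Even (g + h + f) := by
  rw [Nat.even_iff]
  rcases H.cases with c | c | c | c <;> omega

/-- For consecutive doubled points `R`, `2R`, `4R`, where `ε` is the valuation of `2`, the
duplication formulas `e` and `e'` determine the parity of the valuation of `G'` by the prime and
`D, a, b` alone. -/
lemma LV.parity {δ α β κ g h f g' h' f' g'' h'' f'' ε : ℕ} (H : LV δ α β κ g h f)
    (H' : LV δ α β κ g' h' f') (H'' : LV δ α β κ g'' h'' f'') (hε : ε ≤ 1)
    (e : (4 * g = 2 * δ + 2 * α + 2 * β ∧ 4 * g ≤ ε + g + h + f + g') ∨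
      (4 * g < 2 * δ + 2 * α + 2 * β ∧ ε + g + h + f + g' = 4 * g) ∨
      (2 * δ + 2 * α + 2 * β < 4 * g ∧ ε + g + h + f + g' = 2 * δ + 2 * α + 2 * β))
    (e' : (4 * g' = 2 * δ + 2 * α + 2 * β ∧ 4 * g' ≤ ε + g' + h' + f' + g'') ∨
      (4 * g' < 2 * δ + 2 * α + 2 * β ∧ ε + g' + h' + f' + g'' = 4 * g') ∨
      (2 * δ + 2 * α + 2 * β < 4 * g' ∧
        ε + g' + h' + f' + g'' = 2 * δ + 2 * α + 2 * β)) :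
    g' % 2 = if ε = 1 ∧ δ = 0 ∧ 0 < α + β then 1 else 0 := by
  have hε' : ε = 0 ∨ ε = 1 := by omega
  rcases H.cases with c | c | c | c <;> rcases H'.cases with c' | c' | c' | c' <;>
    rcases H''.cases with c'' | c'' | c'' | c'' <;> try omega
  all_goals
    clear H H' H''
    obtain ⟨rfl, c⟩ := c
    rcases hε' with rfl | rfl
    · rw [if_neg (by omega)]
      omega
    · first
      | rw [if_neg (by omega)]; omega
      | rw [if_pos (by omega)]; omega

/-- An integer all of whose valuations are even is a square up to sign. -/
lemma eq_sq_or_neg_sq_of_even {n : ℤ} (hn : n ≠ 0)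
    (h : ∀ p : ℕ, p.Prime → Even (padicValInt p n)) : ∃ k : ℤ, n = k ^ 2 ∨ n = -k ^ 2 := by
  obtain ⟨a, b, hab, ha⟩ := Nat.sq_mul_squarefree n.natAbs
  have hn' : n.natAbs ≠ 0 := by omega
  have hb : b ≠ 0 := by rintro rfl; simp at hab; omega
  have ha0 : a ≠ 0 := by rintro rfl; simp at hab; omega
  have ha1 : a = 1 := by
    by_contra hne
    obtain ⟨p, hp, hpa⟩ := Nat.exists_prime_and_dvd hne
    have := Fact.mk hp
    have h1 := h p hp
    rw [padicValInt, ← hab, padicValNat.mul (by positivity) ha0, padicValNat.pow] at h1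
    have h2 : 1 ≤ padicValNat p a := one_le_padicValNat_of_dvd ha0 hpa
    have h3 : padicValNat p a ≤ 1 := by
      by_contra hh
      have : p ^ 2 ∣ a := (padicValNat_dvd_iff_le ha0).mpr (by omega)
      have := ha p (by rwa [sq] at this)
      exact hp.one_lt.ne' (by simpa using this)
    rw [Nat.even_iff] at h1; omega
  subst ha1
  refine ⟨b, ?_⟩
  rcases Int.natAbs_eq n with h | h <;> rw [h, ← hab] <;> simp

/-- The ultrametric trichotomy for the duplication formula `4 y(R)² x(2R) = (x(R)² + D² a² b²)²`.
The valuations are named by equations so that `omega` can treat them as atoms. -/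
lemma DoublePoint.val_double {D a b : ℤ} (hD : D ≠ 0) (ha : a ≠ 0) (hb : b ≠ 0) {G H F G' H' F' : ℤ} (h : DoublePoint D a b G H F)
    (h' : DoublePoint D a b G' H' F')
    (e : (2 * (G * H * F) * G') ^ 2 = (G ^ 4 + D ^ 2 * a ^ 2 * b ^ 2) ^ 2)
    (p : ℕ) [Fact p.Prime] : ∀ δ α β g h f g' ε : ℕ, δ = padicValInt p D → α = padicValInt p a →
      β = padicValInt p b → g = padicValInt p G → h = padicValInt p H → f = padicValInt p F →
      g' = padicValInt p G' → ε = padicValInt p 2 →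
     (4 * g = 2 * δ + 2 * α + 2 * β ∧ 4 * g ≤ ε + g + h + f + g') ∨
      (4 * g < 2 * δ + 2 * α + 2 * β ∧ ε + g + h + f + g' = 4 * g) ∨
      (2 * δ + 2 * α + 2 * β < 4 * g ∧ ε + g + h + f + g' = 2 * δ + 2 * α + 2 * β) := by
  rintro δ α β g h f g' ε rfl rfl rfl rfl rfl rfl rfl rfl
  have hG := h.G0
  have hH := h.H0
  have hF := h.F0
  have hG' := h'.G0
  have e2 : padicValInt p (G ^ 4 + D ^ 2 * a ^ 2 * b ^ 2) =
      padicValInt p (2 * (G * H * F) * G') := by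
    have h2 : 2 * (G * H * F) * G' ≠ 0 := by positivity
    have h3 : G ^ 4 + D ^ 2 * a ^ 2 * b ^ 2 ≠ 0 := by positivity
    have := congrArg (padicValInt p) e
    rw [padicValInt_sq p h2, padicValInt_sq p h3] at this
    omega
  have := padicValInt_add_cases p (x := G ^ 4) (y := D ^ 2 * a ^ 2 * b ^ 2) (by positivity)
      (by positivity) (by positivity) rfl
  have h4 : padicValInt p (G ^ 4) = 4 * padicValInt p G := by
    rw [show G ^ 4 = (G ^ 2) ^ 2 by ring, padicValInt_sq p (by positivity), padicValInt_sq p hG]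
    omega
  rw [e2, h4, padicValInt.mul (by positivity) (by positivity),
    padicValInt.mul (by positivity) (by positivity), padicValInt_sq p hD, padicValInt_sq p ha,
    padicValInt_sq p hb, padicValInt.mul (by positivity) hG',
    padicValInt.mul (by positivity) (by positivity), padicValInt.mul (by positivity) hF,
    padicValInt.mul hG hH] at this
  simpa only [add_assoc] using this

section
variable {D a b : ℤ} (hD : D ≠ 0) (ha : a ≠ 0) (hb : b ≠ 0) (hsq : Squarefree D)
  (hab : IsCoprime a b)
include hD ha hb hsq hab

/-- The ordinate of a doubled point is a square up to sign. -/
lemma DoublePoint.y_sq {G H F : ℤ} (h : DoublePoint D a b G H F) :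
    ∃ k : ℤ, G * H * F = k ^ 2 ∨ G * H * F = -k ^ 2 := by
  have hG := h.G0
  have hH := h.H0
  have hF := h.F0
  apply eq_sq_or_neg_sq_of_even (by positivity)
  intro p hp
  have := Fact.mk hp
  rw [padicValInt.mul (by positivity) hF, padicValInt.mul hG hH]
  exact (h.lv hD ha hb hsq hab p).even_ghf

/-- For consecutive doubled points `R`, `2R`, `4R`, the parity of the valuation of `G' = √x(2R)`
does not depend on `R`. -/
lemma DoublePoint.parity {G H F G' H' F' G'' H'' F'' : ℤ} (h : DoublePoint D a b G H F)
    (h' : DoublePoint D a b G' H' F') (h'' : DoublePoint D a b G'' H'' F'')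
    (e : (2 * (G * H * F) * G') ^ 2 = (G ^ 4 + D ^ 2 * a ^ 2 * b ^ 2) ^ 2)
    (e' : (2 * (G' * H' * F') * G'') ^ 2 = (G' ^ 4 + D ^ 2 * a ^ 2 * b ^ 2) ^ 2)
    (p : ℕ) [hp : Fact p.Prime] : padicValInt p G' % 2 =
      if padicValInt p 2 = 1 ∧ padicValInt p D = 0 ∧ 0 < padicValInt p a + padicValInt p b
        then 1 else 0 := by
  have h2 : padicValInt p 2 ≤ 1 := by
    apply padicValInt_squarefree
    exact Int.prime_two.squarefree
  exact (h.lv hD ha hb hsq hab p).parity (h'.lv hD ha hb hsq hab p)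
    (h''.lv hD ha hb hsq hab p) h2
    (h.val_double hD ha hb h' e p _ _ _ _ _ _ _ _ rfl rfl rfl rfl rfl rfl rfl rfl)
    (h'.val_double hD ha hb h'' e' p _ _ _ _ _ _ _ _ rfl rfl rfl rfl rfl rfl rfl rfl)

/-- The contradiction with Fermat. The indices `1, 2, 3, 4, 6` stand for the points
`2S, 4S, 8S, 16S, 6S`. In the identity `(x(8S) - x(4S)) (x(6S) - x(2S))² = -4 y(6S) y(2S)` the
right-hand side is a square up to sign, while `x(4S) x(8S)` is a fourth power because the square
roots of the two factors have valuations of equal parity. Multiplying by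
`x(4S) (x(6S) - x(2S))²` turns the identity into `X⁴ = Y⁴ + Z²`. -/
lemma DoublePoint.no_chain {G₁ H₁ F₁ G₂ H₂ F₂ G₃ H₃ F₃ G₄ H₄ F₄ G₆ H₆ F₆ : ℤ}
    (h₁ : DoublePoint D a b G₁ H₁ F₁) (h₂ : DoublePoint D a b G₂ H₂ F₂)
    (h₃ : DoublePoint D a b G₃ H₃ F₃) (h₄ : DoublePoint D a b G₄ H₄ F₄)
    (h₆ : DoublePoint D a b G₆ H₆ F₆)
    (e₁ : (2 * (G₁ * H₁ * F₁) * G₂) ^ 2 = (G₁ ^ 4 + D ^ 2 * a ^ 2 * b ^ 2) ^ 2)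
    (e₂ : (2 * (G₂ * H₂ * F₂) * G₃) ^ 2 = (G₂ ^ 4 + D ^ 2 * a ^ 2 * b ^ 2) ^ 2)
    (e₃ : (2 * (G₃ * H₃ * F₃) * G₄) ^ 2 = (G₃ ^ 4 + D ^ 2 * a ^ 2 * b ^ 2) ^ 2)
    (hne : G₆ ^ 2 ≠ G₁ ^ 2)
    (hd : ((G₃ ^ 2 - G₂ ^ 2) * (G₆ ^ 2 - G₁ ^ 2) ^ 2) ^ 2 =
      (4 * (G₁ * H₁ * F₁) * (G₆ * H₆ * F₆)) ^ 2) : G₃ ^ 2 = G₂ ^ 2 := by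
  have hG₂ := h₂.G0
  have hG₃ := h₃.G0
  obtain ⟨k₁, hk₁⟩ := h₁.y_sq hD ha hb hsq hab
  obtain ⟨k₆, hk₆⟩ := h₆.y_sq hD ha hb hsq hab
  obtain ⟨k, hk⟩ : ∃ k : ℤ, G₂ * G₃ = k ^ 2 ∨ G₂ * G₃ = -k ^ 2 := by
    apply eq_sq_or_neg_sq_of_even (by positivity)
    intro p hp
    have := Fact.mk hp
    rw [padicValInt.mul hG₂ hG₃, Nat.even_iff]
    have p2 := h₁.parity hD ha hb hsq hab h₂ h₃ e₁ e₂ p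
    have p3 := h₂.parity hD ha hb hsq hab h₃ h₄ e₂ e₃ p
    omega
  set d := G₆ ^ 2 - G₁ ^ 2 with hd'
  have hd0 : d ≠ 0 := sub_ne_zero.mpr hne
  have hk4 : (G₂ * G₃) ^ 2 = k ^ 4 := by rcases hk with h | h <;> rw [h] <;> ring
  have hk0 : k ≠ 0 := by
    rintro rfl
    have : (G₂ * G₃) ^ 2 ≠ 0 := by positivity
    rw [hk4] at this; simp at this
  have hh : ((G₃ ^ 2 - G₂ ^ 2) * d ^ 2) ^ 2 = ((2 * k₁ * k₆) ^ 2) ^ 2 := by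
    rw [hd]; rcases hk₁ with h | h <;> rcases hk₆ with h' | h' <;> rw [h, h'] <;> ring
  -- the two signs exchange the roles of `k d` and `G₂ d` in Fermat's equation
  have hz : 2 * k₁ * k₆ * (G₂ * d) = 0 := by
    rcases sq_eq_sq_iff_eq_or_eq_neg.mp hh with h | h
    · refine quartic_diff_sq (x := k * d) (y := G₂ * d) (by positivity) ?_
      linear_combination (-d ^ 4) * hk4 + G₂ ^ 2 * d ^ 2 * h
    · refine quartic_diff_sq (x := G₂ * d) (y := k * d) (by positivity) ?_
      linear_combination d ^ 4 * hk4 - G₂ ^ 2 * d ^ 2 * h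
  have hz' : 2 * k₁ * k₆ = 0 := by
    rcases mul_eq_zero.mp hz with h | h
    · exact h
    · exact absurd h (by positivity)
  rw [hz'] at hh
  have : (G₃ ^ 2 - G₂ ^ 2) * d ^ 2 = 0 := by simpa using hh
  rcases mul_eq_zero.mp this with h | h
  · linarith
  · exact absurd h (by positivity)
end

/-! ### Coordinates on curves `y² = x³ + a₂ x² + a₄ x` -/

section
open WeierstrassCurve

/-- The curve `y² = x³ + a₂ x² + a₄ x` over `ℚ`, with `(0, 0)` as a point of order two. -/
abbrev crv (a₂ a₄ : ℚ) : WeierstrassCurve.Affine ℚ := ⟨0, a₂, 0, a₄, 0⟩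

/-- `P` is the affine point with coordinates `(x, y)`. A relation, rather than a coordinate
function, avoids an arbitrary value at the point at infinity. -/
def At {a₂ a₄ : ℚ} (P : (crv a₂ a₄).Point) (x y : ℚ) : Prop := ∃ h, P = Affine.Point.some x y h

variable {a₂ a₄ : ℚ} {P Q : (crv a₂ a₄).Point} {x y x₁ y₁ x₂ y₂ : ℚ}

lemma crv_equation : (crv a₂ a₄).Equation x y ↔ y ^ 2 = x ^ 3 + a₂ * x ^ 2 + a₄ * x := by
  rw [Affine.equation_iff]; simp

lemma eq_zero_or_at (P : (crv a₂ a₄).Point) : P = 0 ∨ ∃ x y, At P x y := by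
  rcases P with _ | ⟨x, y, h⟩
  · left; rfl
  · right; exact ⟨x, y, h, rfl⟩

/-- Nonsingularity of the point follows from the nonvanishing of the discriminant
`16 a₄² (a₂² - 4 a₄)`. -/
lemma exists_at (h4 : a₄ ≠ 0) (hd : a₂ ^ 2 - 4 * a₄ ≠ 0)
    (h : y ^ 2 = x ^ 3 + a₂ * x ^ 2 + a₄ * x) : ∃ P : (crv a₂ a₄).Point, At P x y := by
  refine ⟨.some x y ?_, _, rfl⟩
  rw [Affine.nonsingular_iff, crv_equation]
  refine ⟨h, ?_⟩
  by_contra! hh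
  simp at hh
  obtain ⟨h1, h2⟩ := hh
  have hy : y = 0 := by linarith
  subst hy
  have hx : x * (x ^ 2 + a₂ * x + a₄) = 0 := by linear_combination -h
  rcases mul_eq_zero.mp hx with rfl | hx
  · apply h4; linear_combination -h1
  · have h5 : x * (2 * x + a₂) = 0 := by linear_combination -h1 - hx
    apply hd
    rcases mul_eq_zero.mp h5 with rfl | h6
    · simp at hx; contradiction
    · linear_combination (2 * x + a₂) * h6 - 4 * hx

lemma At.eqn (h : At P x y) : y ^ 2 = x ^ 3 + a₂ * x ^ 2 + a₄ * x := by
  obtain ⟨h, -⟩ := h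
  exact crv_equation.mp h.1

lemma At.ne_zero (h : At P x y) : P ≠ 0 := by
  obtain ⟨h, rfl⟩ := h
  exact Affine.Point.some_ne_zero _

lemma At.inj (h : At P x₁ y₁) (h' : At P x₂ y₂) : x₁ = x₂ ∧ y₁ = y₂ := by
  obtain ⟨h, rfl⟩ := h
  obtain ⟨h', e⟩ := h'
  simpa using e

lemma At.ext (h : At P x y) (h' : At Q x y) : P = Q := by
  obtain ⟨h, rfl⟩ := h
  obtain ⟨h', rfl⟩ := h'
  rfl

lemma At.congr (h : At P x₁ y₁) (hx : x₁ = x₂) (hy : y₁ = y₂) : At P x₂ y₂ := by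
  subst hx hy; exact h

lemma At.neg (h : At P x y) : At (-P) x (-y) := by
  obtain ⟨h, rfl⟩ := h
  rw [Affine.Point.neg_some]
  exact ⟨by simpa using (Affine.nonsingular_neg ..).mpr h, by simp⟩

lemma At.eq_or_eq_neg (h : At P x y₁) (h' : At Q x y₂) : P = Q ∨ P = -Q := by
  have : (y₁ - y₂) * (y₁ + y₂) = 0 := by linear_combination h.eqn - h'.eqn
  rcases mul_eq_zero.mp this with e | e
  · left; exact h.ext (h'.congr rfl (by linarith))
  · right; exact h.ext (h'.neg.congr rfl (by linarith))

/-- Chord addition; the slope `L` enters through its defining equation instead of a quotient. -/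
lemma At.add (h : At P x₁ y₁) (h' : At Q x₂ y₂) (hx : x₁ ≠ x₂) (L : ℚ)
    (hL : L * (x₁ - x₂) = y₁ - y₂) :
    At (P + Q) (L ^ 2 - a₂ - x₁ - x₂) (-(L * (L ^ 2 - a₂ - x₁ - x₂ - x₁) + y₁)) := by
  obtain ⟨h, rfl⟩ := h
  obtain ⟨h', rfl⟩ := h'
  have hL' : (crv a₂ a₄).slope x₁ x₂ y₁ y₂ = L := by
    rw [Affine.slope_of_X_ne hx, div_eq_iff (sub_ne_zero.mpr hx), hL]
  rw [Affine.Point.add_of_X_ne hx]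
  refine At.congr (x₁ := (crv a₂ a₄).addX x₁ x₂ L) (y₁ := (crv a₂ a₄).addY x₁ x₂ y₁ L) ?_ ?_ ?_
  · simp only [hL']
    exact ⟨_, rfl⟩
  · simp [Affine.addX]
  · simp [Affine.addY, Affine.negAddY, Affine.negY, Affine.addX]

/-- Tangent doubling; the slope `L` enters through its defining equation. -/
lemma At.double (h : At P x y) (hy : y ≠ 0) (L : ℚ)
    (hL : L * (2 * y) = 3 * x ^ 2 + 2 * a₂ * x + a₄) :
    At (P + P) (L ^ 2 - a₂ - x - x) (-(L * (L ^ 2 - a₂ - x - x - x) + y)) := by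
  obtain ⟨h, rfl⟩ := h
  have hy' : y ≠ (crv a₂ a₄).negY x y := by
    simp [Affine.negY]; intro h; apply hy; linarith
  have hL' : (crv a₂ a₄).slope x x y y = L := by
    rw [Affine.slope_of_Y_ne rfl hy', div_eq_iff (sub_ne_zero.mpr hy')]
    simp [Affine.negY]; linear_combination -hL
  rw [Affine.Point.add_self_of_Y_ne hy']
  refine At.congr (x₁ := (crv a₂ a₄).addX x x L) (y₁ := (crv a₂ a₄).addY x x y L) ?_ ?_ ?_
  · simp only [hL']
    exact ⟨_, rfl⟩
  · simp [Affine.addX]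
  · simp [Affine.addY, Affine.negAddY, Affine.negY, Affine.addX]

lemma At.double_eq_zero (h : At P x 0) : P + P = 0 := by
  have : P = -P := h.ext (h.neg.congr rfl (by simp))
  rw [add_eq_zero_iff_eq_neg]; exact this

/-! ### The group law near infinity -/

/-- The line `y = L x + N` through `P` and `Q` (the tangent if `P = Q`) meets the curve in points
with abscissae `x₁, x₂, X`, which are recorded through their elementary symmetric functions. -/
lemma At.add_line (h : At P x₁ y₁) (h' : At Q x₂ y₂) (hPQ : P + Q ≠ 0) :
    ∃ L N X, y₁ = L * x₁ + N ∧ y₂ = L * x₂ + N ∧ x₁ + x₂ + X = L ^ 2 - a₂ ∧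
      x₁ * x₂ + x₁ * X + x₂ * X = a₄ - 2 * L * N ∧ x₁ * x₂ * X = N ^ 2 ∧
      At (P + Q) X (-(L * X + N)) ∧
      (x₁ ≠ x₂ ∨ x₁ = x₂ ∧ y₁ = y₂ ∧ y₁ ≠ 0 ∧
        L * (2 * y₁) = 3 * x₁ ^ 2 + 2 * a₂ * x₁ + a₄) := by
  have e₁ := h.eqn
  have e₂ := h'.eqn
  by_cases hx : x₁ = x₂
  · subst hx
    have hPQ' : P = Q := by
      rcases h.eq_or_eq_neg h' with e | e
      · exact e
      · exact absurd (by rw [e]; simp) hPQ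
    subst hPQ'
    obtain ⟨-, rfl⟩ := h.inj h'
    have hy : y₁ ≠ 0 := by
      rintro rfl; exact hPQ h.double_eq_zero
    obtain ⟨L, hL⟩ : ∃ L, L * (2 * y₁) = 3 * x₁ ^ 2 + 2 * a₂ * x₁ + a₄ :=
      ⟨(3 * x₁ ^ 2 + 2 * a₂ * x₁ + a₄) / (2 * y₁), by field_simp⟩
    refine ⟨L, y₁ - L * x₁, L ^ 2 - a₂ - x₁ - x₁, by ring, by ring, by ring, ?_, ?_,
      (h.double hy L hL).congr rfl (by ring), Or.inr ⟨rfl, rfl, hy, hL⟩⟩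
    · linear_combination hL
    · linear_combination x₁ * hL - e₁
  · obtain ⟨L, hL⟩ : ∃ L, L * (x₁ - x₂) = y₁ - y₂ :=
      ⟨(y₁ - y₂) / (x₁ - x₂), by have := sub_ne_zero.mpr hx; field_simp⟩
    have hq : x₁ * x₂ + (x₁ + x₂) * (L ^ 2 - a₂ - x₁ - x₂) = a₄ - 2 * L * (y₁ - L * x₁) := by
      apply mul_left_cancel₀ (sub_ne_zero.mpr hx)
      linear_combination e₁ - e₂ + (2 * y₁ - L * (x₁ - x₂) - (y₁ - y₂)) * hL
    refine ⟨L, y₁ - L * x₁, L ^ 2 - a₂ - x₁ - x₂, by ring, by linear_combination hL, by ring,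
      ?_, ?_, (h.add h' hx L hL).congr rfl (by ring), Or.inl hx⟩
    · linear_combination hq
    · linear_combination x₁ * hq - e₁

/-- In the coordinates `t = x / y`, `w = 1 / y` at infinity the line `y = L x + N` becomes
`w = m t + c` with `m = -L / N`, `c = 1 / N`. The third intersection point is then finite in these
coordinates, and its parameter `t` is given by the sum of the roots of the cubic in `t`. -/
lemma sum_sections {L N X m c d : ℚ} (h₁ : y₁ = L * x₁ + N) (h₂ : y₂ = L * x₂ + N)
    (i₁ : x₁ + x₂ + X = L ^ 2 - a₂) (i₂ : x₁ * x₂ + x₁ * X + x₂ * X = a₄ - 2 * L * N)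
    (i₃ : x₁ * x₂ * X = N ^ 2) (hm : L * c = -m) (hc : N * c = 1)
    (hd : (1 + a₂ * m + a₄ * m ^ 2) * d = 1) {t₁ t₂ w₁ w₂ : ℚ}
    (hw₁ : w₁ * y₁ = 1) (hw₂ : w₂ * y₂ = 1) (ht₁ : w₁ * x₁ = t₁) (ht₂ : w₂ * x₂ = t₂) :
    ∃ t w, t = -t₁ - t₂ - (a₂ * c + 2 * a₄ * m * c) * d ∧ w = m * t + c ∧
      w * (L * X + N) = 1 ∧ w * X = t := by
  have hN : N ≠ 0 := left_ne_zero_of_mul_eq_one hc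
  have hprod : y₁ * y₂ * (L * X + N) = N * (N ^ 2 - a₂ * L * N + a₄ * L ^ 2) := by
    rw [h₁, h₂]; linear_combination L ^ 3 * i₃ + L ^ 2 * N * i₂ + L * N ^ 2 * i₁
  have hS : x₁ * y₂ * (L * X + N) + y₁ * x₂ * (L * X + N) + y₁ * y₂ * X =
      N * (2 * L * a₄ - a₂ * N) := by
    rw [h₁, h₂]; linear_combination 3 * L ^ 2 * i₃ + 2 * L * N * i₂ + N ^ 2 * i₁
  have hM : N ^ 2 - a₂ * L * N + a₄ * L ^ 2 = N ^ 2 * (1 + a₂ * m + a₄ * m ^ 2) := by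
    have : m = -(L * c) := by linarith
    rw [this]
    linear_combination (a₂ * L * N - a₄ * L ^ 2 * (N * c + 1)) * hc
  have hM0 : N ^ 2 - a₂ * L * N + a₄ * L ^ 2 ≠ 0 := by
    rw [hM]; exact mul_ne_zero (pow_ne_zero _ hN) (left_ne_zero_of_mul_eq_one hd)
  have hY : L * X + N ≠ 0 := by
    intro h; rw [h, mul_zero] at hprod
    exact mul_ne_zero hN hM0 hprod.symm
  refine ⟨X / (L * X + N), 1 / (L * X + N), ?_, ?_, ?_, ?_⟩
  · have hK : (a₂ * c + 2 * a₄ * m * c) * d * (N ^ 2 - a₂ * L * N + a₄ * L ^ 2) =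
        a₂ * N - 2 * a₄ * L := by
      rw [hM]
      have : m = -(L * c) := by linarith
      calc _ = (a₂ * c + 2 * a₄ * m * c) * N ^ 2 * ((1 + a₂ * m + a₄ * m ^ 2) * d) := by ring
        _ = _ := by
          rw [hd, this]
          linear_combination (a₂ * N - 2 * a₄ * L * (N * c + 1)) * hc
    have hy₁ : y₁ ≠ 0 := right_ne_zero_of_mul_eq_one hw₁
    have hy₂ : y₂ ≠ 0 := right_ne_zero_of_mul_eq_one hw₂
    have ht₁' : t₁ = x₁ / y₁ := by rw [eq_div_iff hy₁]; linear_combination x₁ * hw₁ - y₁ * ht₁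
    have ht₂' : t₂ = x₂ / y₂ := by rw [eq_div_iff hy₂]; linear_combination x₂ * hw₂ - y₂ * ht₂
    have hsum : x₁ / y₁ + x₂ / y₂ + X / (L * X + N) =
        (2 * L * a₄ - a₂ * N) / (N ^ 2 - a₂ * L * N + a₄ * L ^ 2) := by
      rw [← mul_div_mul_left (2 * L * a₄ - a₂ * N) _ hN, ← hprod, ← hS,
        div_add_div _ _ hy₁ hy₂, div_add_div _ _ (mul_ne_zero hy₁ hy₂) hY]
      congr 1
      ring
    have hK' : (a₂ * c + 2 * a₄ * m * c) * d =
        (a₂ * N - 2 * a₄ * L) / (N ^ 2 - a₂ * L * N + a₄ * L ^ 2) := by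
      rw [eq_div_iff hM0, hK]
    rw [hK', ht₁', ht₂']
    linear_combination hsum
  · field_simp
    linear_combination -X * hm - hc
  · field_simp
  · field_simp

/-- `R` lies in the neighbourhood of infinity of radius `π`, with parameter `s`: it is `O`, or in
the coordinates `t = x / y`, `w = 1 / y` at infinity one has `t = π s` and `w = π³ z` with
`s, z ∈ O`. -/
def Level (O : Subring ℚ) (π : ℚ) (R : (crv a₂ a₄).Point) (s : ℚ) : Prop :=
  s ∈ O ∧ ((R = 0 ∧ s = 0) ∨
    ∃ x y z, At R x y ∧ z ∈ O ∧ π ^ 3 * z * y = 1 ∧ π ^ 3 * z * x = π * s)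

/-- The neighbourhood of infinity is closed under addition, and the parameter is additive modulo
`π²`. The hypothesis `hU` says that `1 + π O` consists of units of `O`. -/
lemma Level.add {O : Subring ℚ} {π : ℚ} (hπ0 : π ≠ 0) (hπ : π ∈ O)
    (hU : ∀ z ∈ O, ∃ d ∈ O, (1 + π * z) * d = 1) (ha₂ : a₂ ∈ O) (ha₄ : a₄ ∈ O)
    {s₁ s₂ : ℚ} (hP : Level O π P s₁) (hQ : Level O π Q s₂) :
    ∃ s, Level O π (P + Q) s ∧ ∃ k ∈ O, s = s₁ + s₂ + π ^ 2 * k := by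
  obtain ⟨hs₁, ⟨rfl, rfl⟩ | ⟨x₁, y₁, z₁, h₁, hz₁, hy₁, hx₁⟩⟩ := hP
  · exact ⟨s₂, by simpa using hQ, 0, O.zero_mem, by ring⟩
  obtain ⟨hs₂, ⟨rfl, rfl⟩ | ⟨x₂, y₂, z₂, h₂, hz₂, hy₂, hx₂⟩⟩ := hQ
  · exact ⟨s₁, by simpa using ⟨hs₁, Or.inr ⟨x₁, y₁, z₁, h₁, hz₁, hy₁, hx₁⟩⟩, 0, O.zero_mem, by ring⟩
  have two_mem : (2 : ℚ) ∈ O := by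
    rw [← one_add_one_eq_two]
    exact O.add_mem O.one_mem O.one_mem
  have hw₁ : π ^ 3 * z₁ = (π * s₁) ^ 3 + a₂ * (π * s₁) ^ 2 * (π ^ 3 * z₁) +
      a₄ * (π * s₁) * (π ^ 3 * z₁) ^ 2 := by
    rw [← hx₁]
    linear_combination (-(π ^ 3 * z₁)) * (π ^ 3 * z₁ * y₁ + 1) * hy₁ +
      (π ^ 3 * z₁) ^ 3 * h₁.eqn
  have hw₂ : π ^ 3 * z₂ = (π * s₂) ^ 3 + a₂ * (π * s₂) ^ 2 * (π ^ 3 * z₂) +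
      a₄ * (π * s₂) * (π ^ 3 * z₂) ^ 2 := by
    rw [← hx₂]
    linear_combination (-(π ^ 3 * z₂)) * (π ^ 3 * z₂ * y₂ + 1) * hy₂ +
      (π ^ 3 * z₂) ^ 3 * h₂.eqn
  by_cases hPQ : P + Q = 0
  · have hQ : Q = -P := by rwa [add_comm, add_eq_zero_iff_eq_neg] at hPQ
    subst hQ
    obtain ⟨rfl, rfl⟩ := h₂.inj h₁.neg
    refine ⟨0, by rw [hPQ]; exact ⟨O.zero_mem, Or.inl ⟨rfl, rfl⟩⟩, 0, O.zero_mem, ?_⟩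
    have hy : y₁ ≠ 0 := right_ne_zero_of_mul_eq_one hy₁
    have hz : π ^ 3 * z₂ = -(π ^ 3 * z₁) := by
      apply mul_right_cancel₀ hy
      linear_combination hy₁ - hy₂
    apply mul_left_cancel₀ hπ0
    linear_combination hx₁ + hx₂ - x₂ * hz
  obtain ⟨L, N, X, l₁, l₂, i₁, i₂, i₃, hR, hcase⟩ := h₁.add_line h₂ hPQ
  -- In the `(t, w)`-plane the line is `w = π² m t + π³ c`; the divided difference `m` of the
  -- curve equation is integral because the factor inverted by `v` lies in `1 + π O`.
  have hv := hU (-(a₂ * π * s₂ ^ 2 + a₄ * π ^ 3 * s₂ * (z₁ + z₂))) (by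
    repeat' first | assumption | apply O.neg_mem | apply O.add_mem | apply O.mul_mem | apply O.pow_mem)
  obtain ⟨v, hv, hv1⟩ := hv
  obtain ⟨m, hmO, hm⟩ : ∃ m ∈ O, m = (s₁ ^ 2 + s₁ * s₂ + s₂ ^ 2 + a₂ * π ^ 2 * z₁ * (s₁ + s₂) +
      a₄ * π ^ 4 * z₁ ^ 2) * v := ⟨_, by
    repeat' first | assumption | apply O.neg_mem | apply O.add_mem | apply O.mul_mem | apply O.pow_mem, rfl⟩
  obtain ⟨c, hcO, hc⟩ : ∃ c ∈ O, c = z₁ - m * s₁ :=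
    ⟨_, O.sub_mem hz₁ (O.mul_mem hmO hs₁), rfl⟩
  have hv2 : (1 - a₂ * (π * s₂) ^ 2 - a₄ * (π * s₂) * (π ^ 3 * z₁ + π ^ 3 * z₂)) * v = 1 := by
    linear_combination hv1
  have hmt : π ^ 2 * m * (π * s₁ - π * s₂) = π ^ 3 * z₁ - π ^ 3 * z₂ := by
    rw [hm]
    linear_combination (v * hw₂ - v * hw₁) + (π ^ 3 * z₁ - π ^ 3 * z₂) * hv2
  have hy₁0 : y₁ ≠ 0 := right_ne_zero_of_mul_eq_one hy₁
  have hy₂0 : y₂ ≠ 0 := right_ne_zero_of_mul_eq_one hy₂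
  have hz₁0 : π ^ 3 * z₁ ≠ 0 := left_ne_zero_of_mul_eq_one hy₁
  have hz₂0 : π ^ 3 * z₂ ≠ 0 := left_ne_zero_of_mul_eq_one hy₂
  have hLc : L * (π ^ 3 * c) = -(π ^ 2 * m) := by
    rcases hcase with hx | ⟨rfl, rfl, hy, hL⟩
    · have ht : π * s₁ - π * s₂ ≠ 0 := by
        intro ht
        rw [ht, mul_zero] at hmt
        apply hx
        apply mul_left_cancel₀ hz₁0
        linear_combination hx₁ - hx₂ + ht + x₂ * hmt
      apply mul_right_cancel₀ ht
      have hLL : L * (x₁ - x₂) = y₁ - y₂ := by linear_combination l₂ - l₁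
      rw [hc]
      linear_combination (1 - L * (π * s₁)) * hmt - L * (π ^ 3 * z₂) * hx₁ +
        L * (π ^ 3 * z₁) * hx₂ + (π ^ 3 * z₁) * (π ^ 3 * z₂) * hLL + (π ^ 3 * z₂) * hy₁ -
        (π ^ 3 * z₁) * hy₂
    · have hz : z₂ = z₁ := by
        apply mul_left_cancel₀ (pow_ne_zero 3 hπ0)
        apply mul_right_cancel₀ hy
        rw [hy₁, hy₂]
      have hs : s₂ = s₁ := by
        apply mul_left_cancel₀ hπ0
        rw [← hx₁, ← hx₂, hz]
      subst hz hs
      have hv0 : 1 - a₂ * (π * s₂) ^ 2 - a₄ * (π * s₂) * (π ^ 3 * z₂ + π ^ 3 * z₂) ≠ 0 :=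
        left_ne_zero_of_mul_eq_one hv2
      have hK : π ^ 2 * m * (1 - a₂ * (π * s₂) ^ 2 - a₄ * (π * s₂) * (π ^ 3 * z₂ + π ^ 3 * z₂)) =
          3 * (π * s₂) ^ 2 + 2 * a₂ * (π * s₂) * (π ^ 3 * z₂) + a₄ * (π ^ 3 * z₂) ^ 2 := by
        rw [hm]
        linear_combination (3 * (π * s₂) ^ 2 + 2 * a₂ * (π * s₂) * (π ^ 3 * z₂) +
          a₄ * (π ^ 3 * z₂) ^ 2) * hv2
      have hLw : 2 * L * (π ^ 3 * z₂) =
          3 * (π * s₂) ^ 2 + 2 * a₂ * (π * s₂) * (π ^ 3 * z₂) + a₄ * (π ^ 3 * z₂) ^ 2 := by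
        rw [← hx₁]
        linear_combination (π ^ 3 * z₂) ^ 2 * hL - 2 * L * (π ^ 3 * z₂) * hy₁
      apply mul_right_cancel₀ hv0
      rw [hc]
      linear_combination (1 - L * (π * s₂)) * hK - hLw + 3 * L * hw₁
  have hNc : N * (π ^ 3 * c) = 1 := by
    apply mul_right_cancel₀ hz₁0
    have hN : N = y₁ - L * x₁ := by linear_combination -l₁
    rw [hN]
    linear_combination (π ^ 3 * c) * hy₁ - (L * (π ^ 3 * c)) * hx₁ - (π * s₁) * hLc + π ^ 3 * hc
  obtain ⟨d, hdO, hd⟩ := hU (a₂ * π * m + a₄ * π ^ 3 * m ^ 2) (by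
    repeat' first | assumption | apply O.neg_mem | apply O.add_mem | apply O.mul_mem | apply O.pow_mem)
  have hd' : (1 + a₂ * (π ^ 2 * m) + a₄ * (π ^ 2 * m) ^ 2) * d = 1 := by linear_combination hd
  obtain ⟨t, w, ht, hw, hwy, hwx⟩ := sum_sections l₁ l₂ i₁ i₂ i₃ hLc hNc hd' hy₁ hy₂ hx₁ hx₂
  obtain ⟨k, hk, hkk⟩ : ∃ k ∈ O, k = (a₂ * c + 2 * a₄ * π ^ 2 * m * c) * d := ⟨_, by
    repeat' first | assumption | apply O.neg_mem | apply O.add_mem | apply O.mul_mem | apply O.pow_mem, rfl⟩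
  have hsO : s₁ + s₂ + π ^ 2 * k ∈ O := by
    repeat' first | assumption | apply O.neg_mem | apply O.add_mem | apply O.mul_mem | apply O.pow_mem
  have ht' : t = -(π * (s₁ + s₂ + π ^ 2 * k)) := by rw [ht, hkk]; ring
  refine ⟨s₁ + s₂ + π ^ 2 * k, ⟨hsO, Or.inr ⟨X, _, m * (s₁ + s₂ + π ^ 2 * k) - c, hR,
    O.sub_mem (O.mul_mem hmO hsO) hcO, ?_, ?_⟩⟩, k, hk, rfl⟩
  · rw [← hwy, hw, ht']; ring
  · rw [show π * (s₁ + s₂ + π ^ 2 * k) = -t by rw [ht']; ring, ← hwx, hw, ht']; ring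

/-! ### Integrality of torsion -/

/-- The rationals that are integral at `p`. The junk value `padicValRat p 0 = 0` makes `0` a
member. -/
def zloc (p : ℕ) [Fact p.Prime] : Subring ℚ where
  carrier := {q | 0 ≤ padicValRat p q}
  mul_mem' := by
    intro x y hx hy
    simp only [Set.mem_ofPred_eq] at *
    by_cases h : x = 0 ∨ y = 0
    · rcases h with rfl | rfl <;> simp
    · push Not at h
      rw [padicValRat.mul h.1 h.2]; omega
  one_mem' := by simp
  add_mem' := by
    intro x y hx hy
    simp only [Set.mem_ofPred_eq] at *
    by_cases h : x + y = 0
    · rw [h]; simp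
    · have := padicValRat.min_le_padicValRat_add (p := p) h
      omega
  zero_mem' := by simp
  neg_mem' := by
    intro x hx
    simpa using hx

lemma mem_zloc {p : ℕ} [Fact p.Prime] {q : ℚ} : q ∈ zloc p ↔ 0 ≤ padicValRat p q := Iff.rfl

section
variable {p : ℕ} [hp : Fact p.Prime]

lemma val_one_add {z : ℚ} (hz : 0 < padicValRat p z) : 1 + z ≠ 0 ∧ padicValRat p (1 + z) = 0 := by
  have h0 : 1 + z ≠ 0 := by
    intro h
    have : z = -1 := by linarith
    rw [this] at hz; simp at hz
  have hz0 : z ≠ 0 := by rintro rfl; simp at hz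
  refine ⟨h0, ?_⟩
  have := padicValRat.add_eq_of_lt (p := p) h0 one_ne_zero hz0 (by simpa using hz)
  simpa using this

lemma val_pow_p (n : ℕ) : padicValRat p ((p : ℚ) ^ n) = n := by
  rw [padicValRat.pow]
  simp [hp.out.one_lt]

lemma p_ne_zero : (p : ℚ) ≠ 0 := by exact_mod_cast hp.out.ne_zero

/-- `1 + pʳ z` is a unit at `p` for `r > 0`. -/
lemma zloc_unit {r : ℕ} (hr : 0 < r) (z : ℚ) (hz : z ∈ zloc p) :
    ∃ d ∈ zloc p, (1 + (p : ℚ) ^ r * z) * d = 1 := by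
  by_cases hz0 : z = 0
  · exact ⟨1, (zloc p).one_mem, by simp [hz0]⟩
  · have h1 : padicValRat p ((p : ℚ) ^ r * z) = r + padicValRat p z := by
      rw [padicValRat.mul (pow_ne_zero _ p_ne_zero) hz0, val_pow_p]
    rw [mem_zloc] at hz
    obtain ⟨h2, h3⟩ := val_one_add (p := p) (z := (p : ℚ) ^ r * z) (by omega)
    exact ⟨(1 + (p : ℚ) ^ r * z)⁻¹, by rw [mem_zloc, padicValRat.inv, h3]; simp,
      mul_inv_cancel₀ h2⟩

lemma pow_mem_zloc (r : ℕ) : (p : ℚ) ^ r ∈ zloc p := by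
  rw [mem_zloc, val_pow_p]; omega

/-- A pole of `x` or `y` at `p` has orders `2r` and `3r` for a common `r > 0`. -/
lemma pole_orders (ha₂ : a₂ ∈ zloc p) (ha₄ : a₄ ∈ zloc p)
    (h : y ^ 2 = x ^ 3 + a₂ * x ^ 2 + a₄ * x) (hxy : padicValRat p x < 0 ∨ padicValRat p y < 0) :
    ∃ r : ℕ, 0 < r ∧ padicValRat p x = -(2 * r) ∧ padicValRat p y = -(3 * r) := by
  have hy2 : padicValRat p (y ^ 2) = 2 * padicValRat p y := by rw [padicValRat.pow]; simp
  have hx : padicValRat p x < 0 := by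
    refine hxy.elim id fun hy ↦ ?_
    by_contra hx
    push Not at hx
    have hx' : x ∈ zloc p := hx
    have : x ^ 3 + a₂ * x ^ 2 + a₄ * x ∈ zloc p := by
      repeat' first | assumption | apply add_mem | apply mul_mem | apply pow_mem
    rw [← h, mem_zloc] at this
    omega
  have hx0 : x ≠ 0 := by rintro rfl; simp at hx
  have hz : x⁻¹ * (p : ℚ)⁻¹ ∈ zloc p := by
    rw [mem_zloc, padicValRat.mul (inv_ne_zero hx0) (inv_ne_zero p_ne_zero), padicValRat.inv,
      padicValRat.inv]
    have := val_pow_p (p := p) 1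
    simp only [pow_one] at this
    omega
  set z := x⁻¹ * (p : ℚ)⁻¹ with hzdef
  have hzx : x * (p * z) = 1 := by
    rw [hzdef]; have := p_ne_zero (p := p); field_simp
  have hu : a₂ * z + a₄ * (p : ℚ) ^ 1 * z ^ 2 ∈ zloc p := by
    have := pow_mem_zloc (p := p) 1
    repeat' first | assumption | apply add_mem | apply mul_mem | apply pow_mem
  obtain ⟨d, hd, hd1⟩ := zloc_unit (p := p) one_pos _ hu
  obtain ⟨h2, h3⟩ : 1 + (p : ℚ) * (a₂ * z + a₄ * (p : ℚ) ^ 1 * z ^ 2) ≠ 0 ∧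
      padicValRat p (1 + (p : ℚ) * (a₂ * z + a₄ * (p : ℚ) ^ 1 * z ^ 2)) = 0 := by
    by_cases h0 : a₂ * z + a₄ * (p : ℚ) ^ 1 * z ^ 2 = 0
    · rw [h0]; simp
    · apply val_one_add
      rw [padicValRat.mul p_ne_zero h0]
      rw [mem_zloc] at hu
      have := val_pow_p (p := p) 1
      simp only [pow_one] at this hu ⊢
      omega
  have hfac : y ^ 2 = x ^ 3 * (1 + (p : ℚ) * (a₂ * z + a₄ * (p : ℚ) ^ 1 * z ^ 2)) := by
    rw [h]
    linear_combination (-a₂ * x ^ 2 - a₄ * x * (x * (p * z) + 1)) * hzx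
  rw [hfac, padicValRat.mul (pow_ne_zero _ hx0) h2, h3, padicValRat.pow] at hy2
  refine ⟨(-padicValRat p x / 2).toNat, ?_⟩
  push_cast at hy2
  omega

/-- Multiplication by `n` multiplies the parameter by `n`, modulo `π²`. -/
lemma Level.smul {O : Subring ℚ} {π : ℚ} (hπ0 : π ≠ 0) (hπ : π ∈ O)
    (hU : ∀ z ∈ O, ∃ d ∈ O, (1 + π * z) * d = 1) (ha₂ : a₂ ∈ O) (ha₄ : a₄ ∈ O)
    {s : ℚ} (hP : Level O π P s) (n : ℕ) :
    ∃ t, Level O π (n • P) t ∧ ∃ k ∈ O, t = n * s + π ^ 2 * k := by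
  induction n with
  | zero => exact ⟨0, ⟨O.zero_mem, Or.inl ⟨by simp, rfl⟩⟩, 0, O.zero_mem, by simp⟩
  | succ n ih =>
    obtain ⟨t, ht, k, hk, e⟩ := ih
    obtain ⟨t', ht', k', hk', e'⟩ := ht.add hπ0 hπ hU ha₂ ha₄ hP
    refine ⟨t', by rwa [succ_nsmul], k + k', O.add_mem hk hk', ?_⟩
    rw [e', e]; push_cast; ring

/-- The `y`-coordinate, with value `0` at the point at infinity. -/
def ycoord : (crv a₂ a₄).Point → ℚ
  | .zero => 0
  | .some _ y _ => y

lemma At.ycoord_eq (h : At P x y) : ycoord P = y := by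
  obtain ⟨h, rfl⟩ := h
  rfl

/-- If the group of rational points is finite, then `y`-coordinates have no pole at `p`. Let `P₀`
be a point with the deepest pole, of order `3r`, and let `π = pʳ`. Then `P₀` has a unit parameter
`s`, and `p • P₀` has parameter `p s + π² k`, which is divisible by `p` and nonzero since
`2r > 1`. Hence `p • P₀` is an affine point with a deeper pole. -/
lemma val_y_nonneg [Finite (crv a₂ a₄).Point] (ha₂ : a₂ ∈ zloc p) (ha₄ : a₄ ∈ zloc p)
    (h : At P x y) : y ∈ zloc p := by
  obtain ⟨P₀, hmin⟩ := Finite.exists_min (fun P : (crv a₂ a₄).Point ↦ padicValRat p (ycoord P))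
  rw [mem_zloc, ← h.ycoord_eq]
  refine le_trans ?_ (hmin P)
  by_contra! hneg
  rcases eq_zero_or_at P₀ with rfl | ⟨x, y, hP⟩
  · exact absurd hneg (by change ¬ padicValRat p 0 < 0; simp)
  rw [hP.ycoord_eq] at hneg hmin
  obtain ⟨r, hr, hx, hy⟩ := pole_orders ha₂ ha₄ hP.eqn (Or.inr hneg)
  have hx0 : x ≠ 0 := by rintro rfl; simp at hx; omega
  have hy0 : y ≠ 0 := by rintro rfl; simp at hy; omega
  set π := (p : ℚ) ^ r with hπ
  have hπO : π ∈ zloc p := pow_mem_zloc r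
  have hπ0 : π ≠ 0 := pow_ne_zero _ p_ne_zero
  have hvπ : ∀ n : ℕ, padicValRat p (π ^ n) = n * r := by
    intro n; rw [padicValRat.pow, hπ, val_pow_p]
  have hU := zloc_unit (p := p) hr
  obtain ⟨z, hz⟩ : ∃ z, z = (π ^ 3 * y)⁻¹ := ⟨_, rfl⟩
  have hz0 : z ≠ 0 := by rw [hz]; exact inv_ne_zero (mul_ne_zero (pow_ne_zero _ hπ0) hy0)
  have hvz : padicValRat p z = 0 := by
    rw [hz, padicValRat.inv, padicValRat.mul (pow_ne_zero _ hπ0) hy0, hvπ, hy]; push_cast; ring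
  obtain ⟨s, hs⟩ : ∃ s, s = π ^ 2 * z * x := ⟨_, rfl⟩
  have hs0 : s ≠ 0 := by rw [hs]; exact mul_ne_zero (mul_ne_zero (pow_ne_zero _ hπ0) hz0) hx0
  have hvs : padicValRat p s = 0 := by
    rw [hs, padicValRat.mul (mul_ne_zero (pow_ne_zero _ hπ0) hz0) hx0,
      padicValRat.mul (pow_ne_zero _ hπ0) hz0, hvπ, hvz, hx]; push_cast; ring
  have hlev : Level (zloc p) π P₀ s := ⟨by rw [mem_zloc, hvs], Or.inr ⟨x, y, z, hP,
    by rw [mem_zloc, hvz], by rw [hz]; field_simp, by rw [hs]; ring⟩⟩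
  obtain ⟨t, ⟨htO, ht⟩, k, hk, hkt⟩ := hlev.smul hπ0 hπO hU ha₂ ha₄ p
  have hvp : padicValRat p (p : ℚ) = 1 := by
    have := val_pow_p (p := p) 1
    rwa [pow_one, Nat.cast_one] at this
  rcases ht with ⟨-, rfl⟩ | ⟨X, Y, Z, hR, hZ, hY, hX⟩
  · have e : p * s = -(π ^ 2 * k) := by linarith
    have hps : (p : ℚ) * s ≠ 0 := mul_ne_zero p_ne_zero hs0
    have hk0 : k ≠ 0 := by rintro rfl; rw [e] at hps; simp at hps
    have := congrArg (padicValRat p) e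
    rw [padicValRat.neg, padicValRat.mul p_ne_zero hs0, hvp, hvs,
      padicValRat.mul (pow_ne_zero _ hπ0) hk0, hvπ] at this
    rw [mem_zloc] at hk
    push_cast at this
    omega
  · have hY0 : Y ≠ 0 := right_ne_zero_of_mul_eq_one hY
    have hZ0 : Z ≠ 0 := right_ne_zero_of_mul (left_ne_zero_of_mul_eq_one hY)
    have hw : Z * (1 + π * (-(a₂ * π * t ^ 2 + a₄ * π ^ 3 * t * Z))) = t ^ 3 := by
      apply mul_left_cancel₀ (pow_ne_zero 3 hπ0)
      have hw' : π ^ 3 * Z = (π * t) ^ 3 + a₂ * (π * t) ^ 2 * (π ^ 3 * Z) +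
          a₄ * (π * t) * (π ^ 3 * Z) ^ 2 := by
        rw [← hX]
        linear_combination (-(π ^ 3 * Z)) * (π ^ 3 * Z * Y + 1) * hY +
          (π ^ 3 * Z) ^ 3 * hR.eqn
      linear_combination hw'
    obtain ⟨d, hd, hd1⟩ := hU (-(a₂ * π * t ^ 2 + a₄ * π ^ 3 * t * Z)) (by
      repeat' first | assumption | apply neg_mem | apply add_mem | apply mul_mem | apply pow_mem)
    have hZt : Z = t ^ 3 * d := by rw [← hw, mul_assoc, hd1, mul_one]
    obtain ⟨t', ht', htt⟩ : ∃ t' ∈ zloc p, t = p * t' := by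
      refine ⟨s + (p : ℚ) ^ (2 * r - 1) * k, add_mem (by rw [mem_zloc, hvs])
        (mul_mem (pow_mem_zloc _) hk), ?_⟩
      rw [hkt, hπ, ← pow_mul, show r * 2 = (2 * r - 1) + 1 by omega, pow_succ]
      ring
    have hvZ : 3 ≤ padicValRat p Z := by
      have e : Z = (p : ℚ) ^ 3 * (t' ^ 3 * d) := by rw [hZt, htt]; ring
      have hne : t' ^ 3 * d ≠ 0 := by intro h; rw [h, mul_zero] at e; exact hZ0 e
      have : t' ^ 3 * d ∈ zloc p := mul_mem (pow_mem ht' 3) hd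
      rw [mem_zloc] at this
      rw [e, padicValRat.mul (pow_ne_zero _ p_ne_zero) hne, val_pow_p]
      push_cast; omega
    have hv := congrArg (padicValRat p) hY
    rw [padicValRat.mul (mul_ne_zero (pow_ne_zero _ hπ0) hZ0) hY0,
      padicValRat.mul (pow_ne_zero _ hπ0) hZ0, hvπ, padicValRat.one] at hv
    have := hmin (p • P₀)
    rw [hR.ycoord_eq] at this
    push_cast at hv
    omega
end

lemma exists_int_of_forall_val {q : ℚ} (h : ∀ (p : ℕ) [Fact p.Prime], 0 ≤ padicValRat p q) :
    ∃ n : ℤ, q = n := by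
  refine ⟨q.num, ?_⟩
  suffices q.den = 1 by exact (Rat.den_eq_one_iff q).mp this |>.symm
  by_contra hd
  obtain ⟨p, hp, hpd⟩ := Nat.exists_prime_and_dvd hd
  have := Fact.mk hp
  have h1 : 0 ≤ (padicValInt p q.num : ℤ) - padicValNat p q.den := h p
  have h2 : ¬ (p : ℤ) ∣ q.num := by
    intro hn
    have := q.reduced
    have h3 : p ∣ q.num.natAbs := Int.natCast_dvd.mp hn
    exact Nat.not_coprime_of_dvd_of_dvd hp.one_lt h3 hpd this
  rw [padicValInt.eq_zero_of_not_dvd h2] at h1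
  have h3 := one_le_padicValNat_of_dvd q.den_ne_zero hpd
  omega

/-- A finite group of rational points on an integral model consists of integral points. -/
lemma At.integral {A₂ A₄ : ℤ} [Finite (crv A₂ A₄).Point] {P : (crv A₂ A₄).Point}
    (h : At P x y) : (∃ n : ℤ, x = n) ∧ ∃ n : ℤ, y = n := by
  have h_int : ∀ (p : ℕ) [Fact p.Prime] (n : ℤ), (n : ℚ) ∈ zloc p := by
    intro p _ n; rw [mem_zloc, padicValRat.of_int]; omega
  have hy : ∀ (p : ℕ) [Fact p.Prime], 0 ≤ padicValRat p y :=
    fun p _ ↦ val_y_nonneg (h_int p _) (h_int p _) h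
  refine ⟨exists_int_of_forall_val fun p _ ↦ ?_, exists_int_of_forall_val hy⟩
  by_contra! hx
  obtain ⟨r, hr, -, hr'⟩ := pole_orders (h_int p _) (h_int p _) h.eqn (Or.inl hx)
  have := hy p
  omega

/-! ### Finiteness of the group contradicts Fermat -/

lemma exists_int_of_sq {q : ℚ} {n : ℤ} (h : q ^ 2 = n) : ∃ z : ℤ, q = z := by
  refine exists_int_of_forall_val fun p _ ↦ ?_
  have h1 := congrArg (padicValRat p) h
  rw [padicValRat.pow, padicValRat.of_int] at h1
  push_cast at h1
  omega

/-- The duplication formula for `x`, with denominators cleared. -/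
lemma At.double_sq {X Y : ℚ} (h : At P x y) (hy : y ≠ 0) (h' : At (P + P) X Y) :
    4 * y ^ 2 * X = (x ^ 2 - a₄) ^ 2 := by
  obtain ⟨L, hL⟩ : ∃ L, L * (2 * y) = 3 * x ^ 2 + 2 * a₂ * x + a₄ :=
    ⟨(3 * x ^ 2 + 2 * a₂ * x + a₄) / (2 * y), by field_simp⟩
  obtain ⟨rfl, -⟩ := h'.inj (h.double hy L hL)
  linear_combination (L * (2 * y) + (3 * x ^ 2 + 2 * a₂ * x + a₄)) * hL - 4 * (a₂ + 2 * x) * h.eqn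

/-- `x(P + Q) - x(P - Q)` in terms of the coordinates of `P` and `Q`. -/
lemma At.sub_x {X Y X' Y' : ℚ} (h : At P x₁ y₁) (h' : At Q x₂ y₂) (hx : x₁ ≠ x₂)
    (hs : At (P + Q) X Y) (hd : At (P + -Q) X' Y') :
    (X - X') * (x₁ - x₂) ^ 2 = -4 * y₁ * y₂ := by
  have hx' := sub_ne_zero.mpr hx
  obtain ⟨L, hL⟩ : ∃ L, L * (x₁ - x₂) = y₁ - y₂ := ⟨(y₁ - y₂) / (x₁ - x₂), by field_simp⟩
  obtain ⟨M, hM⟩ : ∃ M, M * (x₁ - x₂) = y₁ - -y₂ := ⟨(y₁ - -y₂) / (x₁ - x₂), by field_simp⟩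
  obtain ⟨rfl, -⟩ := hs.inj (h.add h' hx L hL)
  obtain ⟨rfl, -⟩ := hd.inj (h.add h'.neg hx M hM)
  linear_combination (L * (x₁ - x₂) + (y₁ - y₂)) * hL - (M * (x₁ - x₂) + (y₁ + y₂)) * hM

/-- Translation by the point `(c, 0)` of order two acts on `x - c` as an inversion, with constant
the derivative of the cubic at `c`. -/
lemma At.add_two_torsion {c : ℚ} (h : At P x y) (hT : At Q c 0) (hx : x ≠ c) :
    ∃ X Y, At (P + Q) X Y ∧ (X - c) * (x - c) = 3 * c ^ 2 + 2 * a₂ * c + a₄ := by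
  have hx' := sub_ne_zero.mpr hx
  obtain ⟨L, hL⟩ : ∃ L, L * (x - c) = y - 0 := ⟨(y - 0) / (x - c), by field_simp⟩
  refine ⟨_, _, h.add hT hx L hL, ?_⟩
  apply mul_right_cancel₀ hx'
  linear_combination (L * (x - c) + y) * hL + h.eqn - hT.eqn

section
variable {D a b : ℤ}

/-- The integral model `y² = x (x + D b²) (x - D a²)`. -/
abbrev W (D a b : ℤ) : WeierstrassCurve.Affine ℚ :=
  crv ((D * (b ^ 2 - a ^ 2) : ℤ) : ℚ) ((-(D ^ 2 * a ^ 2 * b ^ 2) : ℤ) : ℚ)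

lemma W_exists_at (hD : 0 < D) (ha : 0 < a) (hb : 0 < b)
    (h : y ^ 2 = x ^ 3 + ((D * (b ^ 2 - a ^ 2) : ℤ) : ℚ) * x ^ 2 +
      ((-(D ^ 2 * a ^ 2 * b ^ 2) : ℤ) : ℚ) * x) : ∃ P : (W D a b).Point, At P x y := by
  apply exists_at _ _ h
  · have : (-(D ^ 2 * a ^ 2 * b ^ 2) : ℤ) ≠ 0 := by
      have : 0 < D ^ 2 * a ^ 2 * b ^ 2 := by positivity
      omega
    exact_mod_cast this
  · have h1 : (D * (b ^ 2 - a ^ 2)) ^ 2 - 4 * (-(D ^ 2 * a ^ 2 * b ^ 2)) ≠ 0 := by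
      have : 0 < D ^ 2 * (a ^ 2 + b ^ 2) ^ 2 := by positivity
      intro h
      linarith
    exact_mod_cast h1

/-- If `W(ℚ)` is finite, a doubled point `R` with `2R ≠ O` provides the data of `DoublePoint`.
By the duplication formula `x(R)`, `x(R) + D b²` and `x(R) - D a²` are rational squares, and all
points, including the translates of `R` by points of order two, are integral. -/
lemma doublePoint (hD : 0 < D) (ha : 0 < a) (hb : 0 < b) [Finite (W D a b).Point]
    {R Q : (W D a b).Point} (hR : R = Q + Q) (hRR : R + R ≠ 0) :
    ∃ G H F : ℤ, DoublePoint D a b G H F ∧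
      ∃ y : ℚ, At R ((G ^ 2 : ℤ) : ℚ) y ∧ y ^ 2 = (((G * H * F) ^ 2 : ℤ) : ℚ) := by
  rcases eq_zero_or_at R with h0 | ⟨X, Y, hXY⟩
  · exact absurd (by rw [h0, add_zero]) hRR
  rcases eq_zero_or_at Q with h0 | ⟨x, y, hxy⟩
  · exact absurd (by rw [hR, h0]; simp) hRR
  have hy : y ≠ 0 := by
    rintro rfl
    rw [hxy.double_eq_zero] at hR
    exact absurd (by rw [hR, add_zero]) hRR
  have hY : Y ≠ 0 := by
    rintro rfl
    exact hRR hXY.double_eq_zero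
  obtain ⟨⟨Z, rfl⟩, -⟩ := hXY.integral
  have hsq := hxy.double_sq hy (hR ▸ hXY)
  have e := hxy.eqn
  have e' := hXY.eqn
  -- the three rational square roots
  obtain ⟨G, hG⟩ := exists_int_of_sq (q := (x ^ 2 + D ^ 2 * a ^ 2 * b ^ 2) / (2 * y)) (n := Z) (by
    rw [div_pow, div_eq_iff (by positivity)]; push_cast at hsq; linear_combination -hsq)
  obtain ⟨H, hH⟩ := exists_int_of_sq (q := ((x + D * b ^ 2) ^ 2 - D ^ 2 * b ^ 2 * (a ^ 2 + b ^ 2)) / (2 * y))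
    (n := Z + D * b ^ 2) (by
    rw [div_pow, div_eq_iff (by positivity)]; push_cast at hsq e ⊢
    linear_combination -hsq - 4 * D * b ^ 2 * e)
  obtain ⟨F, hF⟩ := exists_int_of_sq (q := ((x - D * a ^ 2) ^ 2 - D ^ 2 * a ^ 2 * (a ^ 2 + b ^ 2)) / (2 * y))
    (n := Z - D * a ^ 2) (by
    rw [div_pow, div_eq_iff (by positivity)]; push_cast at hsq e ⊢
    linear_combination -hsq + 4 * D * a ^ 2 * e)
  rw [div_eq_iff (by positivity)] at hG hH hF
  have hG2 : Z = G ^ 2 := by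
    have : (Z : ℚ) = (G : ℚ) ^ 2 := by
      apply mul_left_cancel₀ (show 4 * y ^ 2 ≠ 0 by positivity)
      push_cast at hsq
      linear_combination hsq + (x ^ 2 + D ^ 2 * a ^ 2 * b ^ 2 + G * (2 * y)) * hG
    exact_mod_cast this
  have hH2 : Z + D * b ^ 2 = H ^ 2 := by
    have : (Z : ℚ) + D * b ^ 2 = (H : ℚ) ^ 2 := by
      apply mul_left_cancel₀ (show 4 * y ^ 2 ≠ 0 by positivity)
      push_cast at hsq e
      linear_combination hsq + 4 * D * b ^ 2 * e +
        ((x + D * b ^ 2) ^ 2 - D ^ 2 * b ^ 2 * (a ^ 2 + b ^ 2) + H * (2 * y)) * hH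
    exact_mod_cast this
  have hF2 : Z - D * a ^ 2 = F ^ 2 := by
    have : (Z : ℚ) - D * a ^ 2 = (F : ℚ) ^ 2 := by
      apply mul_left_cancel₀ (show 4 * y ^ 2 ≠ 0 by positivity)
      push_cast at hsq e
      linear_combination hsq - 4 * D * a ^ 2 * e +
        ((x - D * a ^ 2) ^ 2 - D ^ 2 * a ^ 2 * (a ^ 2 + b ^ 2) + F * (2 * y)) * hF
    exact_mod_cast this
  subst hG2
  have hYsq : Y ^ 2 = (((G * H * F) ^ 2 : ℤ) : ℚ) := by
    rw [e']
    have : (G * H * F) ^ 2 = G ^ 2 * (G ^ 2 + D * b ^ 2) * (G ^ 2 - D * a ^ 2) := by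
      rw [hH2, hF2]; ring
    rw [this]; push_cast; ring
  have hprod : G * H * F ≠ 0 := by
    intro h
    rw [h] at hYsq
    simp at hYsq
    exact hY hYsq
  have hG0 : G ≠ 0 := by rintro rfl; simp at hprod
  have hH0 : H ≠ 0 := by rintro rfl; simp at hprod
  have hF0 : F ≠ 0 := by rintro rfl; simp at hprod
  -- translates by the two-torsion points are integral
  have key : ∀ c d s : ℤ, (c : ℚ) ^ 3 + ((D * (b ^ 2 - a ^ 2) : ℤ) : ℚ) * c ^ 2 +
      ((-(D ^ 2 * a ^ 2 * b ^ 2) : ℤ) : ℚ) * c = 0 → G ^ 2 - c = s ^ 2 → s ≠ 0 →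
      (3 * c ^ 2 + 2 * (D * (b ^ 2 - a ^ 2)) * c + -(D ^ 2 * a ^ 2 * b ^ 2)) = d → s ^ 2 ∣ d := by
    intro c d s hc hs hs0 hd
    obtain ⟨T, hT⟩ := W_exists_at (x := c) (y := 0) hD ha hb (by rw [hc]; ring)
    obtain ⟨X', Y', hA, hrel⟩ := hXY.add_two_torsion hT (by
      intro h
      have h' : G ^ 2 = c := by exact_mod_cast h
      rw [h', sub_self] at hs
      exact hs0 (pow_eq_zero_iff two_ne_zero |>.mp hs.symm))
    obtain ⟨⟨Z', rfl⟩, -⟩ := hA.integral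
    refine ⟨Z' - c, ?_⟩
    rw [← hs, ← hd]
    have : (Z' - c) * (G ^ 2 - c) =
      3 * c ^ 2 + 2 * (D * (b ^ 2 - a ^ 2)) * c + -(D ^ 2 * a ^ 2 * b ^ 2) := by
      exact_mod_cast hrel
    rw [← this]; ring
  refine ⟨G, H, F, ⟨hG0, hH0, hF0, hH2, ?_, ?_, ?_, ?_⟩, Y, hXY, hYsq⟩
  · rw [← hF2]; ring
  · have := key 0 (-(D * a * b) ^ 2) G (by simp) (by ring) hG0 (by ring)
    rw [Int.dvd_neg] at this
    exact (Int.pow_dvd_pow_iff two_ne_zero).mp this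
  · exact key (-(D * b ^ 2)) _ H (by push_cast; ring) (by rw [← hH2]; ring) hH0 (by ring)
  · exact key (D * a ^ 2) _ F (by push_cast; ring) hF2 hF0 (by ring)

/-- The duplication formula in terms of the integers attached to `R` and `2R`. -/
lemma doublePoint_rel {G H F G' : ℤ} {R : (W D a b).Point} (hR : At R ((G ^ 2 : ℤ) : ℚ) y)
    (hy : y ^ 2 = (((G * H * F) ^ 2 : ℤ) : ℚ)) (h : DoublePoint D a b G H F)
    {y' : ℚ} (hRR : At (R + R) ((G' ^ 2 : ℤ) : ℚ) y') :
    (2 * (G * H * F) * G') ^ 2 = (G ^ 4 + D ^ 2 * a ^ 2 * b ^ 2) ^ 2 := by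
  have hy0 : y ≠ 0 := by
    rintro rfl
    have : ((G * H * F) ^ 2 : ℤ) = 0 := by
      have : (((G * H * F) ^ 2 : ℤ) : ℚ) = 0 := by rw [← hy]; ring
      exact_mod_cast this
    exact pow_ne_zero 2 (mul_ne_zero (mul_ne_zero h.G0 h.H0) h.F0) this
  have h1 := hR.double_sq hy0 hRR
  rw [hy] at h1
  have h2 : 4 * (G * H * F) ^ 2 * G' ^ 2 = ((G ^ 2) ^ 2 - -(D ^ 2 * a ^ 2 * b ^ 2)) ^ 2 := by
    exact_mod_cast h1
  linear_combination h2

/-- A point `S` with `32 S ≠ O` and `x(8S) ≠ x(4S)` forces `W(ℚ)` to be infinite. -/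
theorem infinite_point (hD : 0 < D) (ha : 0 < a) (hb : 0 < b) (hsq : Squarefree D)
    (hab : IsCoprime a b) {S : (W D a b).Point} (h32 : 32 • S ≠ 0)
    (h4 : At (4 • S) x₁ y₁) (h8 : At (8 • S) x₂ y₂) (hne : x₂ ≠ x₁) :
    Infinite (W D a b).Point := by
  by_contra hinf
  rw [not_infinite_iff_finite] at hinf
  have hadd : ∀ m n k : ℕ, m + n = k → m • S + n • S = k • S := by
    rintro m n _ rfl; rw [add_nsmul]
  have h16 : 16 • S ≠ 0 := fun h ↦ h32 (by rw [← hadd 16 16 32 rfl, h, add_zero])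
  have h8' : 8 • S ≠ 0 := fun h ↦ h16 (by rw [← hadd 8 8 16 rfl, h, add_zero])
  have h4' : 4 • S ≠ 0 := fun h ↦ h8' (by rw [← hadd 4 4 8 rfl, h, add_zero])
  have h12 : 12 • S ≠ 0 := by
    intro h
    have : (8 : ℕ) • S = -((4 : ℕ) • S) := by
      rw [← add_eq_zero_iff_eq_neg, hadd 8 4 12 rfl, h]
    rw [this] at h8
    exact hne (h8.inj h4.neg).1
  obtain ⟨G₁, H₁, F₁, d₁, u₁, a₁, q₁⟩ := doublePoint hD ha hb (hadd 1 1 2 rfl).symm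
    (by rwa [hadd 2 2 4 rfl])
  obtain ⟨G₂, H₂, F₂, d₂, u₂, a₂, q₂⟩ := doublePoint hD ha hb (hadd 2 2 4 rfl).symm
    (by rwa [hadd 4 4 8 rfl])
  obtain ⟨G₃, H₃, F₃, d₃, u₃, a₃, q₃⟩ := doublePoint hD ha hb (hadd 4 4 8 rfl).symm
    (by rwa [hadd 8 8 16 rfl])
  obtain ⟨G₄, H₄, F₄, d₄, u₄, a₄, q₄⟩ := doublePoint hD ha hb (hadd 8 8 16 rfl).symm
    (by rwa [hadd 16 16 32 rfl])
  obtain ⟨G₆, H₆, F₆, d₆, u₆, a₆, q₆⟩ := doublePoint hD ha hb (hadd 3 3 6 rfl).symm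
    (by rwa [hadd 6 6 12 rfl])
  have hGne : G₆ ^ 2 ≠ G₁ ^ 2 := by
    intro h
    rw [h] at a₆
    rcases a₆.eq_or_eq_neg a₁ with h | h
    · apply h4'
      have := hadd 4 2 6 rfl
      rw [h] at this
      exact add_eq_right.mp this
    · rw [← add_eq_zero_iff_eq_neg, hadd 6 2 8 rfl] at h
      exact h8' h
  have hdiff : ((G₃ ^ 2 - G₂ ^ 2) * (G₆ ^ 2 - G₁ ^ 2) ^ 2) ^ 2 =
      (4 * (G₁ * H₁ * F₁) * (G₆ * H₆ * F₆)) ^ 2 := by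
    have h1 : (6 : ℕ) • S + -((2 : ℕ) • S) = (4 : ℕ) • S := by rw [← hadd 4 2 6 rfl]; abel
    have h2 := a₆.sub_x a₁ (by exact_mod_cast hGne) (X := ((G₃ ^ 2 : ℤ) : ℚ)) (Y := u₃)
      (by rwa [hadd 6 2 8 rfl]) (X' := ((G₂ ^ 2 : ℤ) : ℚ)) (Y' := u₂) (by rwa [h1])
    have h3 : ((((G₃ ^ 2 : ℤ) : ℚ) - ((G₂ ^ 2 : ℤ) : ℚ)) *
        (((G₆ ^ 2 : ℤ) : ℚ) - ((G₁ ^ 2 : ℤ) : ℚ)) ^ 2) ^ 2 =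
        16 * (((G₁ * H₁ * F₁) ^ 2 : ℤ) : ℚ) * (((G₆ * H₆ * F₆) ^ 2 : ℤ) : ℚ) := by
      rw [h2, ← q₁, ← q₆]; ring
    have h4 : ((G₃ ^ 2 - G₂ ^ 2) * (G₆ ^ 2 - G₁ ^ 2) ^ 2) ^ 2 =
        16 * (G₁ * H₁ * F₁) ^ 2 * (G₆ * H₆ * F₆) ^ 2 := by exact_mod_cast h3
    rw [h4]; ring
  have := DoublePoint.no_chain hD.ne' ha.ne' hb.ne' hsq hab d₁ d₂ d₃ d₄ d₆
    (doublePoint_rel a₁ q₁ d₁ (by rwa [hadd 2 2 4 rfl]))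
    (doublePoint_rel a₂ q₂ d₂ (by rwa [hadd 4 4 8 rfl]))
    (doublePoint_rel a₃ q₃ d₃ (by rwa [hadd 8 8 16 rfl])) hGne hdiff
  apply hne
  rw [(h8.inj a₃).1, (h4.inj a₂).1, this]
end

/-! ### An infinite group has points near infinity -/

lemma At.diff_x (h : At P x₁ y₁) (h' : At Q x₂ y₂) (hx : x₁ ≠ x₂) :
    ∃ X Y, At (P + -Q) X Y ∧ (X + a₂ + x₁ + x₂) * (x₁ - x₂) ^ 2 = (y₁ + y₂) ^ 2 := by
  have hx' := sub_ne_zero.mpr hx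
  obtain ⟨L, hL⟩ : ∃ L, L * (x₁ - x₂) = y₁ - -y₂ := ⟨(y₁ - -y₂) / (x₁ - x₂), by field_simp⟩
  exact ⟨_, _, h.add h'.neg hx L hL, by linear_combination (L * (x₁ - x₂) + (y₁ + y₂)) * hL⟩

section
open Topology

/-- The rational affine points, viewed in the real plane. -/
def realPts (a₂ a₄ : ℚ) : Set (ℝ × ℝ) :=
  {v | ∃ (P : (crv a₂ a₄).Point) (x y : ℚ), At P x y ∧ v = ((x : ℝ), (y : ℝ))}

lemma realPts_infinite [Infinite (crv a₂ a₄).Point] : (realPts a₂ a₄).Infinite := by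
  classical
  intro hfin
  let ψ : ℝ × ℝ → (crv a₂ a₄).Point := fun v ↦
    if h : ∃ (P : (crv a₂ a₄).Point) (x y : ℚ), At P x y ∧ v = ((x : ℝ), (y : ℝ)) then h.choose else 0
  have hψ : (Set.univ : Set (crv a₂ a₄).Point) ⊆ insert 0 (ψ '' realPts a₂ a₄) := by
    intro P _
    rcases eq_zero_or_at P with rfl | ⟨x, y, h⟩
    · exact Set.mem_insert _ _
    · right
      have hex : ∃ (P : (crv a₂ a₄).Point) (x' y' : ℚ), At P x' y' ∧
          ((x : ℝ), (y : ℝ)) = ((x' : ℝ), (y' : ℝ)) := ⟨P, x, y, h, rfl⟩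
      refine ⟨((x : ℝ), (y : ℝ)), hex, ?_⟩
      rw [show ψ ((x : ℝ), (y : ℝ)) = hex.choose from dif_pos hex]
      obtain ⟨x', y', h', e⟩ := hex.choose_spec
      rw [Prod.mk.injEq, Rat.cast_inj, Rat.cast_inj] at e
      obtain ⟨rfl, rfl⟩ := e
      exact h'.ext h
  exact Set.infinite_univ ((hfin.image ψ).insert 0 |>.subset hψ)

/-- On `y² = x (x + c) (x - d)` an infinite group of rational points has points with `x` arbitrarily
large. Otherwise the affine points lie in a compact subset of the plane and accumulate at some
real point `v` of the curve. If `v` has order two, translating nearby points by `v` gives points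
near infinity; if not, the differences of two nearby points do. -/
theorem exists_large {c d : ℚ} (hc : 0 < c) (hd : 0 < d) (h2 : a₂ = c - d) (h4 : a₄ = -(c * d))
    [Infinite (crv a₂ a₄).Point] (B : ℚ) :
    ∃ (P : (crv a₂ a₄).Point) (x y : ℚ), At P x y ∧ B < x := by
  by_contra! hB
  have hf : ∀ {P : (crv a₂ a₄).Point} {x y : ℚ}, At P x y → y ^ 2 = x * (x + c) * (x - d) := by
    intro P x y h; rw [h.eqn, h2, h4]; ring
  obtain ⟨K, hK0, hK⟩ : ∃ K : ℚ, 0 < K ∧ ∀ {P : (crv a₂ a₄).Point} {x y : ℚ}, At P x y → |x| ≤ K := by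
    refine ⟨|B| + c, by positivity, fun {P x y} h ↦ abs_le.mpr ⟨?_, ?_⟩⟩
    · have h1 : -c ≤ x := by
        by_contra! hx
        have := hf h
        have h3 : 0 < (x * (x + c)) * (d - x) :=
          mul_pos (mul_pos_of_neg_of_neg (by linarith) (by linarith)) (by linarith)
        nlinarith [sq_nonneg y]
      have := abs_nonneg B
      linarith
    · have := hB P x y h
      have := le_abs_self B
      linarith
  obtain ⟨M, hM⟩ : ∃ M : ℚ, ∀ {P : (crv a₂ a₄).Point} {x y : ℚ}, At P x y → |y| ≤ M := by
    refine ⟨K * (K + c) * (K + d) + 1, fun {P x y} h ↦ ?_⟩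
    have h1 : |y| ^ 2 ≤ K * (K + c) * (K + d) := by
      rw [← abs_pow, hf h, abs_mul, abs_mul]
      have hx := hK h
      have h3 : |x + c| ≤ K + c := (abs_add_le _ _).trans (by rw [abs_of_pos hc]; linarith)
      have h4 : |x - d| ≤ K + d := (abs_sub _ _).trans (by rw [abs_of_pos hd]; linarith)
      gcongr
    nlinarith [abs_nonneg y, sq_nonneg (|y| - 1)]
  obtain ⟨v, -, hv⟩ := (realPts_infinite (a₂ := a₂) (a₄ := a₄)).exists_accPt_of_subset_isCompact
    (K := Set.Icc (-K : ℝ) K ×ˢ Set.Icc (-M : ℝ) M) (isCompact_Icc.prod isCompact_Icc) (by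
    rintro _ ⟨P, x, y, h, rfl⟩
    refine Set.mk_mem_prod (Set.mem_Icc.mpr ?_) (Set.mem_Icc.mpr ?_)
    · have := abs_le.mp (hK h); exact ⟨by exact_mod_cast this.1, by exact_mod_cast this.2⟩
    · have := abs_le.mp (hM h); exact ⟨by exact_mod_cast this.1, by exact_mod_cast this.2⟩)
  have hnear : ∀ ε > 0, ∃ (P : (crv a₂ a₄).Point) (x y : ℚ), At P x y ∧ |(x : ℝ) - v.1| < ε ∧
      |(y : ℝ) - v.2| < ε ∧ ((x : ℝ), (y : ℝ)) ≠ v := by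
    intro ε hε
    obtain ⟨w, ⟨hw, P, x, y, h, rfl⟩, hne⟩ := accPt_iff_nhds.mp hv _ (Metric.ball_mem_nhds v hε)
    rw [Metric.mem_ball, Prod.dist_eq, max_lt_iff, Real.dist_eq, Real.dist_eq] at hw
    exact ⟨P, x, y, h, hw.1, hw.2, hne⟩
  have hveq : v.2 ^ 2 = v.1 * (v.1 + c) * (v.1 - d) := by
    have hcl : IsClosed {w : ℝ × ℝ | w.2 ^ 2 = w.1 * (w.1 + c) * (w.1 - d)} :=
      isClosed_eq (by fun_prop) (by fun_prop)
    have hsub : realPts a₂ a₄ ⊆ {w : ℝ × ℝ | w.2 ^ 2 = w.1 * (w.1 + c) * (w.1 - d)} := by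
      rintro _ ⟨P, x, y, h, rfl⟩
      have := hf h
      change (y : ℝ) ^ 2 = x * (x + c) * (x - d)
      exact_mod_cast this
    exact closure_minimal hsub hcl (mem_closure_iff_clusterPt.mpr hv.clusterPt)
  obtain ⟨v₁, v₂⟩ := v
  simp only at hnear hveq
  by_cases hv2 : v₂ = 0
  · subst hv2
    obtain ⟨e, rfl, hk⟩ : ∃ e : ℚ, v₁ = e ∧ e * (e + c) * (e - d) = 0 := by
      have h0 : v₁ * (v₁ + c) * (v₁ - d) = 0 := by rw [← hveq]; ring
      rcases mul_eq_zero.mp h0 with h | h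
      · rcases mul_eq_zero.mp h with h | h
        · exact ⟨0, by simpa using h, by ring⟩
        · exact ⟨-c, by push_cast; linarith, by ring⟩
      · exact ⟨d, by linarith, by ring⟩
    have hk0 : 3 * e ^ 2 + 2 * a₂ * e + a₄ ≠ 0 := by
      rw [h2, h4]
      rcases mul_eq_zero.mp hk with h | h
      · rcases mul_eq_zero.mp h with rfl | h
        · have := mul_pos hc hd; intro h; linarith
        · have : e = -c := by linarith
          subst this
          have : 0 < c * (c + d) := by positivity
          intro h; linarith
      · have : e = d := by linarith
        subst this
        have : 0 < e * (c + e) := by positivity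
        intro h; linarith
    obtain ⟨T, hT⟩ : ∃ T : (crv a₂ a₄).Point, At T e 0 := by
      apply exists_at
      · rw [h4]; have := mul_pos hc hd; intro h; linarith
      · rw [h2, h4]; have : 0 < (c + d) ^ 2 := by positivity
        intro h; linarith
      · rw [h2, h4]; linear_combination -hk
    obtain ⟨P, x, y, h, hx, hy, hne⟩ := hnear ((|3 * e ^ 2 + 2 * a₂ * e + a₄| / (2 * K) : ℚ) : ℝ)
      (by exact_mod_cast (by positivity))
    have hx' : |x - e| < |3 * e ^ 2 + 2 * a₂ * e + a₄| / (2 * K) := by exact_mod_cast hx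
    have hxe : x ≠ e := by
      rintro rfl
      apply hne
      have : y ^ 2 = 0 := by rw [hf h, hk]
      rw [pow_eq_zero_iff two_ne_zero] at this
      rw [this, Rat.cast_zero]
    obtain ⟨X, Y, hXY, hrel⟩ := h.add_two_torsion hT hxe
    rw [lt_div_iff₀ (by positivity), ← hrel, abs_mul] at hx'
    have h5 : |X - e| ≤ 2 * K := (abs_sub _ _).trans (by linarith [hK hXY, hK hT])
    have := mul_le_mul_of_nonneg_right h5 (abs_nonneg (x - e))
    linarith
  · -- For `P, Q` within `ε` of `v` the chord through `P` and `-Q` has slope at least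
    -- `|v₂| / (2 ε)` in absolute value, and `ε` is chosen so that the resulting `x(P - Q)` violates the bound `K`.
    set C : ℝ := 3 * K + |(a₂ : ℝ)| + 1 with hC
    have hKR : (0 : ℝ) < K := by exact_mod_cast hK0
    have hC1 : 1 ≤ C := by have := abs_nonneg (a₂ : ℝ); linarith
    set ε := |v₂| / (2 * C) with hε
    have hv20 : 0 < |v₂| := abs_pos.mpr hv2
    have hε0 : 0 < ε := by positivity
    have hεC : 2 * C * ε = |v₂| := by rw [hε]; field_simp
    obtain ⟨P, x₁, y₁, h₁, hx₁, hy₁, hne₁⟩ := hnear ε hε0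
    obtain ⟨Q, x₂, y₂, h₂, hx₂, hy₂, hne⟩ : ∃ (Q : (crv a₂ a₄).Point) (x y : ℚ), At Q x y ∧
        |(x : ℝ) - v₁| < ε ∧ |(y : ℝ) - v₂| < ε ∧ ((x₁ : ℝ), (y₁ : ℝ)) ≠ ((x : ℝ), (y : ℝ)) := by
      obtain ⟨δ, hδ0, hδ⟩ : ∃ δ > 0, δ ≤ |(x₁ : ℝ) - v₁| ∨ δ ≤ |(y₁ : ℝ) - v₂| := by
        by_cases h : (x₁ : ℝ) = v₁
        · refine ⟨|(y₁ : ℝ) - v₂|, abs_pos.mpr (sub_ne_zero.mpr ?_), Or.inr le_rfl⟩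
          rintro rfl; exact hne₁ (by rw [h])
        · exact ⟨|(x₁ : ℝ) - v₁|, abs_pos.mpr (sub_ne_zero.mpr h), Or.inl le_rfl⟩
      obtain ⟨Q, x, y, h, hx, hy, -⟩ := hnear (min ε δ) (lt_min hε0 hδ0)
      refine ⟨Q, x, y, h, hx.trans_le (min_le_left _ _), hy.trans_le (min_le_left _ _), ?_⟩
      intro e
      rw [Prod.mk.injEq] at e
      rw [← e.1] at hx
      rw [← e.2] at hy
      have := min_le_right ε δ
      rcases hδ with h | h <;> linarith
    have hys : |v₂| ≤ |(y₁ : ℝ) + y₂| := by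
      have h3 : 2 * v₂ = ((y₁ : ℝ) + y₂) - (y₁ - v₂) - (y₂ - v₂) := by ring
      have h4 : |2 * v₂| ≤ |(y₁ : ℝ) + y₂| + |(y₁ : ℝ) - v₂| + |(y₂ : ℝ) - v₂| := by
        rw [h3]; exact (abs_sub _ _).trans (add_le_add_left (abs_sub _ _) _)
      rw [abs_mul, abs_two] at h4
      nlinarith
    have hxne : x₁ ≠ x₂ := by
      rintro rfl
      rcases h₁.eq_or_eq_neg h₂ with e | e
      · subst e
        exact hne (by rw [(h₁.inj h₂).2])
      · subst e
        have := (h₁.inj h₂.neg).2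
        rw [this] at hys
        simp at hys
        exact hv2 hys
    obtain ⟨X, Y, hXY, hrel⟩ := h₁.diff_x h₂ hxne
    have hrel' : ((X : ℝ) + a₂ + x₁ + x₂) * (x₁ - x₂) ^ 2 = (y₁ + y₂) ^ 2 := by exact_mod_cast hrel
    have hxs : |(x₁ : ℝ) - x₂| ≤ 2 * ε := by
      have : (x₁ : ℝ) - x₂ = (x₁ - v₁) - (x₂ - v₁) := by ring
      rw [this]; exact (abs_sub _ _).trans (by linarith)
    have hXC : (X : ℝ) + a₂ + x₁ + x₂ ≤ C - 1 := by
      have b1 : (X : ℝ) ≤ K := by exact_mod_cast (le_abs_self X).trans (hK hXY)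
      have b2 : (x₁ : ℝ) ≤ K := by exact_mod_cast (le_abs_self x₁).trans (hK h₁)
      have b3 : (x₂ : ℝ) ≤ K := by exact_mod_cast (le_abs_self x₂).trans (hK h₂)
      have := le_abs_self (a₂ : ℝ)
      linarith
    have h5 : (C - 1) * (x₁ - x₂ : ℝ) ^ 2 ≤ (C - 1) * (2 * ε) ^ 2 := by
      apply mul_le_mul_of_nonneg_left _ (by linarith)
      rw [← sq_abs]
      exact pow_le_pow_left₀ (abs_nonneg _) hxs 2
    have h6 : |v₂| ^ 2 ≤ (y₁ + y₂ : ℝ) ^ 2 := by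
      rw [← sq_abs ((y₁ : ℝ) + y₂)]
      exact pow_le_pow_left₀ (abs_nonneg _) hys 2
    have h7 := mul_le_mul_of_nonneg_right hXC (sq_nonneg ((x₁ : ℝ) - x₂))
    rw [hrel'] at h7
    have h8 : |v₂| ^ 2 ≤ (C - 1) * (2 * ε) ^ 2 := by linarith
    rw [← hεC] at h8
    have h9 : 0 < ε ^ 2 := by positivity
    have h10 : (C - 1) * (2 * ε) ^ 2 < (2 * C * ε) ^ 2 := by
      have : C - 1 < C ^ 2 := by nlinarith
      nlinarith
    linarith
end

/-! ### The exceptional polynomial and the elliptic curve of the quartic -/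

/-- Numerator and denominator `(N, E)` of the `x`-coordinate, in units of `c`, of `2ᵏ S` on
`y² = x (x + c) (x - c u²)`, where `x(S) = c u² (1 + m²) / (m (m (1 - u²) + 2 u))`. They are
defined over any commutative ring, so that they can be read as polynomials, as rational numbers,
or modulo a prime. -/
def dbl {R : Type*} [CommRing R] (m u : R) : ℕ → R × R
  | 0 => (u ^ 2 * (1 + m ^ 2), m * (m * (1 - u ^ 2) + 2 * u))
  | k + 1 => (((dbl m u k).1 ^ 2 + u ^ 2 * (dbl m u k).2 ^ 2) ^ 2,
      4 * (dbl m u k).1 * (dbl m u k).2 * ((dbl m u k).1 + (dbl m u k).2) *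
        ((dbl m u k).1 - u ^ 2 * (dbl m u k).2))

lemma map_dbl {R S : Type*} [CommRing R] [CommRing S] (φ : R →+* S) (m u : R) (k : ℕ) :
    φ (dbl m u k).1 = (dbl (φ m) (φ u) k).1 ∧ φ (dbl m u k).2 = (dbl (φ m) (φ u) k).2 := by
  induction k with
  | zero => simp [dbl, map_ofNat φ 2]
  | succ k ih => simp [dbl, ih.1, ih.2, map_ofNat φ 4]

/-- The exceptional polynomial. Where it does not vanish, `32 S ≠ O` and `x(8S) ≠ x(4S)`. The
factor `m ^ 8` makes the lower bound on the degree immediate and does not vanish for `m > 0`. -/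
def bad {R : Type*} [CommRing R] (m u : R) : R :=
  m ^ 8 * ((dbl m u 5).2 * ((dbl m u 3).1 * (dbl m u 2).2 - (dbl m u 2).1 * (dbl m u 3).2))

lemma map_bad {R S : Type*} [CommRing R] [CommRing S] (φ : R →+* S) (m u : R) :
    φ (bad m u) = bad (φ m) (φ u) := by
  simp [bad, map_dbl]

/-- The exceptional polynomial is not identically zero: its value at `(2, 1)` is nonzero
modulo `13`. -/
lemma bad_ne_zero : bad (2 : ℚ) 1 ≠ 0 := by
  have h1 : bad (2 : ZMod 13) 1 ≠ 0 := by decide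
  have h2 : bad (2 : ℤ) 1 ≠ 0 := by
    intro h
    apply h1
    have := map_bad (Int.castRingHom (ZMod 13)) 2 1
    rw [h] at this
    simpa using this.symm
  have := map_bad (Int.castRingHom ℚ) 2 1
  simp only [map_one, map_ofNat] at this
  rw [← this]
  simpa using h2

lemma bad_poly : bad (MvPolynomial.X 0 : MvPolynomial (Fin 2) ℚ) (MvPolynomial.X 1) ≠ 0 ∧
    8 ≤ (bad (MvPolynomial.X 0 : MvPolynomial (Fin 2) ℚ) (MvPolynomial.X 1)).totalDegree := by
  have h0 : bad (MvPolynomial.X 0 : MvPolynomial (Fin 2) ℚ) (MvPolynomial.X 1) ≠ 0 := by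
    intro h
    have := map_bad (MvPolynomial.eval ![(2 : ℚ), 1]) (MvPolynomial.X 0) (MvPolynomial.X 1)
    rw [h] at this
    simp only [map_zero, MvPolynomial.eval_X, Matrix.cons_val_zero, Matrix.cons_val_one] at this
    exact bad_ne_zero this.symm
  refine ⟨h0, ?_⟩
  rw [bad] at h0 ⊢
  rw [MvPolynomial.totalDegree_mul_of_isDomain (left_ne_zero_of_mul h0) (right_ne_zero_of_mul h0),
    MvPolynomial.totalDegree_X_pow]
  omega

/-- A positive rational is a squarefree integer times a square. -/
lemma exists_squarefree {e : ℚ} (he : 0 < e) :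
    ∃ (D : ℕ) (τ : ℚ), 0 < D ∧ Squarefree D ∧ 0 < τ ∧ e = D * τ ^ 2 := by
  obtain ⟨D, s, hDs, hD⟩ := Nat.sq_mul_squarefree (e.num.toNat * e.den)
  have hnum : 0 < e.num := Rat.num_pos.mpr he
  have hden := e.den_pos
  have hpos : 0 < s ^ 2 * D := by
    rw [hDs]; exact Nat.mul_pos (by omega) hden
  have hs : 0 < s := by
    rcases Nat.eq_zero_or_pos s with rfl | h
    · simp at hpos
    · exact h
  refine ⟨D, s / e.den, Nat.pos_of_mul_pos_left hpos, hD, by positivity, ?_⟩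
  have h1 : (e.num : ℚ) * e.den = s ^ 2 * D := by
    have : ((e.num.toNat : ℕ) : ℤ) = e.num := Int.toNat_of_nonneg hnum.le
    have h2 : (e.num : ℤ) * e.den = s ^ 2 * D := by
      rw [← this]; exact_mod_cast hDs.symm
    exact_mod_cast h2
  have h3 : e * e.den = e.num := Rat.mul_den_eq_num e
  have hd : (e.den : ℚ) ≠ 0 := by positivity
  rw [div_pow, mul_div_assoc', eq_div_iff (pow_ne_zero 2 hd)]
  linear_combination e.den * h3 + h1

/-- Doubling acts on `x / c = N / E` by the recursion of `dbl`. -/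
lemma double_step {c u N E : ℚ} (hc : c ≠ 0) (h2 : a₂ = c - c * u ^ 2) (h4 : a₄ = -(c ^ 2 * u ^ 2))
    (hE : 4 * N * E * (N + E) * (N - u ^ 2 * E) ≠ 0) (h : At P x y) (hx : x * E = c * N) :
    ∃ X Y, At (P + P) X Y ∧
      X * (4 * N * E * (N + E) * (N - u ^ 2 * E)) = c * (N ^ 2 + u ^ 2 * E ^ 2) ^ 2 := by
  have hE0 : E ≠ 0 := by rintro rfl; simp at hE
  have hy2 : y ^ 2 * E ^ 3 = c ^ 3 * N * (N + E) * (N - u ^ 2 * E) := by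
    have e := h.eqn
    rw [h2, h4] at e
    have : x = c * N / E := by rw [eq_div_iff hE0, hx]
    rw [e, this]; field_simp; ring
  have hy : y ≠ 0 := by
    rintro rfl
    apply hE
    apply mul_left_cancel₀ (pow_ne_zero 3 hc)
    linear_combination -4 * E * hy2
  obtain ⟨L, hL⟩ : ∃ L, L * (2 * y) = 3 * x ^ 2 + 2 * a₂ * x + a₄ :=
    ⟨(3 * x ^ 2 + 2 * a₂ * x + a₄) / (2 * y), by field_simp⟩
  have hR := h.double hy L hL
  refine ⟨_, _, hR, ?_⟩
  have e := h.double_sq hy hR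
  generalize L ^ 2 - a₂ - x - x = X at e
  rw [h4] at e
  apply mul_left_cancel₀ (pow_ne_zero 3 hc)
  have e' : 4 * (y ^ 2 * E ^ 3) * X * E = ((x * E) ^ 2 + c ^ 2 * u ^ 2 * E ^ 2) ^ 2 := by
    linear_combination E ^ 4 * e
  rw [hy2, hx] at e'
  linear_combination e'

lemma dbl_point {c m u : ℚ} (hc : c ≠ 0) (h2 : a₂ = c - c * u ^ 2) (h4 : a₄ = -(c ^ 2 * u ^ 2))
    (h : At P x y) (hx : x * (dbl m u 0).2 = c * (dbl m u 0).1) (k : ℕ)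
    (hk : (dbl m u k).2 ≠ 0) :
    ∃ X Y, At ((2 ^ k : ℕ) • P) X Y ∧ X * (dbl m u k).2 = c * (dbl m u k).1 := by
  induction k with
  | zero => exact ⟨x, y, by simpa using h, hx⟩
  | succ k ih =>
    have hk' : 4 * (dbl m u k).1 * (dbl m u k).2 * ((dbl m u k).1 + (dbl m u k).2) *
        ((dbl m u k).1 - u ^ 2 * (dbl m u k).2) ≠ 0 := hk
    obtain ⟨X, Y, hXY, e⟩ := ih (fun h0 ↦ by rw [h0] at hk'; simp at hk')
    obtain ⟨X', Y', hXY', e₁⟩ := double_step hc h2 h4 hk' hXY e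
    exact ⟨X', Y', by rwa [pow_succ, mul_two, add_nsmul], e₁⟩

/-- The elliptic curve `Y² = X (X + e) (X - e u²)` with `e = 4 (1 + m²) / (m p)`,
`p = m (1 - u²) + 2 u`, has rational points with `X` arbitrarily large. It is rescaled to `W D a b`
with `u = a / b` and `e = D τ²`, and `S` is its rational point with `X = (2 u (1 + m²) / (m p))²`. -/
theorem exists_large_E {m u e : ℚ} (hm : 0 < m) (hu : 0 < u) (hmu : m * u < 1)
    (he : e * (m * (m * (1 - u ^ 2) + 2 * u)) = 4 * (1 + m ^ 2))
    (hbad : bad m u ≠ 0) (B : ℚ) :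
    ∃ X Y : ℚ, Y ^ 2 = X * (X + e) * (X - e * u ^ 2) ∧ B < X := by
  set p := m * (1 - u ^ 2) + 2 * u with hp
  have hp0 : 0 < p := by
    have : 0 < u * (1 - m * u) := mul_pos hu (by linarith)
    rw [hp]; linarith
  have he0 : 0 < e := by
    have : 0 < e * (m * p) := by rw [he]; positivity
    exact pos_of_mul_pos_left this (by positivity)
  obtain ⟨D, τ, hD, hsq, hτ, heD⟩ := exists_squarefree he0
  have hD' : (0 : ℤ) < D := by exact_mod_cast hD
  have ha : 0 < u.num := Rat.num_pos.mpr hu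
  have hb : (0 : ℤ) < u.den := by exact_mod_cast u.den_pos
  have hbQ : (u.den : ℚ) ≠ 0 := by exact_mod_cast u.den_nz
  have hub : u * u.den = u.num := Rat.mul_den_eq_num u
  set c : ℚ := D * u.den ^ 2 with hc
  have hc0 : 0 < c := by have := u.den_pos; positivity
  have h2 : ((D * ((u.den : ℤ) ^ 2 - u.num ^ 2) : ℤ) : ℚ) = c - c * u ^ 2 := by
    push_cast; rw [← hub]; ring
  have h4 : ((-(D ^ 2 * u.num ^ 2 * (u.den : ℤ) ^ 2) : ℤ) : ℚ) = -(c ^ 2 * u ^ 2) := by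
    push_cast; rw [← hub]; ring
  set σ := τ / u.den with hσ
  have hσ0 : 0 < σ := by have := u.den_pos; positivity
  have hce : e = c * σ ^ 2 := by rw [heD, hσ, hc]; field_simp
  -- the point with `X = (2 u (1 + m²) / (m p))²`, transported to the rescaled curve
  obtain ⟨S, hS⟩ : ∃ S : (W D u.num u.den).Point, At S ((2 * u * (1 + m ^ 2) / (m * p)) ^ 2 / σ ^ 2)
      ((p + m * (1 - u ^ 2 - 2 * m * u)) / (m * p) * (2 * u * (1 + m ^ 2) / (m * p)) ^ 2 / σ ^ 3) := by
    apply W_exists_at hD' ha hb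
    rw [h2, h4, show c = e / σ ^ 2 by rw [hce]; field_simp,
      show e = 4 * (1 + m ^ 2) / (m * p) by rw [eq_div_iff (by positivity), he]]
    field_simp
    rw [hp]
    ring
  have hS0 : (2 * u * (1 + m ^ 2) / (m * p)) ^ 2 / σ ^ 2 * (dbl m u 0).2 = c * (dbl m u 0).1 := by
    rw [show c = e / σ ^ 2 by rw [hce]; field_simp,
      show e = 4 * (1 + m ^ 2) / (m * p) by rw [eq_div_iff (by positivity), he]]
    simp only [dbl]
    rw [← hp]
    field_simp
    ring
  have h5 : (dbl m u 5).2 ≠ 0 := left_ne_zero_of_mul (right_ne_zero_of_mul hbad)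
  have hdown : ∀ k, (dbl m u (k + 1)).2 ≠ 0 → (dbl m u k).2 ≠ 0 := by
    intro k h h0
    apply h
    simp [dbl, h0]
  have h3' := hdown 3 (hdown 4 h5)
  have h2' := hdown 2 h3'
  obtain ⟨x₅, y₅, hP5, -⟩ := dbl_point hc0.ne' h2 h4 hS hS0 5 h5
  obtain ⟨x₃, y₃, hP3, e₃⟩ := dbl_point hc0.ne' h2 h4 hS hS0 3 h3'
  obtain ⟨x₂, y₂, hP2, e₂⟩ := dbl_point hc0.ne' h2 h4 hS hS0 2 h2'
  have hne : x₃ ≠ x₂ := by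
    rintro rfl
    have h6 : (dbl m u 3).1 * (dbl m u 2).2 - (dbl m u 2).1 * (dbl m u 3).2 ≠ 0 :=
      right_ne_zero_of_mul (right_ne_zero_of_mul hbad)
    apply h6
    apply mul_left_cancel₀ hc0.ne'
    linear_combination (dbl m u 3).2 * e₂ - (dbl m u 2).2 * e₃
  have hab : IsCoprime u.num (u.den : ℤ) := by
    rw [Int.isCoprime_iff_gcd_eq_one]
    exact u.reduced
  have hinf := infinite_point hD' ha hb (Int.squarefree_natCast.mpr hsq) hab hP5.ne_zero hP2 hP3 hne
  obtain ⟨P, x, y, hxy, hB⟩ := exists_large (a₂ := ((D * ((u.den : ℤ) ^ 2 - u.num ^ 2) : ℤ) : ℚ))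
    (a₄ := ((-(D ^ 2 * u.num ^ 2 * (u.den : ℤ) ^ 2) : ℤ) : ℚ)) hc0
    (show 0 < c * u ^ 2 by positivity) h2 (by rw [h4]; ring) (B / σ ^ 2)
  refine ⟨σ ^ 2 * x, σ ^ 3 * y, ?_, ?_⟩
  · have := hxy.eqn
    rw [h2, h4] at this
    rw [hce]
    linear_combination σ ^ 6 * this
  · rw [div_lt_iff₀ (by positivity)] at hB
    linarith

/-! ### From the elliptic curve to the Heron quartic -/

lemma infinite_of_small {s : Set ℚ} (h0 : ∀ t ∈ s, 0 < t) (h : ∀ ε > 0, ∃ t ∈ s, t < ε) :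
    s.Infinite := by
  intro hfin
  obtain ⟨t₁, ht₁, -⟩ := h 1 one_pos
  obtain ⟨t, ht, hmin⟩ := Set.exists_min_image s id hfin ⟨t₁, ht₁⟩
  obtain ⟨t', ht', hlt⟩ := h t (h0 t ht)
  exact absurd (hmin t' ht') (not_le.mpr hlt)

/-- The rational map from the elliptic curve to the quartic. Requiring
`-1 + t (t (X + 2) - l) / 2` to be a square root of the quartic leaves, after division by `t²`, the
equation `key`, which is quadratic in `t`; its discriminant is a square exactly when `X` is the
abscissa of a rational point, and `ht` selects one root. -/
lemma quartic_of_point {X Y l γ e d t : ℚ} (hγ : e - d = 6 + γ) (hl : e * d = l ^ 2 - 4 * γ - 8)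
    (hE : Y ^ 2 = X * (X + e) * (X - d)) (hy : Y - l * X / 2 ≠ 0)
    (ht : t * (Y - l * X / 2) = 2 * (X + 2 + γ) - l ^ 2 / 2) :
    (-1 + t * (t * (X + 2) - l) / 2) ^ 2 = t ^ 4 - l * t ^ 3 + γ * t ^ 2 + l * t + 1 := by
  have key : t ^ 2 * (X * (X + 4)) / 4 - t * l * X / 2 + (l ^ 2 / 4 - X - 2 - γ) = 0 := by
    apply mul_left_cancel₀ (pow_ne_zero 2 hy)
    have hE' : Y ^ 2 = X * ((X + 4) * (X + 2 + γ) - l ^ 2) := by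
      linear_combination hE + X ^ 2 * hγ - X * hl
    have : t ^ 2 * (Y - l * X / 2) ^ 2 = (2 * (X + 2 + γ) - l ^ 2 / 2) ^ 2 := by
      rw [← ht]; ring
    linear_combination X * (X + 4) / 4 * this - (Y - l * X / 2) * l * X / 2 * ht +
      (l ^ 2 / 4 - X - 2 - γ) * hE'
  linear_combination t ^ 2 * key

/-- For `X → ∞` the parameter `t` of `quartic_of_point` is of size `2 X^(-1/2)`, so the quartic has
rational points with `t` arbitrarily small and positive. There the quartic is close to `1`, so
`ω ≠ 0`. -/
lemma exists_small_t {l γ e d : ℚ} (he : 0 < e) (hd : 0 < d) (hγ : e - d = 6 + γ)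
    (hl : e * d = l ^ 2 - 4 * γ - 8)
    (hlarge : ∀ B : ℚ, ∃ X Y : ℚ, Y ^ 2 = X * (X + e) * (X - d) ∧ B < X) {ε : ℚ} (hε : 0 < ε) :
    ∃ t ω : ℚ, 0 < t ∧ t < ε ∧ ω ≠ 0 ∧ ω ^ 2 = t ^ 4 - l * t ^ 3 + γ * t ^ 2 + l * t + 1 := by
  -- for such `ε` the quartic is positive on `(0, ε)`
  wlog hε1 : ε * (1 + 2 * |l| + |γ|) < 1 generalizing ε
  · have hC : 0 < 1 + 2 * |l| + |γ| := by positivity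
    obtain ⟨t, ω, h1, h2, h3⟩ := this (ε := min ε (1 / (2 * (1 + 2 * |l| + |γ|))))
      (lt_min hε (by positivity)) (by
        calc _ ≤ 1 / (2 * (1 + 2 * |l| + |γ|)) * (1 + 2 * |l| + |γ|) := by
              gcongr; exact min_le_right _ _
          _ = 1 / 2 := by field_simp
          _ < 1 := by norm_num)
    exact ⟨t, ω, h1, h2.trans_le (min_le_left _ _), h3⟩
  set k := |l| / 2 + 3 / ε with hk
  have hk0 : 0 < k := by positivity
  obtain ⟨X, Y₀, hE₀, hX⟩ := hlarge (2 * k ^ 2 + 2 * d + l ^ 2 + 4 + 2 * |γ|)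
  have hγa := neg_abs_le γ
  have hγb := le_abs_self γ
  have hla := le_abs_self l
  have hl2 := sq_nonneg l
  have hk2 := sq_nonneg k
  have hX0 : 0 < X := by have := abs_nonneg γ; linarith
  obtain ⟨Y, hY0, hE⟩ : ∃ Y : ℚ, 0 ≤ Y ∧ Y ^ 2 = X * (X + e) * (X - d) :=
    ⟨|Y₀|, abs_nonneg _, by rw [sq_abs, hE₀]⟩
  have hYX : k * X < Y := by
    apply lt_of_pow_lt_pow_left₀ 2 hY0
    rw [hE]
    have h1 : k ^ 2 < X - d := by have := abs_nonneg γ; linarith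
    calc (k * X) ^ 2 = X * X * k ^ 2 := by ring
      _ < X * X * (X - d) := by gcongr
      _ ≤ X * (X + e) * (X - d) := by
        have : 0 ≤ X - d := by linarith
        gcongr; linarith
  have hy : 3 * X < ε * (Y - l * X / 2) := by
    have h1 : l * X ≤ |l| * X := by gcongr
    have h2 : 3 / ε * X < Y - l * X / 2 := by
      have : k * X = |l| / 2 * X + 3 / ε * X := by rw [hk]; ring
      linarith
    calc 3 * X = ε * (3 / ε * X) := by field_simp
      _ < _ := by gcongr
  have hy0 : 0 < Y - l * X / 2 := by
    have : 0 < ε * (Y - l * X / 2) := by linarith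
    exact pos_of_mul_pos_right this hε.le
  set t := (2 * (X + 2 + γ) - l ^ 2 / 2) / (Y - l * X / 2) with ht
  have htm : t * (Y - l * X / 2) = 2 * (X + 2 + γ) - l ^ 2 / 2 := by
    rw [ht]; exact div_mul_cancel₀ _ hy0.ne'
  have ht0 : 0 < t := by
    apply div_pos _ hy0
    have := abs_nonneg γ
    linarith
  have htε : t < ε := by
    rw [ht, div_lt_iff₀ hy0]
    have := abs_nonneg γ
    linarith
  have hq := quartic_of_point hγ hl hE hy0.ne' htm
  refine ⟨t, _, ht0, htε, ?_, hq⟩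
  intro h0
  rw [h0] at hq
  have ht1 : t < 1 := by
    have h1 : ε * 1 ≤ ε * (1 + 2 * |l| + |γ|) := by
      gcongr; have := abs_nonneg γ; have := abs_nonneg l; linarith
    linarith
  have h1 : |-l * t ^ 2 + γ * t + l| ≤ 2 * |l| + |γ| := by
    have e1 : |-l * t ^ 2| ≤ |l| := by
      rw [abs_mul, abs_neg, abs_of_nonneg (sq_nonneg t)]
      exact mul_le_of_le_one_right (abs_nonneg l) (pow_le_one₀ ht0.le ht1.le)
    have e2 : |γ * t| ≤ |γ| := by
      rw [abs_mul, abs_of_pos ht0]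
      exact mul_le_of_le_one_right (abs_nonneg γ) ht1.le
    calc _ ≤ |-l * t ^ 2 + γ * t| + |l| := abs_add_le _ _
      _ ≤ |-l * t ^ 2| + |γ * t| + |l| := by gcongr; exact abs_add_le _ _
      _ ≤ _ := by linarith
  have h2 : t * (2 * |l| + |γ|) < 1 := by
    refine lt_of_le_of_lt ?_ hε1
    gcongr
    linarith
  have h3 := mul_le_mul_of_nonneg_left ((neg_le_abs _).trans h1) ht0.le
  have h4 : 0 < t ^ 4 := by positivity
  linarith

end

/-- there is a finite set of nonzero polynomials in `m, u` of degree
at least 8 such that for all rational `m, u > 0` with `mu < 1` avoiding the zero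
loci of these polynomials, there are infinitely many admissible rational angle
parameters `t` solving the Heron condition, i.e. infinitely many hyperbolic
Heron triangles with rational area parameter `m` and one rational angle
parameter `u`. -/
theorem infinitely_many_heron_triangles :
    ∃ S : Finset (MvPolynomial (Fin 2) ℚ),
      (∀ f ∈ S, f ≠ 0 ∧ 8 ≤ f.totalDegree) ∧
      ∀ m u : ℚ, 0 < m → 0 < u → m * u < 1 →
        (∀ f ∈ S, MvPolynomial.eval ![m, u] f ≠ 0) →
        {t : ℚ | 0 < t ∧ t < (1 - m * u) / (m + u) ∧
          ∃ w : ℚ, w ≠ 0 ∧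
            w ^ 2 = 4 * m * (m * u ^ 2 - m - 2 * u) * (m * t ^ 2 - 2 * t - m) *
              ((m * u ^ 2 - m - 2 * u) * t ^ 2 + (2 - 4 * m * u - 2 * u ^ 2) * t
                - m * u ^ 2 + m + 2 * u)}.Infinite := by
  refine ⟨{bad (MvPolynomial.X 0) (MvPolynomial.X 1)}, ?_, ?_⟩
  · intro f hf
    rw [Finset.mem_singleton] at hf
    subst hf
    exact bad_poly
  intro m u hm hu hmu hS
  have hbad : bad m u ≠ 0 := by
    have := hS _ (Finset.mem_singleton_self _)
    rw [map_bad] at this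
    simpa using this
  have hp : 0 < m * (1 - u ^ 2) + 2 * u := by
    have : 0 < u * (1 - m * u) := mul_pos hu (by linarith)
    linarith
  set p := m * (1 - u ^ 2) + 2 * u with hpdef
  set n := 1 - u ^ 2 - 2 * m * u with hn
  have he0 : 0 < 4 * (1 + m ^ 2) / (m * p) := by positivity
  have hlarge := exists_large_E (e := 4 * (1 + m ^ 2) / (m * p)) hm hu hmu
    (by rw [← hpdef]; field_simp) hbad
  apply infinite_of_small
  · intro t ht; exact ht.1
  intro ε hε
  have hmn : 0 < (1 - m * u) / (m + u) := div_pos (by linarith) (by linarith)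
  obtain ⟨t, ω, ht0, htε, hω, hq⟩ := exists_small_t (l := 2 * (p + m * n) / (m * p))
    (γ := (4 * n - 2 * m * p) / (m * p)) he0 (mul_pos he0 (pow_pos hu 2))
    (by rw [hn]; field_simp; rw [hpdef]; ring) (by rw [hn]; field_simp; rw [hpdef]; ring) hlarge
    (lt_min hε hmn)
  -- the Heron form is `(2 m p)²` times the monic quartic
  refine ⟨t, ⟨ht0, htε.trans_le (min_le_right _ _), 2 * m * p * ω, by positivity, ?_⟩,
    htε.trans_le (min_le_left _ _)⟩
  rw [mul_pow, hq, hn]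
  field_simp
  rw [hpdef]
  ring
end

section
/- For every rational number m with 0 < m < 1, the set of rational numbers t with 0 < t < (1−m)/(m+1) for which there exists a nonzero rational number w with w² = 16m(mt²−2t−m)(t²+2mt−1) is infinite. (Equivalently, the hyperbolic congruent number problem always has infinitely many solutions: for every rational area parameter m with 0 < m < 1 there are infinitely many hyperbolic Heron triangles with a right angle and area A satisfying cos A = (1−m²)/(1+m²), sin A = 2m/(1+m²).) -/
/-!
Write `h = 1 + m²`, `k = 2mh`. The quartic is a genus-one curve whose Jacobian is the congruent
number curve `E : k y² = x³ - x`. Matching the parabola `W = m + (1 - m²) t + s t²` with the quartic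
(`w = 4 W`) and setting `s + m = -h x` leaves a quadratic equation for `t` whose discriminant is a
square exactly when `x³ - x` is `k` times a square. This gives the explicit map
`t = ((1 - m²) x + k y) / (x (h x + 2 m))` from `E` to the quartic, under which points of `E` with
`y > 0` and `x → ∞` yield solutions with `t → 0⁺`. So it suffices that `E` has rational points with
arbitrarily large `x`; nonvanishing of `w` is then automatic because the quartic is positive for
`0 < t < (1 - m) / (m + 1)`.

* The point `x = h / (2m)` lies on `E`, and repeatedly doubling it gives infinitely many points with
  `x > 1`: after one doubling `|x|₂ > 1`, and from then on each doubling multiplies `|x|₂` by `4`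
  (`infinite_ptsX`).
* Translation by the 2-torsion point `(1, 0)` acts by `x ↦ (x + 1) / (x - 1)`, so infinitely many of
  these points have `x ≥ 2`. Were all the `x`-coordinates bounded, two of them would be very close by
  the pigeonhole principle, and the difference of the two points would have a huge `x`-coordinate
  (`exists_ptsX_gt`).
-/

/-- The `x`-coordinates greater than `1` of the rational points on `k y² = x³ - x`; for `k > 0` these
are the affine points of the identity component of the real locus, except `(1, 0)`. -/
def ptsX (k : ℚ) : Set ℚ := {x | 1 < x ∧ ∃ y, k * y ^ 2 = x ^ 3 - x}

/-- The effect of doubling on the `x`-coordinate of `k y² = x³ - x`, the same for every `k`. -/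
def dblX (x : ℚ) : ℚ := (x ^ 2 + 1) ^ 2 / (4 * (x * (x ^ 2 - 1)))

lemma cubic_pos {x : ℚ} (hx : 1 < x) : 0 < x ^ 3 - x := by
  nlinarith [mul_pos (by linarith : (0:ℚ) < x) (sub_pos.2 hx)]

lemma dblX_mem {k : ℚ} (hk : 0 < k) {x : ℚ} (hx : x ∈ ptsX k) : dblX x ∈ ptsX k := by
  obtain ⟨h1, y, hy⟩ := hx
  have hc := cubic_pos h1
  have hy0 : y ≠ 0 := by
    rintro rfl
    norm_num at hy
    linarith
  have hD : dblX x = (x ^ 2 + 1) ^ 2 / (4 * (k * y ^ 2)) := by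
    rw [dblX, hy]; congr 2; ring
  have hp : 0 < 4 * (k * y ^ 2) := by positivity
  have hne : x ^ 2 - 2 * x - 1 ≠ 0 := by
    intro h
    have h2 : IsSquare (2 : ℚ) := ⟨x - 1, by linear_combination -h⟩
    have h3 : IsSquare (2 : ℕ) := by
      have := Rat.isSquare_natCast_iff (n := 2)
      exact this.1 (by exact_mod_cast h2)
    exact Nat.prime_two.prime.not_isSquare h3
  refine ⟨?_, (x ^ 2 + 1) * (x ^ 2 - 2 * x - 1) * (x ^ 2 + 2 * x - 1) / (8 * k ^ 2 * y ^ 3), ?_⟩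
  · rw [hD, lt_div_iff₀ hp, hy]
    have : 0 < (x ^ 2 - 2 * x - 1) ^ 2 := by positivity
    nlinarith
  · -- each of `X`, `X - 1`, `X + 1` is a square divided by `4 k y²`, where `X` is the doubled point
    have e1 : dblX x - 1 = (x ^ 2 - 2 * x - 1) ^ 2 / (4 * (k * y ^ 2)) := by
      rw [hD, div_sub_one hp.ne', hy]; congr 1; ring
    have e2 : dblX x + 1 = (x ^ 2 + 2 * x - 1) ^ 2 / (4 * (k * y ^ 2)) := by
      rw [hD, div_add_one hp.ne', hy]; congr 1; ring
    have e3 : dblX x ^ 3 - dblX x = dblX x * (dblX x - 1) * (dblX x + 1) := by ring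
    rw [e3, e1, e2, hD]
    field_simp
    ring

lemma norm_two : padicNorm 2 (2 : ℚ) = 1 / 2 := by
  have := padicNorm.padicNorm_p (p := 2) (by norm_num)
  norm_num at this ⊢
  exact this

lemma norm_dblX (x : ℚ) : padicNorm 2 (dblX x) =
    4 * padicNorm 2 (x ^ 2 + 1) ^ 2 / (padicNorm 2 x * padicNorm 2 (x ^ 2 - 1)) := by
  have h4 : padicNorm 2 (4 : ℚ) = 1 / 4 := by
    rw [show (4 : ℚ) = 2 * 2 by norm_num, padicNorm.mul, norm_two]; norm_num
  rw [dblX, padicNorm.div, padicNorm.mul, padicNorm.mul, h4, pow_two (x ^ 2 + 1), padicNorm.mul]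
  rw [div_mul_eq_div_div, one_div, div_inv_eq_mul, ← pow_two]
  congr 1; ring

lemma norm_sq_eq (x : ℚ) : padicNorm 2 (x ^ 2) = padicNorm 2 x ^ 2 := by
  rw [pow_two, padicNorm.mul, pow_two]

lemma norm_sq_add {x : ℚ} (hx : padicNorm 2 x ≠ 1) :
    padicNorm 2 (x ^ 2 + 1) = max (padicNorm 2 x ^ 2) 1 ∧
    padicNorm 2 (x ^ 2 - 1) = max (padicNorm 2 x ^ 2) 1 := by
  have hne : padicNorm 2 (x ^ 2) ≠ 1 := by
    rw [norm_sq_eq]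
    intro h
    exact hx ((pow_eq_one_iff_of_nonneg (padicNorm.nonneg x) two_ne_zero).1 h)
  constructor
  · rw [padicNorm.add_eq_max_of_ne (by simpa using hne), norm_sq_eq]; simp
  · rw [sub_eq_add_neg, padicNorm.add_eq_max_of_ne (by simpa using hne), norm_sq_eq]; simp

lemma norm_dblX_of_gt {x : ℚ} (hx : 1 < padicNorm 2 x) :
    padicNorm 2 (dblX x) = 4 * padicNorm 2 x := by
  obtain ⟨h1, h2⟩ := norm_sq_add hx.ne'
  rw [norm_dblX, h1, h2, max_eq_left (by nlinarith)]
  have : padicNorm 2 x ≠ 0 := by linarith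
  field_simp

/-- A 2-adic unit in `ℚ` is congruent to `1` modulo `2`. -/
lemma norm_sub_one {x : ℚ} (hx : padicNorm 2 x = 1) : padicNorm 2 (x - 1) ≤ 1 / 2 := by
  have hd0 : (x.den : ℚ) ≠ 0 := by exact_mod_cast x.den_nz
  have hxe : x * ((x.den : ℤ) : ℚ) = ((x.num : ℤ) : ℚ) := by exact_mod_cast Rat.mul_den_eq_num x
  have hn : padicNorm 2 ((x.num : ℤ) : ℚ) = padicNorm 2 ((x.den : ℤ) : ℚ) := by
    rw [← hxe, padicNorm.mul, hx, one_mul]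
  -- numerator and denominator have the same 2-adic norm, so being coprime they are both odd
  have hden : ¬ (2 : ℤ) ∣ (x.den : ℤ) := by
    intro h
    have h1 := (padicNorm.int_lt_one_iff (p := 2) (x.den : ℤ)).2 (by exact_mod_cast h)
    rw [← hn] at h1
    have h2 := (padicNorm.int_lt_one_iff (p := 2) x.num).1 h1
    have h3 : 2 ∣ x.num.natAbs := by omega
    have h4 : 2 ∣ x.den := by exact_mod_cast h
    have := Nat.dvd_gcd h3 h4
    rw [x.reduced] at this
    omega
  have hd1 : padicNorm 2 ((x.den : ℤ) : ℚ) = 1 :=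
    (padicNorm.int_eq_one_iff (p := 2) (x.den : ℤ)).2 (by exact_mod_cast hden)
  have hnum : ¬ (2 : ℤ) ∣ x.num := by
    have := (padicNorm.int_eq_one_iff (p := 2) x.num).1 (hn.trans hd1)
    exact_mod_cast this
  have h5 : (((2 : ℕ) ^ 1 : ℕ) : ℤ) ∣ x.num - x.den := by
    push_cast
    omega
  have h6 := (padicNorm.dvd_iff_norm_le (p := 2)).1 h5
  have h7 : ((x.num - x.den : ℤ) : ℚ) = (x - 1) * ((x.den : ℤ) : ℚ) := by
    rw [sub_mul, hxe]; push_cast; ring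
  rw [h7, padicNorm.mul, hd1, mul_one] at h6
  norm_num at h6 ⊢
  exact h6

lemma one_lt_norm_dblX {x : ℚ} (hx : 1 < x) : 1 < padicNorm 2 (dblX x) := by
  have hx0 : padicNorm 2 x ≠ 0 := padicNorm.nonzero (by linarith)
  have hpos : 0 < padicNorm 2 x := lt_of_le_of_ne (padicNorm.nonneg x) hx0.symm
  rcases lt_trichotomy (padicNorm 2 x) 1 with h | h | h
  · obtain ⟨h1, h2⟩ := norm_sq_add h.ne
    rw [norm_dblX, h1, h2, max_eq_right (by nlinarith), lt_div_iff₀ (by linarith)]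
    linarith
  · -- here `x² + 1` has norm exactly `1/2`, while `x² - 1` has norm at most `1/4`
    have h1 := norm_sub_one h
    have h2 : padicNorm 2 (x + 1) ≤ 1 / 2 := by
      rw [show x + 1 = (x - 1) + 2 by ring]
      exact padicNorm.nonarchimedean.trans (max_le h1 norm_two.le)
    have h3 : padicNorm 2 (x ^ 2 - 1) ≤ 1 / 4 := by
      rw [show x ^ 2 - 1 = (x - 1) * (x + 1) by ring, padicNorm.mul]
      nlinarith [padicNorm.nonneg (p := 2) (x - 1), padicNorm.nonneg (p := 2) (x + 1)]
    have h4 : padicNorm 2 (x ^ 2 + 1) = 1 / 2 := by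
      rw [show x ^ 2 + 1 = (x ^ 2 - 1) + 2 by ring, padicNorm.add_eq_max_of_ne, norm_two]
      · exact max_eq_right (by linarith)
      · rw [norm_two]; intro h; linarith
    have h5 : padicNorm 2 (x ^ 2 - 1) ≠ 0 := padicNorm.nonzero (by nlinarith)
    have h6 : 0 < padicNorm 2 (x ^ 2 - 1) := lt_of_le_of_ne (padicNorm.nonneg _) h5.symm
    rw [norm_dblX, h4, h, lt_div_iff₀ (by linarith)]
    linarith
  · rw [norm_dblX_of_gt h]; linarith

/-- One non-torsion point suffices: every rational point of `k y² = x³ - x` with `x > 1` has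
infinite order, because its iterated doubles have strictly increasing 2-adic norm. -/
lemma infinite_ptsX {k : ℚ} (hk : 0 < k) {x₀ : ℚ} (hx : x₀ ∈ ptsX k) : (ptsX k).Infinite := by
  have key : ∀ j : ℕ, dblX^[j] (dblX x₀) ∈ ptsX k ∧ 1 < padicNorm 2 (dblX^[j] (dblX x₀)) := by
    intro j
    induction j with
    | zero => exact ⟨dblX_mem hk hx, one_lt_norm_dblX hx.1⟩
    | succ j ih =>
      rw [Function.iterate_succ_apply']
      exact ⟨dblX_mem hk ih.1, one_lt_norm_dblX ih.1.1⟩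
  have mono : StrictMono fun j : ℕ => padicNorm 2 (dblX^[j] (dblX x₀)) := by
    apply strictMono_nat_of_lt_succ
    intro j
    rw [Function.iterate_succ_apply', norm_dblX_of_gt (key j).2]
    linarith [(key j).2]
  refine Set.infinite_of_injective_forall_mem (f := fun j : ℕ => dblX^[j] (dblX x₀)) ?_
    (fun j => (key j).1)
  intro i j hij
  exact mono.injective (congrArg (padicNorm 2) hij)

/-- Translation by the 2-torsion point `(1, 0)`. -/
lemma translate_mem {k x : ℚ} (hx : x ∈ ptsX k) : (x + 1) / (x - 1) ∈ ptsX k := by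
  obtain ⟨h1, y, hy⟩ := hx
  have h2 : 0 < x - 1 := by linarith
  refine ⟨by rw [lt_div_iff₀ h2]; linarith, 2 * y / (x - 1) ^ 2, ?_⟩
  field_simp
  linear_combination 4 * hy

lemma infinite_ptsX_ge {k : ℚ} (h : (ptsX k).Infinite) : (ptsX k ∩ {x | 2 ≤ x}).Infinite := by
  intro hfin
  apply h
  have : (Set.image (fun x : ℚ => (x + 1) / (x - 1)) (ptsX k ∩ {x | x < 2})).Finite := by
    refine hfin.subset ?_
    rintro _ ⟨x, ⟨hx, hx2⟩, rfl⟩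
    refine ⟨translate_mem hx, ?_⟩
    have := hx.1
    simp only [Set.mem_ofPred_eq] at hx2 ⊢
    rw [le_div_iff₀ (by linarith)]
    linarith
  have h2 := this.of_finite_image (by
    rintro x ⟨hx, -⟩ y ⟨hy, -⟩ hxy
    have hx1 := hx.1
    have hy1 := hy.1
    simp only at hxy
    rw [div_eq_div_iff (by linarith) (by linarith)] at hxy
    linarith)
  refine (h2.union hfin).subset ?_
  intro x hx
  rcases lt_or_ge x 2 with h | h
  · exact Or.inl ⟨hx, h⟩
  · exact Or.inr ⟨hx, h⟩

/-- The chord construction for the difference of `(x₁, y₁)` and `(x₂, y₂)`, i.e. for the line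
through `(x₁, y₁)` and `(x₂, -y₂)`. -/
lemma chord {k x₁ x₂ y₁ y₂ : ℚ} (hne : x₁ ≠ x₂) (h₁ : k * y₁ ^ 2 = x₁ ^ 3 - x₁)
    (h₂ : k * y₂ ^ 2 = x₂ ^ 3 - x₂) :
    ∃ y, k * y ^ 2 = (k * ((y₁ + y₂) / (x₁ - x₂)) ^ 2 - x₁ - x₂) ^ 3
      - (k * ((y₁ + y₂) / (x₁ - x₂)) ^ 2 - x₁ - x₂) := by
  have hd : x₁ - x₂ ≠ 0 := sub_ne_zero.2 hne
  obtain ⟨l, hl⟩ : ∃ l, l = (y₁ + y₂) / (x₁ - x₂) := ⟨_, rfl⟩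
  rw [← hl]
  have hl' : l * (x₁ - x₂) = y₁ + y₂ := by rw [hl]; field_simp
  obtain ⟨x₃, h₃⟩ : ∃ x₃, x₃ = k * l ^ 2 - x₁ - x₂ := ⟨_, rfl⟩
  rw [← h₃]
  have h4 : x₁ ^ 2 + x₁ * x₂ + x₂ ^ 2 - 1 - k * l * (2 * y₁ + l * (x₂ - x₁)) = 0 := by
    apply mul_left_cancel₀ hd
    have h5 : y₂ = l * (x₁ - x₂) - y₁ := by linear_combination -hl'
    rw [h5] at h₂
    linear_combination h₂ - h₁
  refine ⟨y₁ + l * (x₃ - x₁), ?_⟩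
  linear_combination h₁ - (x₃ - x₁) * h4 - (x₃ - x₁) * (x₃ - x₂) * h₃

/-- Close points have a difference near the point at infinity. -/
lemma exists_ptsX_gt {k : ℚ} (hk : 0 < k) (h : (ptsX k).Infinite) (M : ℚ) :
    ∃ x ∈ ptsX k, M < x := by
  by_contra! hM
  have hinf := infinite_ptsX_ge h
  obtain ⟨N, hN⟩ := exists_nat_gt (max M 1)
  have hNM : M < N := lt_of_le_of_lt (le_max_left _ _) hN
  have hN1 : (1 : ℚ) < N := lt_of_le_of_lt (le_max_right _ _) hN
  -- the integers `⌊N x⌋` lie in a bounded interval, so two distinct `x` are within `1 / N`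
  have hmaps : Set.MapsTo (fun x : ℚ => ⌊x * N⌋) (ptsX k ∩ {x | 2 ≤ x})
      (Set.Icc 0 ⌊M * N⌋) := by
    rintro x ⟨hx, hx2⟩
    have := hx.1
    refine ⟨Int.floor_nonneg.2 (by nlinarith), Int.floor_le_floor ?_⟩
    exact mul_le_mul_of_nonneg_right (hM x hx) (by linarith)
  obtain ⟨x₁, ⟨hx₁, h21⟩, x₂, ⟨hx₂, -⟩, hne, hfl⟩ :=
    hinf.exists_ne_map_eq_of_mapsTo hmaps (Set.finite_Icc _ _)
  have hclose : |x₁ * N - x₂ * N| < 1 := Int.abs_sub_lt_one_of_floor_eq_floor hfl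
  obtain ⟨-, z₁, hz₁⟩ := id hx₁
  obtain ⟨-, z₂, hz₂⟩ := id hx₂
  rw [← sq_abs z₁] at hz₁
  rw [← sq_abs z₂] at hz₂
  obtain ⟨w, hw⟩ := chord hne hz₁ hz₂
  obtain ⟨X, hX⟩ : ∃ X, X = k * ((|z₁| + |z₂|) / (x₁ - x₂)) ^ 2 - x₁ - x₂ := ⟨_, rfl⟩
  rw [← hX] at hw
  have hbig : M + N < X := by
    have hd : x₁ - x₂ ≠ 0 := sub_ne_zero.2 hne
    have hd2 : 0 < (x₁ - x₂) ^ 2 := by positivity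
    have hsmall : (x₁ - x₂) ^ 2 * (N : ℚ) ^ 2 < 1 := by
      have := sq_lt_one_iff_abs_lt_one (x₁ * N - x₂ * N) |>.2 hclose
      linear_combination this
    have hnum : 6 ≤ k * (|z₁| + |z₂|) ^ 2 := by
      have e1 : 6 ≤ k * |z₁| ^ 2 := by
        rw [hz₁]
        simp only [Set.mem_ofPred_eq] at h21
        nlinarith [mul_nonneg (sub_nonneg.2 h21) (sub_nonneg.2 h21)]
      have e2 : |z₁| ^ 2 ≤ (|z₁| + |z₂|) ^ 2 :=
        pow_le_pow_left₀ (abs_nonneg _) (by linarith [abs_nonneg z₂]) 2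
      exact e1.trans (mul_le_mul_of_nonneg_left e2 hk.le)
    have hq : 6 * (N : ℚ) ^ 2 ≤ k * ((|z₁| + |z₂|) / (x₁ - x₂)) ^ 2 := by
      rw [div_pow, ← mul_div_assoc, le_div_iff₀ hd2]
      nlinarith
    have := hM x₁ hx₁
    have := hM x₂ hx₂
    rw [hX]
    nlinarith
  have hM1 : 1 < M := lt_of_lt_of_le hx₁.1 (hM x₁ hx₁)
  have := hM X ⟨by linarith, w, hw⟩
  linarith

/-- The map from `k y² = x³ - x` with `k = 2 m (1 + m²)` to the quartic. -/
lemma quartic_of_cubic {m x y t : ℚ}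
    (hD : x * ((1 + m ^ 2) * x + 2 * m) ≠ 0)
    (hy : 2 * m * (1 + m ^ 2) * y ^ 2 = x ^ 3 - x)
    (ht : t * (x * ((1 + m ^ 2) * x + 2 * m)) = (1 - m ^ 2) * x + 2 * m * (1 + m ^ 2) * y) :
    (4 * (m + (1 - m ^ 2) * t - ((1 + m ^ 2) * x + m) * t ^ 2)) ^ 2 =
      16 * m * (m * t ^ 2 - 2 * t - m) * (t ^ 2 + 2 * m * t - 1) := by
  have hq : x * ((1 + m ^ 2) * x + 2 * m) * t ^ 2 - 2 * (1 - m ^ 2) * x * t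
      + (1 + m ^ 2) - 2 * m * x = 0 := by
    apply mul_left_cancel₀ hD
    linear_combination (t * (x * ((1 + m ^ 2) * x + 2 * m)) - (1 - m ^ 2) * x
      + 2 * m * (1 + m ^ 2) * y) * ht + 2 * m * (1 + m ^ 2) * hy
  linear_combination 16 * (1 + m ^ 2) * t ^ 2 * hq

lemma quartic_pos {m t : ℚ} (hm0 : 0 < m) (hm1 : m < 1) (ht0 : 0 < t)
    (ht : t < (1 - m) / (m + 1)) :
    0 < 16 * m * (m * t ^ 2 - 2 * t - m) * (t ^ 2 + 2 * m * t - 1) := by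
  rw [lt_div_iff₀ (by linarith)] at ht
  have h1 : t < 1 := by nlinarith
  have h2 : m * t ^ 2 - 2 * t - m < 0 := by nlinarith [mul_pos hm0 ht0]
  have h3 : t ^ 2 + 2 * m * t - 1 < 0 := by nlinarith [mul_pos hm0 ht0]
  have := mul_pos_of_neg_of_neg h2 h3
  rw [mul_assoc]
  positivity

lemma exists_small {m : ℚ} (hm0 : 0 < m) (hm1 : m < 1) {e : ℚ} (he : 0 < e)
    (hec : e ≤ (1 - m) / (m + 1)) :
    ∃ t : ℚ, 0 < t ∧ t < e ∧ t < (1 - m) / (m + 1) ∧ ∃ w : ℚ, w ≠ 0 ∧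
        w ^ 2 = 16 * m * (m * t ^ 2 - 2 * t - m) * (t ^ 2 + 2 * m * t - 1) := by
  have hk : 0 < 2 * m * (1 + m ^ 2) := by positivity
  -- the point of the cubic that maps to `t = 0`, `w = 4 m`
  have hx₀ : (1 + m ^ 2) / (2 * m) ∈ ptsX (2 * m * (1 + m ^ 2)) := by
    refine ⟨?_, (1 - m ^ 2) / (4 * m ^ 2), ?_⟩
    · rw [lt_div_iff₀ (by linarith)]
      nlinarith [mul_pos (sub_pos.2 hm1) (sub_pos.2 hm1)]
    · field_simp
      ring
  obtain ⟨x, ⟨hx1, z, hz⟩, hxM⟩ :=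
    exists_ptsX_gt hk (infinite_ptsX hk hx₀) (max (16 / e ^ 2) (2 / e))
  have hxa : 16 < x * e ^ 2 :=
    (div_lt_iff₀ (by positivity)).1 (lt_of_le_of_lt (le_max_left _ _) hxM)
  have hxb : 2 < x * e := (div_lt_iff₀ he).1 (lt_of_le_of_lt (le_max_right _ _) hxM)
  have hx0 : 0 < x := by linarith
  have hz0 : 0 < |z| := by
    rw [abs_pos]
    rintro rfl
    have := cubic_pos hx1
    norm_num at hz
    linarith
  rw [← sq_abs z] at hz
  set y := |z|
  have hm2 : 0 < 1 - m ^ 2 := by nlinarith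
  have hden : 0 < x * ((1 + m ^ 2) * x + 2 * m) := by positivity
  obtain ⟨t, ht⟩ : ∃ t, t = ((1 - m ^ 2) * x + 2 * m * (1 + m ^ 2) * y) /
      (x * ((1 + m ^ 2) * x + 2 * m)) := ⟨_, rfl⟩
  have ht0 : 0 < t := by rw [ht]; positivity
  have hte : t < e := by
    rw [ht, div_lt_iff₀ hden]
    have b1 : (1 - m ^ 2) * x ≤ e / 2 * x ^ 2 := by
      have : (1 - m ^ 2) * x ≤ 1 * x := mul_le_mul_of_nonneg_right (by nlinarith) hx0.le
      nlinarith
    have b2 : 2 * m * (1 + m ^ 2) * y ≤ e / 2 * x ^ 2 := by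
      have c1 : (2 * m * (1 + m ^ 2) * y) ^ 2 = 2 * m * (1 + m ^ 2) * (x ^ 3 - x) := by
        rw [← hz]; ring
      have c2 : 2 * m * (1 + m ^ 2) ≤ 4 := by nlinarith
      have c3 : 2 * m * (1 + m ^ 2) * (x ^ 3 - x) ≤ 4 * (x ^ 3 - x) :=
        mul_le_mul_of_nonneg_right c2 (cubic_pos hx1).le
      have c4 : 16 * x ^ 3 ≤ x * e ^ 2 * x ^ 3 :=
        mul_le_mul_of_nonneg_right hxa.le (by positivity)
      refine (sq_le_sq₀ (by positivity) (by positivity)).1 ?_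
      rw [c1]
      nlinarith
    have b3 : 0 < e * (m ^ 2 * x ^ 2 + 2 * m * x) := by positivity
    nlinarith
  have htc := hte.trans_le hec
  have hw := quartic_of_cubic hden.ne' hz (t := t) (by rw [ht]; exact div_mul_cancel₀ _ hden.ne')
  refine ⟨t, ht0, hte, htc, _, ?_, hw⟩
  intro h0
  have := quartic_pos hm0 hm1 ht0 htc
  rw [← hw, h0] at this
  norm_num at this

/-- the hyperbolic congruent number problem always has infinitely
many solutions: for every rational area parameter `m` with `0 < m < 1` there are
infinitely many admissible rational angle parameters `t` solving the Heron
condition specialized at the right angle `u = 1`. -/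
theorem hyperbolic_congruent_number (m : ℚ) (hm0 : 0 < m) (hm1 : m < 1) :
    {t : ℚ | 0 < t ∧ t < (1 - m) / (m + 1) ∧
      ∃ w : ℚ, w ≠ 0 ∧
        w ^ 2 = 16 * m * (m * t ^ 2 - 2 * t - m) * (t ^ 2 + 2 * m * t - 1)}.Infinite := by
  have hc : 0 < (1 - m) / (m + 1) := div_pos (by linarith) (by linarith)
  intro hfin
  -- a finite solution set would have a least element, but there are arbitrarily small solutions
  obtain ⟨t₀, h0, -, hc₀, hw₀⟩ := exists_small hm0 hm1 hc le_rfl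
  obtain ⟨t, ⟨ht0, htc, -⟩, hmin⟩ := Set.exists_min_image _ id hfin ⟨t₀, h0, hc₀, hw₀⟩
  obtain ⟨s, hs0, hst, hsc, hw⟩ := exists_small hm0 hm1 ht0 htc.le
  have := hmin s ⟨hs0, hsc, hw⟩
  simp only [id] at this
  linarith
end

section
/- Let v, w be rational numbers with vw ≠ 0 and let x, y be rational numbers with y² = x(x−(v−v⁻¹)²)(x−(w−w⁻¹)²), such that x + (v²−1)(w²−1) ≠ 0 and v²w²x + (v²−1)(w²−1) ≠ 0. Define Δ = (v²−1)(w²−1)(v²w²−1)y / (2(x+(v²−1)(w²−1))(v²w²x+(v²−1)(w²−1))) and u = (v²w²x+(v²−1)(w²−1)) / (vw(x+(v²−1)(w²−1))). Then 4u²v²w²Δ² = (uv−w)(uw−v)(vw−u)(uvw−1), i.e. (u,Δ) satisfies the side-length Heron condition. -/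
/-!
Write `D = x + (v² - 1)(w² - 1)` and `N = v²w²x + (v² - 1)(w² - 1)`, so that `u = N / (vwD)`.
Each factor of the right-hand side of the Heron condition splits over the denominator `D`; for
instance `uv - w = (v² - 1)(w²x - (w² - 1)²) / (wD)` and `uvw - 1 = (v²w² - 1)x / D`. Their product
is `((v² - 1)(w² - 1)(v²w² - 1))² / D⁴` times the cubic defining the curve, that is, times `y²`.
This is the left-hand side, because `4u²v²w²Δ² = (2NΔ / D)²`, where the factor `N` cancels.
-/

/-- a rational point `(x, y)` on the side-parametrized Heron curve
`E_{v,w} : y² = x(x−(v−v⁻¹)²)(x−(w−w⁻¹)²)` for which the inverse change of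
variables is defined yields a rational solution `(u, Δ)` of the side-length
Heron condition. -/
theorem curve_to_heron_side (v w x y : ℚ) (hvw : v * w ≠ 0)
    (hE : y ^ 2 = x * (x - (v - v⁻¹) ^ 2) * (x - (w - w⁻¹) ^ 2))
    (h1 : x + (v ^ 2 - 1) * (w ^ 2 - 1) ≠ 0)
    (h2 : v ^ 2 * w ^ 2 * x + (v ^ 2 - 1) * (w ^ 2 - 1) ≠ 0)
    (Δ u : ℚ)
    (hΔ : Δ = (v ^ 2 - 1) * (w ^ 2 - 1) * (v ^ 2 * w ^ 2 - 1) * y /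
      (2 * (x + (v ^ 2 - 1) * (w ^ 2 - 1)) *
        (v ^ 2 * w ^ 2 * x + (v ^ 2 - 1) * (w ^ 2 - 1))))
    (hu : u = (v ^ 2 * w ^ 2 * x + (v ^ 2 - 1) * (w ^ 2 - 1)) /
      (v * w * (x + (v ^ 2 - 1) * (w ^ 2 - 1)))) :
    4 * u ^ 2 * v ^ 2 * w ^ 2 * Δ ^ 2 =
      (u * v - w) * (u * w - v) * (v * w - u) * (u * v * w - 1) := by
  have hv : v ≠ 0 := left_ne_zero_of_mul hvw
  have hw : w ≠ 0 := right_ne_zero_of_mul hvw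
  -- The equation of the curve with denominators cleared.
  have hE' : v ^ 2 * w ^ 2 * y ^ 2 =
      x * (v ^ 2 * x - (v ^ 2 - 1) ^ 2) * (w ^ 2 * x - (w ^ 2 - 1) ^ 2) := by
    rw [hE]
    field_simp
  obtain ⟨D, hD⟩ : ∃ D, D = x + (v ^ 2 - 1) * (w ^ 2 - 1) := ⟨_, rfl⟩
  obtain ⟨N, hN⟩ : ∃ N, N = v ^ 2 * w ^ 2 * x + (v ^ 2 - 1) * (w ^ 2 - 1) := ⟨_, rfl⟩
  rw [← hD] at h1 hΔ hu
  rw [← hN] at h2 hΔ hu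
  have f1 : u * v - w = (v ^ 2 - 1) * (w ^ 2 * x - (w ^ 2 - 1) ^ 2) / (w * D) := by
    rw [hu]
    field_simp
    rw [hN, hD]
    ring
  have f2 : u * w - v = (w ^ 2 - 1) * (v ^ 2 * x - (v ^ 2 - 1) ^ 2) / (v * D) := by
    rw [hu]
    field_simp
    rw [hN, hD]
    ring
  have f3 : v * w - u =
      (v ^ 2 - 1) * (w ^ 2 - 1) * (v ^ 2 * w ^ 2 - 1) / (v * w * D) := by
    rw [hu]
    field_simp
    rw [hN, hD]
    ring
  have f4 : u * v * w - 1 = (v ^ 2 * w ^ 2 - 1) * x / D := by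
    rw [hu]
    field_simp
    rw [hN, hD]
    ring
  have hL : 4 * u ^ 2 * v ^ 2 * w ^ 2 * Δ ^ 2 =
      ((v ^ 2 - 1) * (w ^ 2 - 1) * (v ^ 2 * w ^ 2 - 1)) ^ 2 *
        (v ^ 2 * w ^ 2 * y ^ 2) / (v ^ 2 * w ^ 2 * D ^ 4) := by
    rw [hu, hΔ]
    field_simp
    ring
  rw [hL, hE', f1, f2, f3, f4, div_mul_div_comm, div_mul_div_comm, div_mul_div_comm]
  congr 1 <;> ring
end

section
/- The rational points on the elliptic curve y² = x³ + 10x² + 9x are exactly the following: for all rational numbers x, y with y² = x³ + 10x² + 9x, the pair (x,y) is one of (0,0), (−1,0), (−9,0), (−3,6), (−3,−6), (3,12), (3,−12). -/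
/-!
For `x ≠ 0` put `t = y / (2x)`. Then `t² - 1 = (x + 3)² / (4x)` and `t² - 4 = (x - 3)² / (4x)`, so
`(t² - 1)(t² - 4)` is a rational square. (This is the 2-isogeny to `Y² = X(X - 1)(X - 4)`,
`X = t²`, whose rational points all have a square as abscissa.) With `t = p / q` in lowest terms it
remains to see that `(p² - q²)(p² - 4q²) = z²` has no coprime integer solution with `p q z ≠ 0`:
then `t = 0`, `t² = 1` or `t² = 4`, which gives `x ∈ {-1, -9}`, `x = -3`, `x = 3`.

The quartic is treated by infinite descent on `p² + q²`. The two factors have greatest common divisor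
`1` or `3`, so `p² - q² = d u²`, `p² - 4q² = d v²` with `d ∈ {1, -1, 3, -3}` (`exists_twist`). The
cases `d ≠ 1` are carried to `d = 1` by translation by a point of order two:
`t ↦ 2/t`, `t ↦ 2u/v` and `t ↦ v/u` for `d = -1, 3, -3`. For `d = 1` both `q² + u² = p²` and
`(2q)² + v² = p²` are primitive Pythagorean triples, hence `p = m² + n² = k² + l²` and
`q = 2mn = kl`. If `k = 2k'`, then `k' l = m n` factors as `k' = AB`, `l = CD`, `m = AC`, `n = BD`
with `B`, `C` coprime, and `k² + l² = m² + n²` becomes `A²(4B² - C²) = D²(B² - C²)`. So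
`(C, B)` is again a solution (`descent_step`), and it is smaller because `q = 2ABCD`.
-/

/-- Coprime integer solutions of `(p² - q²)(p² - 4q²) = z²` with `p q z ≠ 0`. The excluded ones come
from the points of finite order. -/
def QuarticSol (p q : ℤ) : Prop :=
  IsCoprime p q ∧ p ≠ 0 ∧ q ≠ 0 ∧ ∃ z : ℤ, z ≠ 0 ∧ (p ^ 2 - q ^ 2) * (p ^ 2 - 4 * q ^ 2) = z ^ 2

/-- The part of the descent following the parametrization of the two Pythagorean triples, with
`k = 2k'`: two representations `p = m² + n² = (2k')² + l²` with `k' l = m n` give a new solution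
bounded by `|m n|`. The variable `k` of the lemma is half of that `k`. -/
lemma descent_of_param {k l m n : ℤ} (h : k * l = m * n) (h0 : m * n ≠ 0)
    (hs : (2 * k) ^ 2 + l ^ 2 = m ^ 2 + n ^ 2) :
    ∃ C B : ℤ, QuarticSol C B ∧ B ^ 2 ≤ (m * n) ^ 2 ∧ C ^ 2 ≤ (m * n) ^ 2 := by
  have hm : m ≠ 0 := left_ne_zero_of_mul h0
  have hg : 0 < Int.gcd k m := Int.gcd_pos_of_ne_zero_right _ hm
  obtain ⟨B, C, hBC, hk, hm'⟩ := Int.exists_gcd_one hg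
  set A : ℤ := (Int.gcd k m : ℤ) with hA
  have hA0 : A ≠ 0 := by positivity
  have hcop : IsCoprime B C := Int.isCoprime_iff_gcd_eq_one.mpr hBC
  have e1 : B * l = C * n := by
    apply mul_left_cancel₀ hA0
    rw [hk, hm'] at h
    linear_combination h
  obtain ⟨D, rfl⟩ : C ∣ l := hcop.symm.dvd_of_dvd_mul_left ⟨n, e1⟩
  have hC0 : C ≠ 0 := by rintro rfl; simp at hm'; exact hm hm'
  have e2 : n = B * D := by
    apply mul_left_cancel₀ hC0
    linear_combination -e1
  have hmn : m * n = A * B * C * D := by rw [hm', e2]; ring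
  have hB0 : B ≠ 0 := by rintro rfl; simp [hmn] at h0
  have hD0 : D ≠ 0 := by rintro rfl; simp [hmn] at h0
  have key : A ^ 2 * (4 * B ^ 2 - C ^ 2) = D ^ 2 * (B ^ 2 - C ^ 2) := by
    rw [hk, hm', e2] at hs
    linear_combination hs
  have hsq : (D * (B ^ 2 - C ^ 2)) ^ 2 = A ^ 2 * ((C ^ 2 - B ^ 2) * (C ^ 2 - 4 * B ^ 2)) := by
    linear_combination -(B ^ 2 - C ^ 2) * key
  obtain ⟨S, hS⟩ : A ∣ D * (B ^ 2 - C ^ 2) :=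
    (Int.pow_dvd_pow_iff two_ne_zero).mp ⟨_, hsq⟩
  have hBC2 : B ^ 2 - C ^ 2 ≠ 0 := by
    intro h1
    have h2 : A ^ 2 * (3 * B ^ 2) = 0 := by linear_combination key + (D ^ 2 - A ^ 2) * h1
    simp [hA0, hB0] at h2
  have hS0 : S ≠ 0 := by
    rintro rfl
    simp [hD0, hBC2] at hS
  refine ⟨C, B, ⟨hcop.symm, hC0, hB0, S, hS0, ?_⟩, ?_, ?_⟩
  · apply mul_left_cancel₀ (pow_ne_zero 2 hA0)
    rw [← hsq, hS]; ring
  · exact Int.le_of_dvd (by positivity)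
      (pow_dvd_pow_of_dvd ⟨A * C * D, by rw [hmn]; ring⟩ 2)
  · exact Int.le_of_dvd (by positivity)
      (pow_dvd_pow_of_dvd ⟨A * B * D, by rw [hmn]; ring⟩ 2)

/-- The descent for `d = 1`, with `p` normalized to be positive. -/
lemma descent_step_pos {p q u v : ℤ} (hp : 0 < p) (hpq : IsCoprime p q) (hq : q ≠ 0)
    (hu : p ^ 2 - q ^ 2 = u ^ 2) (hv : p ^ 2 - 4 * q ^ 2 = v ^ 2) :
    ∃ C B : ℤ, QuarticSol C B ∧ 4 * B ^ 2 ≤ q ^ 2 ∧ 4 * C ^ 2 ≤ q ^ 2 := by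
  have hodd : p % 2 = 1 ∧ q % 2 = 0 ∧ u % 2 = 1 ∧ v % 2 = 1 := by
    have hne : ¬ (p % 2 = 0 ∧ q % 2 = 0) := by
      rintro ⟨h1, h2⟩
      have := hpq.isUnit_of_dvd' (Int.dvd_of_emod_eq_zero h1) (Int.dvd_of_emod_eq_zero h2)
      exact absurd this (by decide)
    -- The two equations modulo 8 leave only the stated parities.
    have h1 := congrArg (· % 8) hu
    have h2 := congrArg (· % 8) hv
    have sq8 : ∀ a : ℤ, (a % 4 = 0 ∧ a ^ 2 % 8 = 0) ∨ (a % 4 = 2 ∧ a ^ 2 % 8 = 4) ∨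
        (a % 2 = 1 ∧ a ^ 2 % 8 = 1) := by
      intro a
      have : a % 8 = 0 ∨ a % 8 = 1 ∨ a % 8 = 2 ∨ a % 8 = 3 ∨ a % 8 = 4 ∨ a % 8 = 5 ∨
        a % 8 = 6 ∨ a % 8 = 7 := by omega
      rcases this with h | h | h | h | h | h | h | h <;> simp [pow_two, Int.mul_emod, h] <;> omega
    have := sq8 p
    have := sq8 q
    have := sq8 u
    have := sq8 v
    omega
  obtain ⟨-, -, hu2, hv2⟩ := hodd
  have cop : ∀ a c : ℤ, p ^ 2 - c * q ^ 2 = a ^ 2 → IsCoprime a q := by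
    intro a c h
    obtain ⟨s, t, hst⟩ := hpq.pow (m := 2) (n := 2)
    rw [← IsCoprime.pow_iff two_pos two_pos]
    exact ⟨s, s * c + t, by linear_combination hst - s * h⟩
  have hv2c : IsCoprime v 2 := ⟨1, -(v / 2), by omega⟩
  have tu : PythagoreanTriple u q p := by
    unfold PythagoreanTriple; linear_combination -hu
  have tv : PythagoreanTriple v (2 * q) p := by
    unfold PythagoreanTriple; linear_combination -hv
  obtain ⟨m, n, -, hq1, hp1, -⟩ := tu.coprime_classification'
    (Int.isCoprime_iff_gcd_eq_one.mp (cop u 1 (by linear_combination hu))) hu2 hp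
  obtain ⟨k, l, -, hq2, hp2, -, hkl, -⟩ := tv.coprime_classification'
    (Int.isCoprime_iff_gcd_eq_one.mp (hv2c.mul_right (cop v 4 hv))) hv2 hp
  have hmn : m * n ≠ 0 := by
    intro h; apply hq; rw [hq1]; linear_combination 2 * h
  have fin : (∃ C B : ℤ, QuarticSol C B ∧ B ^ 2 ≤ (m * n) ^ 2 ∧ C ^ 2 ≤ (m * n) ^ 2) →
      ∃ C B : ℤ, QuarticSol C B ∧ 4 * B ^ 2 ≤ q ^ 2 ∧ 4 * C ^ 2 ≤ q ^ 2 := by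
    rintro ⟨C, B, h, hB, hC⟩
    have : q ^ 2 = 4 * (m * n) ^ 2 := by rw [hq1]; ring
    exact ⟨C, B, h, by omega, by omega⟩
  apply fin
  rcases hkl with ⟨h, -⟩ | ⟨-, h⟩
  · obtain ⟨k', rfl⟩ := Int.dvd_of_emod_eq_zero h
    exact descent_of_param (k := k') (l := l) (by linarith) hmn (by linarith)
  · obtain ⟨l', rfl⟩ := Int.dvd_of_emod_eq_zero h
    exact descent_of_param (k := l') (l := k) (by linarith) hmn (by linarith)

/-- The descent for `d = 1`: the new solution has both coordinates at most `|q| / 2`. -/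
lemma descent_step {p q u v : ℤ} (hp : p ≠ 0) (hpq : IsCoprime p q) (hq : q ≠ 0)
    (hu : p ^ 2 - q ^ 2 = u ^ 2) (hv : p ^ 2 - 4 * q ^ 2 = v ^ 2) :
    ∃ C B : ℤ, QuarticSol C B ∧ 4 * B ^ 2 ≤ q ^ 2 ∧ 4 * C ^ 2 ≤ q ^ 2 := by
  rcases lt_or_gt_of_ne hp with h | h
  · exact descent_step_pos (p := -p) (u := u) (v := v) (by omega) hpq.neg_left hq (by linarith [neg_sq p])
      (by linarith [neg_sq p])
  · exact descent_step_pos h hpq hq hu hv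

lemma eq_sq_of_mul_eq_sq {a b c : ℤ} (h : IsCoprime a b) (hab : a * b = c ^ 2) (hc : c ≠ 0) :
    ∃ u v : ℤ, u ≠ 0 ∧ v ≠ 0 ∧ ((a = u ^ 2 ∧ b = v ^ 2) ∨ (a = -u ^ 2 ∧ b = -v ^ 2)) := by
  obtain ⟨u, hu⟩ := Int.sq_of_isCoprime h hab
  obtain ⟨v, hv⟩ := Int.sq_of_isCoprime h.symm (by rw [mul_comm, hab])
  have hc2 : 0 < c ^ 2 := by positivity
  have hu0 : u ≠ 0 := by rintro rfl; rcases hu with rfl | rfl <;> simp at hab <;> simp_all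
  have hv0 : v ≠ 0 := by rintro rfl; rcases hv with rfl | rfl <;> simp at hab <;> simp_all
  have hu2 : 0 < u ^ 2 := by positivity
  have hv2 : 0 < v ^ 2 := by positivity
  refine ⟨u, v, hu0, hv0, ?_⟩
  rcases hu with hu | hu <;> rcases hv with hv | hv
  · exact .inl ⟨hu, hv⟩
  · subst hu hv; nlinarith [mul_pos hu2 hv2]
  · subst hu hv; nlinarith [mul_pos hu2 hv2]
  · exact .inr ⟨hu, hv⟩

/-- The common divisors of `p² - q²` and `p² - 4q²` divide `3p²` and `3q²`, hence `3`; so both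
factors are `d` times a nonzero square for one squarefree `d` dividing `3`. -/
lemma exists_twist {p q : ℤ} (h : QuarticSol p q) : ∃ d u v : ℤ,
    (d = 1 ∨ d = -1 ∨ d = 3 ∨ d = -3) ∧ u ≠ 0 ∧ v ≠ 0 ∧
      p ^ 2 - q ^ 2 = d * u ^ 2 ∧ p ^ 2 - 4 * q ^ 2 = d * v ^ 2 := by
  obtain ⟨hpq, -, -, z, hz, hs⟩ := h
  obtain ⟨s, t, hst⟩ := hpq.pow (m := 2) (n := 2)
  by_cases h3 : (3 : ℤ) ∣ p ^ 2 - q ^ 2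
  · obtain ⟨a, ha⟩ := h3
    have hb : p ^ 2 - 4 * q ^ 2 = 3 * (a - q ^ 2) := by linear_combination ha
    rw [ha, hb] at hs
    obtain ⟨w, rfl⟩ : (3 : ℤ) ∣ z :=
      (Int.pow_dvd_pow_iff two_ne_zero).mp ⟨a * (a - q ^ 2), by linear_combination -hs⟩
    have hcop : IsCoprime a (a - q ^ 2) :=
      ⟨4 * s + t, -s - t, by linear_combination hst - s * ha⟩
    obtain ⟨u, v, hu0, hv0, ⟨h1, h2⟩ | ⟨h1, h2⟩⟩ := eq_sq_of_mul_eq_sq hcop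
      (c := w) (by linarith) (by rintro rfl; simp at hz)
    · exact ⟨3, u, v, by simp, hu0, hv0, by rw [ha, h1], by rw [hb, h2]⟩
    · exact ⟨-3, u, v, by simp, hu0, hv0, by rw [ha, h1]; ring, by rw [hb, h2]; ring⟩
  · obtain ⟨x, y, hxy⟩ : IsCoprime (p ^ 2 - q ^ 2) 3 :=
      ((Int.prime_three.coprime_iff_not_dvd).mpr h3).symm
    -- `3 = (4s + t)(p² - q²) - (s + t)(p² - 4q²)` when `s p² + t q² = 1`.
    have hcop : IsCoprime (p ^ 2 - q ^ 2) (p ^ 2 - 4 * q ^ 2) :=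
      ⟨x + y * (4 * s + t), -y * (s + t), by linear_combination hxy + 3 * y * hst⟩
    obtain ⟨u, v, hu0, hv0, ⟨h1, h2⟩ | ⟨h1, h2⟩⟩ := eq_sq_of_mul_eq_sq hcop hs hz
    · exact ⟨1, u, v, by simp, hu0, hv0, by rw [h1]; ring, by rw [h2]; ring⟩
    · exact ⟨-1, u, v, by simp, hu0, hv0, by rw [h1]; ring, by rw [h2]; ring⟩

lemma even_of_sq_add_sq {a b c : ℤ} (h : a ^ 2 + b ^ 2 = 4 * c) : 2 ∣ a ∧ 2 ∣ b := by
  have sq4 : ∀ a : ℤ, (a % 2 = 0 ∧ a ^ 2 % 4 = 0) ∨ (a % 2 = 1 ∧ a ^ 2 % 4 = 1) := by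
    intro a
    have : a % 4 = 0 ∨ a % 4 = 1 ∨ a % 4 = 2 ∨ a % 4 = 3 := by omega
    rcases this with h | h | h | h <;> simp [pow_two, Int.mul_emod, h] <;> omega
  have := sq4 a
  have := sq4 b
  omega

lemma exists_smaller {p q : ℤ} (h : QuarticSol p q) :
    ∃ C B : ℤ, QuarticSol C B ∧ C ^ 2 + B ^ 2 < p ^ 2 + q ^ 2 := by
  obtain ⟨d, u, v, hd, hu0, hv0, hu, hv⟩ := exists_twist h
  obtain ⟨hpq, hp0, hq0, -⟩ := h
  have hp2 : 0 < p ^ 2 := by positivity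
  have hq2 : 0 < q ^ 2 := by positivity
  have hv2 : 0 < v ^ 2 := by positivity
  obtain ⟨s, t, hst⟩ := hpq.pow (m := 2) (n := 2)
  rcases hd with rfl | rfl | rfl | rfl
  · obtain ⟨C, B, hS, hB, hC⟩ := descent_step (u := u) (v := v) hp0 hpq hq0
      (by linarith) (by linarith)
    exact ⟨C, B, hS, by linarith⟩
  -- `t ↦ 2/t`: replace `(p, q)` by `(q, p/2)`, for which `d = 1`.
  · obtain ⟨⟨p, rfl⟩, ⟨v, rfl⟩⟩ :=
      even_of_sq_add_sq (a := p) (b := v) (c := q ^ 2) (by linarith)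
    obtain ⟨C, B, hS, hB, hC⟩ := descent_step (p := q) (q := p) (u := v) (v := u) hq0
      hpq.symm.of_mul_right_right (by rintro rfl; simp at hp0) (by linarith) (by linarith)
    exact ⟨C, B, hS, by linarith⟩
  -- `t ↦ 2u/v`: replace `(p, q)` by `(u, v/2)`, for which `d = 1`.
  · obtain ⟨⟨p, rfl⟩, ⟨v, rfl⟩⟩ :=
      even_of_sq_add_sq (a := p) (b := v) (c := u ^ 2) (by linarith)
    have hcop : IsCoprime u v := by
      rw [← IsCoprime.pow_iff two_pos two_pos]
      refine ⟨4 * s + t, -4 * (s + t), ?_⟩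
      have e1 : q ^ 2 = u ^ 2 - 4 * v ^ 2 := by linarith
      have e2 : (2 * p) ^ 2 = 4 * (u ^ 2 - v ^ 2) := by linarith
      rw [e1, e2] at hst
      linear_combination hst
    obtain ⟨C, B, hS, hB, hC⟩ := descent_step (p := u) (q := v) (u := p) (v := q) hu0
      hcop (by rintro rfl; simp at hv0) (by linarith) (by linarith)
    exact ⟨C, B, hS, by linarith⟩
  -- `t ↦ v/u`: replace `(p, q)` by `(v, u)`, for which `d = 1`.
  · have hcop : IsCoprime v u := by
      rw [← IsCoprime.pow_iff two_pos two_pos]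
      refine ⟨s + t, -4 * s - t, ?_⟩
      have e1 : q ^ 2 = v ^ 2 - u ^ 2 := by linarith
      have e2 : p ^ 2 = v ^ 2 - 4 * u ^ 2 := by linarith
      rw [e1, e2] at hst
      linear_combination hst
    obtain ⟨C, B, hS, hB, hC⟩ := descent_step (p := v) (q := u) (u := q) (v := p) hv0
      hcop hu0 (by linarith) (by linarith)
    exact ⟨C, B, hS, by linarith⟩

lemma not_quarticSol (p q : ℤ) : ¬ QuarticSol p q := by
  suffices H : ∀ N : ℕ, ∀ p q : ℤ, p ^ 2 + q ^ 2 < N → ¬ QuarticSol p q from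
    H ((p ^ 2 + q ^ 2).toNat + 1) p q (by push_cast; omega)
  intro N
  induction N with
  | zero => intro p q h; push_cast at h; nlinarith [sq_nonneg p, sq_nonneg q]
  | succ N ih =>
    intro p q h hS
    obtain ⟨C, B, hS', hlt⟩ := exists_smaller hS
    exact ih C B (by push_cast at h; omega) hS'

/-- A rational point of `r² = (t² - 1)(t² - 4)` has `t = 0` or `r = 0`. -/
lemma rat_quartic {t r : ℚ} (h : (t ^ 2 - 1) * (t ^ 2 - 4) = r ^ 2) : t = 0 ∨ r = 0 := by
  by_contra! hne
  obtain ⟨ht, hr⟩ := hne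
  have hd : (t.den : ℚ) ≠ 0 := by exact_mod_cast t.den_nz
  have htd : (t.num : ℚ) = t * t.den := (Rat.mul_den_eq_num t).symm
  have e : (((t.num ^ 2 - t.den ^ 2) * (t.num ^ 2 - 4 * t.den ^ 2) : ℤ) : ℚ)
      = (r * t.den ^ 2) ^ 2 := by
    push_cast
    rw [htd]
    linear_combination (t.den : ℚ) ^ 4 * h
  obtain ⟨z, hz⟩ := Rat.isSquare_intCast_iff.mp (e ▸ IsSquare.sq (r * (t.den : ℚ) ^ 2))
  refine not_quarticSol t.num t.den ⟨?_, by simpa using ht, by exact_mod_cast t.den_nz, z, ?_,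
    by rw [hz]; ring⟩
  · exact Int.isCoprime_iff_gcd_eq_one.mpr t.reduced
  · rintro rfl
    rw [hz] at e
    have : r * (t.den : ℚ) ^ 2 ≠ 0 := mul_ne_zero hr (pow_ne_zero 2 hd)
    exact pow_ne_zero 2 this (by rw [← e]; simp)

/-- the rational points on the elliptic curve
`y² = x³ + 10x² + 9x` are exactly `(0,0)`, `(−1,0)`, `(−9,0)`, `(−3,±6)`,
`(3,±12)`. -/
theorem rational_points_x3_10x2_9x (x y : ℚ)
    (h : y ^ 2 = x ^ 3 + 10 * x ^ 2 + 9 * x) :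
    (x, y) = (0, 0) ∨ (x, y) = (-1, 0) ∨ (x, y) = (-9, 0) ∨
    (x, y) = (-3, 6) ∨ (x, y) = (-3, -6) ∨
    (x, y) = (3, 12) ∨ (x, y) = (3, -12) := by
  rcases eq_or_ne x 0 with rfl | hx
  · simp_all
  have hxs : y ^ 2 = x * (x ^ 2 + 10 * x + 9) := by linear_combination h
  have key : ((y / (2 * x)) ^ 2 - 1) * ((y / (2 * x)) ^ 2 - 4) =
      ((x ^ 2 - 9) / (4 * x)) ^ 2 := by
    rw [div_pow, hxs]
    field_simp
    ring
  simp only [Prod.mk.injEq]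
  rcases rat_quartic key with h0 | h0
  · have hy : y = 0 := by simpa [hx] using h0
    subst hy
    have : (x + 1) * (x + 9) = 0 := by
      apply mul_left_cancel₀ hx
      linear_combination -h
    rcases mul_eq_zero.mp this with h1 | h1
    · right; left; exact ⟨by linarith, rfl⟩
    · right; right; left; exact ⟨by linarith, rfl⟩
  · have : (x + 3) * (x - 3) = 0 := by
      have : x ^ 2 - 9 = 0 := by simpa [hx] using h0
      linear_combination this
    rcases mul_eq_zero.mp this with h1 | h1
    · obtain rfl : x = -3 := by linarith
      have : (y - 6) * (y + 6) = 0 := by linear_combination h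
      rcases mul_eq_zero.mp this with h2 | h2
      · right; right; right; left; exact ⟨rfl, by linarith⟩
      · right; right; right; right; left; exact ⟨rfl, by linarith⟩
    · obtain rfl : x = 3 := by linarith
      have : (y - 12) * (y + 12) = 0 := by linear_combination h
      rcases mul_eq_zero.mp this with h2 | h2
      · right; right; right; right; right; left; exact ⟨rfl, by linarith⟩
      · right; right; right; right; right; right; exact ⟨rfl, by linarith⟩
end
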